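/- arXiv:1104.3090 — 2 statements merged into one kernel-verified Lean document; each statement's English description precedes it below -/
import Mathlib

section
/- Let G be a connected simple graph on n ≥ 2 vertices such that every block of G either has maximum degree at most 3 or is claw-free. Then G has a spanning closed walk of length at most (4/3) · OLP(G). In particular, the integrality gap of the Held-Karp relaxation on this class of graphs is at most 4/3. -/
/-!
At a cut vertex the Held-Karp value is additive, and closed walks on the two sides concatenate, so
it suffices to treat a nonseparable vertex set `A`. There every vertex has fractional degree at
least two, hence the Held-Karp value is at least `|A|`, and a closed walk of length at most
`4 |A| / 3` is enough.

The walk comes from the removable edges of Mömke and Svensson. Let `M` be a 2-edge-connected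
multigraph with `n` vertices, `m` edges and maximum degree at most three. It contains a set `R` of
at least `2 (m - n) + 1` edges (if it has a cubic vertex) such that deleting edges of `R`, at most
one at each cubic vertex, never disconnects it. Every odd cut has at least three edges, so by the
theorem of Edmonds and Johnson there is a join `J` of the odd vertices that meets each cubic vertex
once and whose weight, edges of `R` having weight `-1` and all others `1`, is at most a third of the
total `m - 2 |R|`. Deleting `J ∩ R` and doubling `J \ R` produces a connected Eulerian multigraph
with at most `m + (m - 2 |R|) / 3 ≤ 4 n / 3` edges.

A subcubic block is such a multigraph itself. In a claw-free block, one is grown by adding ears: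
old neighbours of an end of the ear are pairwise adjacent by claw-freeness, unless one of them is
adjacent to the ear, which can then be inserted into an edge. So if the end gets degree four, its
degree can be lowered by deleting or splitting off edges.
-/

open SimpleGraph

/-- The value `Σ_{e ∈ E} x e` of an assignment `x` on the edges of `G`. -/
noncomputable def hkValue {V : Type*} (G : SimpleGraph V) (x : Sym2 V → ℝ) : ℝ :=
  ∑ᶠ e ∈ G.edgeSet, x e

/-- The total weight `Σ_{e ∈ δ(S)} x e` of the edges of `G` crossing the cut `(S, Sᶜ)`. -/
noncomputable def hkCut {V : Type*} (G : SimpleGraph V) (x : Sym2 V → ℝ)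
    (S : Set V) : ℝ :=
  ∑ᶠ e ∈ {e ∈ G.edgeSet | ∃ a b, e = s(a, b) ∧ a ∈ S ∧ b ∉ S}, x e

/-- Feasibility for the Held-Karp relaxation of graph-TSP on `G`. -/
def HKFeasible {V : Type*} (G : SimpleGraph V) (x : Sym2 V → ℝ) : Prop :=
  (∀ e, 0 ≤ x e) ∧
  ∀ S : Set V, S.Nonempty → S ≠ Set.univ → 2 ≤ hkCut G x S

/-- The optimum value `OLP(G)` of the Held-Karp relaxation of graph-TSP on `G`. -/
noncomputable def OLP {V : Type*} [Fintype V] (G : SimpleGraph V) : ℝ :=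
  sInf {y | ∃ x, HKFeasible G x ∧ y = hkValue G x}

/-- A block of a graph `G`: a maximal vertex set inducing a connected subgraph
without a cut vertex. -/
def IsBlock {V : Type*} (G : SimpleGraph V) (B : Set V) : Prop :=
  (G.induce B).Connected ∧
  (∀ v ∈ B, (G.induce (B \ {v})).Preconnected) ∧
  ∀ B' : Set V, B ⊆ B' → (G.induce B').Connected →
    (∀ v ∈ B', (G.induce (B' \ {v})).Preconnected) → B' = B

namespace GraphTSP

open scoped Classical symmDiff

noncomputable section

/-! ### Multigraphs and joins -/

section EdgeMultisets

variable {V : Type*} {M N : Multiset (Sym2 V)} {Z : Set V} {a b v : V} {k : ℕ}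

/-- The edge `e` lies in the cut `δ(Z)`. -/
def Crosses (Z : Set V) (e : Sym2 V) : Prop :=
  (∃ a ∈ e, a ∈ Z) ∧ ∃ b ∈ e, b ∉ Z

/-- The number of edges of the multigraph `M` in the cut `δ(Z)`. A multigraph is encoded as the
multiset of its edges. -/
def cutSize (M : Multiset (Sym2 V)) (Z : Set V) : ℕ :=
  M.countP (Crosses Z)

/-- The degree of `v` in the multigraph `M`; a loop at `v` counts once. -/
def degree (M : Multiset (Sym2 V)) (v : V) : ℕ :=
  M.countP (v ∈ ·)

/-- The incidence vector of an edge over `𝔽₂`; it vanishes on loops. -/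
def endVec : Sym2 V → V → ZMod 2 :=
  Sym2.lift ⟨fun a b => Pi.single a 1 + Pi.single b 1, fun _ _ => add_comm _ _⟩

/-- The `𝔽₂`-boundary of the multigraph `M`: its value at a vertex is the parity of the degree,
loops being ignored. -/
def boundary (M : Multiset (Sym2 V)) : V → ZMod 2 :=
  (M.map endVec).sum

/-- Any two vertices of `W` are joined by `k` edge-disjoint paths of the multigraph `M`, expressed
through cuts. -/
def EdgeConn (k : ℕ) (W : Set V) (M : Multiset (Sym2 V)) : Prop :=
  ∀ Z : Set V, (W ∩ Z).Nonempty → (W \ Z).Nonempty → k ≤ cutSize M Z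

@[simp] theorem crosses_mk :
    Crosses Z s(a, b) ↔ a ∈ Z ∧ b ∉ Z ∨ a ∉ Z ∧ b ∈ Z := by
  simp only [Crosses, Sym2.mem_iff, exists_eq_or_imp, exists_eq_left]
  tauto

theorem crosses_compl (e : Sym2 V) : Crosses Zᶜ e ↔ Crosses Z e := by
  simp only [Crosses, Set.mem_compl_iff, not_not, and_comm]

theorem crosses_singleton (e : Sym2 V) : Crosses {v} e ↔ v ∈ e ∧ ¬ e.IsDiag := by
  induction e with | _ a b =>
  simp only [crosses_mk, Set.mem_singleton_iff, Sym2.mem_iff, Sym2.mk_isDiag_iff]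
  grind

theorem endVec_mk : endVec s(a, b) = Pi.single a 1 + Pi.single b 1 := rfl

theorem sum_endVec (X : Finset V) (e : Sym2 V) :
    ∑ v ∈ X, endVec e v = if Crosses X e then 1 else 0 := by
  induction e with | _ a b =>
  have : (1 + 1 : ZMod 2) = 0 := rfl
  simp only [endVec_mk, Pi.add_apply, Finset.sum_add_distrib, Finset.sum_pi_single', crosses_mk,
    Finset.mem_coe]
  grind

theorem endVec_apply (e : Sym2 V) : endVec e v = if v ∈ e ∧ ¬ e.IsDiag then 1 else 0 := by
  simpa [crosses_singleton] using sum_endVec {v} e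

@[simp] theorem cutSize_zero : cutSize 0 Z = 0 := rfl

@[simp] theorem cutSize_cons (e : Sym2 V) :
    cutSize (e ::ₘ M) Z = cutSize M Z + if Crosses Z e then 1 else 0 := by
  simp [cutSize, Multiset.countP_cons]

@[simp] theorem cutSize_add : cutSize (M + N) Z = cutSize M Z + cutSize N Z :=
  Multiset.countP_add _ _ _

theorem cutSize_mono (h : M ≤ N) : cutSize M Z ≤ cutSize N Z :=
  Multiset.countP_le_of_le _ h

theorem cutSize_compl : cutSize M Zᶜ = cutSize M Z := by
  simp only [cutSize, crosses_compl]

theorem cutSize_pos : 0 < cutSize M Z ↔ ∃ e ∈ M, Crosses Z e :=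
  Multiset.countP_pos

@[simp] theorem degree_zero : degree 0 v = 0 := rfl

@[simp] theorem degree_cons (e : Sym2 V) :
    degree (e ::ₘ M) v = degree M v + if v ∈ e then 1 else 0 := by
  simp [degree, Multiset.countP_cons]

@[simp] theorem degree_add : degree (M + N) v = degree M v + degree N v :=
  Multiset.countP_add _ _ _

theorem degree_mono (h : M ≤ N) : degree M v ≤ degree N v :=
  Multiset.countP_le_of_le _ h

@[simp] theorem boundary_zero : boundary (0 : Multiset (Sym2 V)) = 0 := by
  simp [boundary]

@[simp] theorem boundary_cons (e : Sym2 V) : boundary (e ::ₘ M) = endVec e + boundary M := by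
  simp [boundary]

@[simp] theorem boundary_add : boundary (M + N) = boundary M + boundary N := by
  simp [boundary]

theorem sum_boundary (M : Multiset (Sym2 V)) (X : Finset V) :
    ∑ v ∈ X, boundary M v = (cutSize M X : ZMod 2) := by
  induction M using Multiset.induction with
  | empty => simp
  | cons e M ih => simp [Finset.sum_add_distrib, ih, sum_endVec, add_comm]

theorem cutSize_singleton (hM : ∀ e ∈ M, ¬ e.IsDiag) (v : V) : cutSize M {v} = degree M v :=
  Multiset.countP_congr rfl fun e he => by simp [crosses_singleton, hM e he]

theorem boundary_apply (hM : ∀ e ∈ M, ¬ e.IsDiag) (v : V) :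
    boundary M v = (degree M v : ZMod 2) := by
  simpa [cutSize_singleton hM] using sum_boundary M {v}

theorem add_self_eq_zero (f : V → ZMod 2) : f + f = 0 :=
  funext fun v => CharTwo.add_self_eq_zero (f v)

end EdgeMultisets

section Indexed

variable {V E : Type*} {ends : E → Sym2 V} {F F' : Finset E} {Z : Set V} {v : V}

/-- The multigraph formed by the edges in `F` of an indexed multigraph, which is given by the map
`ends` from edges to pairs of end vertices. -/
def edgesOf (ends : E → Sym2 V) (F : Finset E) : Multiset (Sym2 V) :=
  F.val.map ends

theorem cutSize_edgesOf :
    cutSize (edgesOf ends F) Z = (F.filter fun e => Crosses Z (ends e)).card := by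
  simp [cutSize, edgesOf, Multiset.countP_map, Finset.card_def, Finset.filter_val]

theorem degree_edgesOf : degree (edgesOf ends F) v = (F.filter fun e => v ∈ ends e).card := by
  simp [degree, edgesOf, Multiset.countP_map, Finset.card_def, Finset.filter_val]

theorem boundary_edgesOf : boundary (edgesOf ends F) = ∑ e ∈ F, endVec (ends e) := by
  rw [boundary, edgesOf, Multiset.map_map]
  rfl

theorem boundary_symmDiff :
    boundary (edgesOf ends (F ∆ F')) = boundary (edgesOf ends F) + boundary (edgesOf ends F') := by
  have hF := Finset.sum_sdiff (f := fun e => endVec (ends e))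
    (Finset.inter_subset_left : F ∩ F' ⊆ F)
  have hF' := Finset.sum_sdiff (f := fun e => endVec (ends e))
    (Finset.inter_subset_right : F ∩ F' ⊆ F')
  rw [Finset.sdiff_inter_self_left] at hF
  rw [Finset.sdiff_inter_self_right] at hF'
  have hdisj : Disjoint (F \ F') (F' \ F) := disjoint_sdiff_sdiff
  rw [boundary_edgesOf, boundary_edgesOf, boundary_edgesOf, symmDiff_def, Finset.sup_eq_union,
    Finset.sum_union hdisj, ← hF, ← hF', add_add_add_comm, add_self_eq_zero, add_zero]

theorem boundary_sdiff (h : F' ⊆ F) :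
    boundary (edgesOf ends (F \ F')) = boundary (edgesOf ends F) + boundary (edgesOf ends F') := by
  rw [← boundary_symmDiff, symmDiff_of_ge h]

theorem boundary_erase {e : E} (he : e ∈ F) :
    boundary (edgesOf ends (F.erase e)) = boundary (edgesOf ends F) + endVec (ends e) := by
  rw [Finset.erase_eq, boundary_sdiff (Finset.singleton_subset_iff.2 he)]
  simp [boundary_edgesOf]

theorem exists_mem_of_boundary_ne_zero (h : boundary (edgesOf ends F) v ≠ 0) :
    ∃ e ∈ F, v ∈ ends e ∧ ¬ (ends e).IsDiag := by
  rw [boundary_edgesOf, Finset.sum_apply] at h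
  obtain ⟨e, he, hv⟩ := Finset.exists_ne_zero_of_sum_ne_zero h
  rw [endVec_apply] at hv
  exact ⟨e, he, by simpa using hv⟩

end Indexed

section Joins

variable {V E : Type*} {ends : E → Sym2 V} {F J D : Finset E} {T : V → ZMod 2} {w : E → ℝ}
  {a b : V}

theorem boundary_walk_edges {G : SimpleGraph V} (p : G.Walk a b) :
    boundary (p.edges : Multiset (Sym2 V)) = Pi.single a 1 + Pi.single b 1 := by
  induction p with
  | nil => exact (add_self_eq_zero _).symm
  | @cons a c b h p ih =>
    rw [Walk.edges_cons, ← Multiset.cons_coe, boundary_cons, ih, endVec_mk, add_assoc,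
      ← add_assoc (Pi.single c 1 : V → ZMod 2), add_self_eq_zero, zero_add]

/-- A component of `M` has zero total boundary, so it cannot contain just one of `a` and `b`. -/
theorem reachable_of_boundary_eq [Finite V] {M : Multiset (Sym2 V)}
    (hM : boundary M = Pi.single a 1 + Pi.single b 1) :
    (fromEdgeSet {e | e ∈ M}).Reachable a b := by
  cases nonempty_fintype V
  by_contra hab
  let Y : Finset V := {x | (fromEdgeSet {e | e ∈ M}).Reachable a x}
  have hcut : cutSize M Y = 0 := by
    rw [cutSize, Multiset.countP_eq_zero]
    intro e he hcross
    induction e with | _ x y =>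
    have hadj : x ≠ y → (fromEdgeSet {e | e ∈ M}).Adj x y := fun h =>
      (fromEdgeSet_adj _).2 ⟨he, h⟩
    simp only [crosses_mk, Y, Finset.coe_filter, Finset.mem_univ, true_and,
      Set.mem_ofPred_eq] at hcross
    obtain ⟨hx, hy⟩ | ⟨hx, hy⟩ := hcross
    · exact hy (hx.trans (hadj (by rintro rfl; exact hy hx)).reachable)
    · exact hx (hy.trans (hadj (by rintro rfl; exact hx hy)).symm.reachable)
  have hsum := sum_boundary M Y
  rw [hM, hcut] at hsum
  simp [Finset.sum_add_distrib, Y, hab] at hsum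

theorem exists_path_join [Finite V]
    (hD : boundary (edgesOf ends D) = Pi.single a 1 + Pi.single b 1) (hab : a ≠ b) :
    ∃ P ⊆ D, boundary (edgesOf ends P) = Pi.single a 1 + Pi.single b 1 ∧
      ∀ e ∈ P, ∀ f ∈ P, a ∈ ends e → a ∈ ends f → e = f := by
  obtain ⟨p, hp⟩ := (reachable_of_boundary_eq hD).exists_isPath
  obtain ⟨P, hPD, hinj, hP⟩ :=
    Finset.exists_subset_injOn_image_eq_of_surjOn (D : Set E) p.edges.toFinset
      fun s hs => Multiset.mem_map.1
        (edgeSet_fromEdgeSet _ ▸ p.edges_subset_edgeSet (List.mem_toFinset.1 hs)).1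
  refine ⟨P, hPD, ?_, fun e he f hf hae haf => hinj he hf ?_⟩
  · rw [← boundary_walk_edges p, boundary_edgesOf, ← Finset.sum_image (f := endVec) hinj, hP,
      boundary, List.sum_toFinset _ hp.isTrail.edges_nodup]
    rfl
  · have hfirst : ∀ s ∈ p.edges, ∀ t ∈ p.edges, a ∈ s → a ∈ t → s = t := by
      cases p with
      | nil => exact absurd rfl hab
      | cons h q =>
        rw [Walk.cons_isPath_iff] at hp
        have hq : ∀ s ∈ q.edges, a ∉ s := fun s hs ha => hp.2 (q.mem_support_of_mem_edges hs ha)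
        simp only [Walk.edges_cons, List.mem_cons]
        grind
    have hmem : ∀ e ∈ P, ends e ∈ p.edges := fun e he =>
      List.mem_toFinset.1 (hP ▸ Finset.mem_image_of_mem ends he)
    exact hfirst _ (hmem e he) _ (hmem f hf) hae haf

/-- `J` is a `T`-join: its edges have odd degree exactly at the vertices where `T` is `1`. -/
def IsJoin (ends : E → Sym2 V) (T : V → ZMod 2) (J : Finset E) : Prop :=
  boundary (edgesOf ends J) = T

/-- The edges with exactly one end at `a`. -/
def star [Fintype E] (ends : E → Sym2 V) (a : V) : Finset E :=
  {e | a ∈ ends e ∧ ¬ (ends e).IsDiag}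

theorem mem_star [Fintype E] {e : E} : e ∈ star ends a ↔ a ∈ ends e ∧ ¬ (ends e).IsDiag := by
  simp [star]

theorem card_star_eq_cutSize [Fintype E] :
    (star ends a).card = cutSize (edgesOf ends Finset.univ) {a} := by
  simp only [cutSize_edgesOf, crosses_singleton, star]

theorem sum_symmDiff_add_sum_symmDiff {C : Finset E} (hC : C ⊆ J ∆ F) :
    ∑ e ∈ J ∆ C, w e + ∑ e ∈ F ∆ C, w e = ∑ e ∈ J, w e + ∑ e ∈ F, w e := by
  have hunion : J ∆ C ∪ F ∆ C = J ∪ F := by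
    ext e
    have := @hC e
    simp only [Finset.mem_union, Finset.mem_symmDiff] at *
    tauto
  have hinter : J ∆ C ∩ F ∆ C = J ∩ F := by
    ext e
    have := @hC e
    simp only [Finset.mem_inter, Finset.mem_symmDiff] at *
    tauto
  rw [← Finset.sum_union_inter, hunion, hinter, Finset.sum_union_inter]

theorem sum_erase_lt (hw : ∀ e, ¬ (ends e).IsDiag → 0 < w e) {e : E} (he : e ∈ F)
    (hloop : ¬ (ends e).IsDiag) : ∑ f ∈ F.erase e, w f < ∑ f ∈ F, w f := by
  rw [← Finset.add_sum_erase F w he]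
  exact lt_add_of_pos_left _ (hw e hloop)

theorem exists_even_of_two_at [Finite V] [Fintype E] {e f : E}
    (hD : IsJoin ends (Pi.single a 1 + Pi.single b 1) D) (hab : a ≠ b)
    (he : e ∈ D) (hf : f ∈ D) (hef : e ≠ f) (hae : e ∈ star ends a) (haf : f ∈ star ends a) :
    ∃ C ⊆ D, IsJoin ends 0 C ∧ ∃ g ∈ C, g ∈ star ends a := by
  obtain ⟨P, hPD, hP, huniq⟩ := exists_path_join hD hab
  refine ⟨D \ P, Finset.sdiff_subset, ?_, ?_⟩
  · rw [IsJoin, boundary_sdiff hPD, hP, hD, add_self_eq_zero]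
  · by_cases heP : e ∈ P
    · refine ⟨f, Finset.mem_sdiff.2 ⟨hf, fun hfP => hef ?_⟩, haf⟩
      exact huniq e heP f hfP (mem_star.1 hae).1 (mem_star.1 haf).1
    · exact ⟨e, Finset.mem_sdiff.2 ⟨he, heP⟩, hae⟩

theorem IsJoin.erase (hF : IsJoin ends T F) {e : E} {x y : V} (he : e ∈ F)
    (hxy : ends e = s(x, y)) :
    IsJoin ends (T + Pi.single x 1 + Pi.single y 1) (F.erase e) := by
  rw [IsJoin, boundary_erase he, hF, hxy, endVec_mk, add_assoc]

theorem IsJoin.symmDiff {T' : V → ZMod 2} (hF : IsJoin ends T F) (hJ : IsJoin ends T' J) :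
    IsJoin ends (T + T') (F ∆ J) := by
  rw [IsJoin, boundary_symmDiff, hF, hJ]

/-- `F` is a cheapest join among all those whose boundary differs from `T` in two vertices, and
`a`, `b` are these vertices. -/
def IsMinNearJoin (ends : E → Sym2 V) (w : E → ℝ) (T : V → ZMod 2) (a b : V) (F : Finset E) :
    Prop :=
  IsJoin ends (T + Pi.single a 1 + Pi.single b 1) F ∧ ∀ x y F',
    IsJoin ends (T + Pi.single x 1 + Pi.single y 1) F' → ∑ e ∈ F, w e ≤ ∑ e ∈ F', w e

theorem exists_isMinNearJoin [Finite V] [Finite E] (w : E → ℝ) (hJ : IsJoin ends T J) (v : V) :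
    ∃ a b F, IsMinNearJoin ends w T a b F := by
  let NearJoin :=
    {t : V × V × Finset E // IsJoin ends (T + Pi.single t.1 1 + Pi.single t.2.1 1) t.2.2}
  have : Nonempty NearJoin := ⟨(v, v, J), by rwa [add_assoc, add_self_eq_zero, add_zero]⟩
  obtain ⟨⟨⟨a, b, F⟩, hF⟩, hmin⟩ := Finite.exists_min fun t : NearJoin => ∑ e ∈ t.1.2.2, w e
  exact ⟨a, b, F, hF, fun x y F' hF' => hmin ⟨(x, y, F'), hF'⟩⟩

theorem IsMinNearJoin.notMem_star [Fintype E] (hw : ∀ e, ¬ (ends e).IsDiag → 0 < w e)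
    (hF : IsMinNearJoin ends w T a b F) {e : E} (he : e ∈ F) : e ∉ star ends a := by
  intro hea
  obtain ⟨ha, hloop⟩ := mem_star.1 hea
  obtain ⟨z, hz⟩ := ha
  refine (sum_erase_lt hw he hloop).not_ge (hF.2 b z _ ?_)
  have := hF.1.erase he hz
  rwa [add_right_comm _ (Pi.single b 1), add_assoc T, add_self_eq_zero, add_zero] at this

theorem IsMinNearJoin.sum_lt (hw : ∀ e, ¬ (ends e).IsDiag → 0 < w e) (hT : T ≠ 0)
    (hF : IsMinNearJoin ends w T a b F) (hJ : IsJoin ends T J) :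
    ∑ e ∈ F, w e < ∑ e ∈ J, w e := by
  obtain ⟨v, hv⟩ := Function.ne_iff.1 hT
  obtain ⟨e, he, ⟨y, hy⟩, hloop⟩ := exists_mem_of_boundary_ne_zero (F := J) (v := v) (hJ ▸ hv)
  exact (hF.2 v y _ (hJ.erase he hy)).trans_lt (sum_erase_lt hw he hloop)

/-- Exchanging an even subset of `J ∆ F` between a cheapest `T`-join `J` and a cheapest near-join
`F` with ends `a`, `b` keeps both cheapest, while `F` can never use an edge at `a`. -/
theorem IsMinNearJoin.card_star_inter_le_one [Finite V] [Fintype E]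
    (hw : ∀ e, ¬ (ends e).IsDiag → 0 < w e) (hF : IsMinNearJoin ends w T a b F) (hab : a ≠ b)
    (hJ : IsJoin ends T J) (hmin : ∀ J', IsJoin ends T J' → ∑ e ∈ J, w e ≤ ∑ e ∈ J', w e) :
    (star ends a ∩ J).card ≤ 1 := by
  by_contra! hcard
  obtain ⟨e, he, f, hf, hef⟩ := Finset.one_lt_card.1 hcard
  rw [Finset.mem_inter] at he hf
  have hmem : ∀ g ∈ J, g ∈ star ends a → g ∈ J ∆ F := fun g hg hga =>
    Finset.mem_symmDiff.2 (Or.inl ⟨hg, fun h => hF.notMem_star hw h hga⟩)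
  have hdiff : IsJoin ends (Pi.single a 1 + Pi.single b 1) (J ∆ F) := by
    simpa only [add_assoc, ← add_assoc T T, add_self_eq_zero, zero_add] using hJ.symmDiff hF.1
  obtain ⟨C, hCD, hC, g, hgC, hga⟩ := exists_even_of_two_at hdiff hab (hmem e he.2 he.1)
    (hmem f hf.2 hf.1) hef he.1 hf.1
  have hJC := hmin _ (add_zero T ▸ hJ.symmDiff hC)
  have hFC : IsMinNearJoin ends w T a b (F ∆ C) := by
    refine ⟨add_zero (T + _ + _) ▸ hF.1.symmDiff hC, fun x y F' hF' => ?_⟩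
    linarith [sum_symmDiff_add_sum_symmDiff (w := w) hCD, hF.2 x y F' hF']
  exact hFC.notMem_star hw
    (Finset.mem_symmDiff.2 (Or.inr ⟨hgC, fun h => hF.notMem_star hw h hga⟩)) hga

theorem exists_star_inter_card_eq_one [Finite V] [Fintype E]
    (hw : ∀ e, ¬ (ends e).IsDiag → 0 < w e) (hT : T ≠ 0) (hJ₀ : IsJoin ends T F) :
    ∃ a, T a = 1 ∧ ∀ J, IsJoin ends T J →
      (∀ J', IsJoin ends T J' → ∑ e ∈ J, w e ≤ ∑ e ∈ J', w e) → (star ends a ∩ J).card = 1 := by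
  obtain ⟨v, -⟩ := Function.ne_iff.1 hT
  obtain ⟨a, b, F, hF⟩ := exists_isMinNearJoin w hJ₀ v
  have hab : a ≠ b := by
    rintro rfl
    have hFT : IsJoin ends T F := by simpa [add_assoc, add_self_eq_zero] using hF.1
    exact (hF.sum_lt hw hT hFT).false
  have hTa : T a = 1 := by
    have hFa : boundary (edgesOf ends F) a = 0 := by
      by_contra h
      obtain ⟨e, he, hae⟩ := exists_mem_of_boundary_ne_zero h
      exact hF.notMem_star hw he (mem_star.2 hae)
    rw [hF.1] at hFa
    simpa [hab, CharTwo.add_eq_zero] using hFa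
  refine ⟨a, hTa, fun J hJ hmin => (hF.card_star_inter_le_one hw hab hJ hmin).antisymm ?_⟩
  have hJa : boundary (edgesOf ends J) a ≠ 0 := by
    rw [hJ, hTa]
    exact one_ne_zero
  obtain ⟨e, he, hae⟩ := exists_mem_of_boundary_ne_zero hJa
  exact Finset.card_pos.2 ⟨e, Finset.mem_inter.2 ⟨mem_star.2 hae, he⟩⟩

end Joins

section ExtremalWeights

variable {E : Type*} {𝒥 : Finset (Finset E)} {S J : Finset E} {w : E → ℝ}

/-- By homogeneity it suffices to maximise the minimum over the family on the simplex. -/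
theorem exists_extremal_weight [Fintype E] [Nonempty E] (h𝒥 : 𝒥.Nonempty) :
    ∃ w : E → ℝ, 0 ≤ w ∧ ∑ e, w e = 1 ∧ ∃ J ∈ 𝒥, (∀ J' ∈ 𝒥, ∑ e ∈ J, w e ≤ ∑ e ∈ J', w e) ∧
      ∀ w' : E → ℝ, 0 ≤ w' → ∃ J' ∈ 𝒥, ∑ e ∈ J', w' e ≤ (∑ e ∈ J, w e) * ∑ e, w' e := by
  let τ : (E → ℝ) → ℝ := fun w => 𝒥.inf' h𝒥 fun J => ∑ e ∈ J, w e
  have hτ : Continuous τ := Continuous.finset_inf'_apply h𝒥 fun J _ => by fun_prop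
  obtain ⟨w, hw, hmax⟩ := (isCompact_stdSimplex ℝ E).exists_isMaxOn
    ⟨_, single_mem_stdSimplex ℝ (Classical.arbitrary E)⟩ hτ.continuousOn
  obtain ⟨J, hJ, hτJ⟩ := 𝒥.exists_mem_eq_inf' h𝒥 fun J => ∑ e ∈ J, w e
  refine ⟨w, hw.1, hw.2, J, hJ, fun J' hJ' => hτJ ▸ 𝒥.inf'_le _ hJ', fun w' hw' => ?_⟩
  obtain htotal | htotal := (Finset.sum_nonneg fun e _ => hw' e).eq_or_lt
  · have hzero : ∀ e, w' e = 0 := fun e =>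
      (Finset.sum_eq_zero_iff_of_nonneg fun e _ => hw' e).1 htotal.symm e (Finset.mem_univ e)
    exact ⟨J, hJ, by simp [hzero]⟩
  · have hmem : (∑ e, w' e)⁻¹ • w' ∈ stdSimplex ℝ E :=
      ⟨fun e => mul_nonneg (inv_nonneg.2 htotal.le) (hw' e), by
        simp [← Finset.mul_sum, htotal.ne']⟩
    obtain ⟨J', hJ', hτJ'⟩ := 𝒥.exists_mem_eq_inf' h𝒥 fun J => ∑ e ∈ J, ((∑ e, w' e)⁻¹ • w') e
    refine ⟨J', hJ', ?_⟩
    have hle : ∑ e ∈ J', ((∑ e, w' e)⁻¹ • w') e ≤ ∑ e ∈ J, w e := hτJ' ▸ hτJ ▸ hmax hmem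
    simp only [Pi.smul_apply, smul_eq_mul, ← Finset.mul_sum] at hle
    rwa [inv_mul_le_iff₀ htotal, mul_comm] at hle

theorem exists_perturbation [Finite E] (hw : 0 ≤ w) (hS : ∀ e ∈ S, 0 < w e)
    (hmin : ∀ J' ∈ 𝒥, ∑ e ∈ J, w e ≤ ∑ e ∈ J', w e)
    (hcard : ∀ J' ∈ 𝒥, ∑ e ∈ J', w e = ∑ e ∈ J, w e → (S ∩ J').card = 1) :
    ∃ t > 0, (∀ e, 0 ≤ w e - if e ∈ S then t else 0) ∧
      ∀ J' ∈ 𝒥, ∑ e ∈ J, w e - t ≤ ∑ e ∈ J', (w e - if e ∈ S then t else 0) := by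
  have hnonneg : ∀ e, ∀ᶠ t in nhdsWithin (0 : ℝ) (Set.Ioi 0),
      0 ≤ w e - if e ∈ S then t else 0 := by
    intro e
    by_cases he : e ∈ S
    · filter_upwards [Ioo_mem_nhdsGT (hS e he)] with t ht
      simpa [he] using ht.2.le
    · simpa [he] using hw e
  have hheavy : ∀ J' ∈ 𝒥, ∀ᶠ t in nhdsWithin (0 : ℝ) (Set.Ioi 0),
      ∑ e ∈ J, w e - t ≤ ∑ e ∈ J', (w e - if e ∈ S then t else 0) := by
    intro J' hJ'
    have hsum : ∀ t, ∑ e ∈ J', (w e - if e ∈ S then t else 0) =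
        ∑ e ∈ J', w e - (S ∩ J').card * t := by
      intro t
      rw [Finset.sum_sub_distrib, Finset.sum_ite_mem, Finset.sum_const, nsmul_eq_mul,
        Finset.inter_comm]
    simp only [hsum]
    obtain hlt | heq := (hmin J' hJ').lt_or_eq
    · have hlim : Filter.Tendsto (fun t : ℝ => ∑ e ∈ J', w e - (S ∩ J').card * t + t)
          (nhdsWithin 0 (Set.Ioi 0)) (nhds (∑ e ∈ J', w e - (S ∩ J').card * 0 + 0)) :=
        (Continuous.tendsto (by fun_prop) 0).mono_left nhdsWithin_le_nhds
      filter_upwards [hlim.eventually_const_lt (by simpa using hlt)] with t ht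
      linarith
    · filter_upwards with t
      rw [hcard J' hJ' heq.symm, heq]
      simp
  obtain ⟨t, ht, h1, h2⟩ := (eventually_mem_nhdsWithin.and
    ((Filter.eventually_all.2 hnonneg).and
      ((Filter.eventually_all_finset 𝒥).2 hheavy))).exists
  exact ⟨t, ht, h1, h2⟩

theorem card_mul_le_one_of_extremal [Fintype E] (hw : 0 ≤ w) (htotal : ∑ e, w e = 1)
    (hS : ∀ e ∈ S, 0 < w e)
    (hmin : ∀ J' ∈ 𝒥, ∑ e ∈ J, w e ≤ ∑ e ∈ J', w e)
    (hcard : ∀ J' ∈ 𝒥, ∑ e ∈ J', w e = ∑ e ∈ J, w e → (S ∩ J').card = 1)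
    (hext : ∀ w' : E → ℝ, 0 ≤ w' → ∃ J' ∈ 𝒥, ∑ e ∈ J', w' e ≤ (∑ e ∈ J, w e) * ∑ e, w' e) :
    S.card * ∑ e ∈ J, w e ≤ 1 := by
  obtain ⟨t, ht, hnonneg, hheavy⟩ := exists_perturbation hw hS hmin hcard
  obtain ⟨J', hJ', hle⟩ := hext _ hnonneg
  have hdrop : ∑ e, (w e - if e ∈ S then t else 0) = 1 - S.card * t := by
    rw [Finset.sum_sub_distrib, htotal, Finset.sum_ite_mem, Finset.univ_inter, Finset.sum_const,
      nsmul_eq_mul]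
  rw [hdrop] at hle
  have hle' : t * (S.card * ∑ e ∈ J, w e) ≤ t * 1 := by linarith [hheavy J' hJ']
  exact le_of_mul_le_mul_left hle' ht

end ExtremalWeights

section Contraction

variable {V E : Type*} {ends : E → Sym2 V} {D : Finset E} {p q : V}

theorem crosses_map {V' : Type*} (f : V → V') (Z : Set V') (e : Sym2 V) :
    Crosses Z (e.map f) ↔ Crosses (f ⁻¹' Z) e := by
  induction e with | _ a b => simp

theorem cutSize_edgesOf_map {V' : Type*} (f : V → V') (Z : Set V') (F : Finset E) :
    cutSize (edgesOf (Sym2.map f ∘ ends) F) Z = cutSize (edgesOf ends F) (f ⁻¹' Z) := by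
  simp only [cutSize_edgesOf, Function.comp_apply, crosses_map]

theorem boundary_of_contract (hpq : p ≠ q)
    (hD : boundary (edgesOf (Sym2.map (Function.update id q p) ∘ ends) D) = 0) :
    boundary (edgesOf ends D) = 0 ∨
      boundary (edgesOf ends D) = Pi.single p 1 + Pi.single q 1 := by
  have hfiber : ∀ (v : V) (X : Finset V), Function.update id q p ⁻¹' {v} = (X : Set V) →
      ∑ u ∈ X, boundary (edgesOf ends D) u = 0 := by
    intro v X hX
    rw [sum_boundary, ← hX, ← cutSize_edgesOf_map, ← Finset.coe_singleton, ← sum_boundary, hD]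
    simp
  have hoff : ∀ v, v ≠ p → v ≠ q → boundary (edgesOf ends D) v = 0 := by
    intro v hvp hvq
    simpa using hfiber v {v} (Set.ext fun u => by
      simp only [Set.mem_preimage, Function.update_apply, Set.mem_singleton_iff,
        Finset.coe_singleton]
      grind)
  have hends : boundary (edgesOf ends D) p = boundary (edgesOf ends D) q := by
    simpa [hpq, CharTwo.add_eq_zero] using hfiber p {p, q} (Set.ext fun u => by
      simp only [Set.mem_preimage, Function.update_apply, Set.mem_singleton_iff,
        Finset.coe_pair, Set.mem_insert_iff]
      grind)
  obtain h | h : boundary (edgesOf ends D) p = 0 ∨ boundary (edgesOf ends D) p = 1 := by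
    generalize boundary (edgesOf ends D) p = x
    decide +revert
  · left
    ext v
    rw [Pi.zero_apply]
    by_cases hvp : v = p <;> by_cases hvq : v = q <;> grind
  · right
    ext v
    simp only [Pi.add_apply, Pi.single_apply]
    by_cases hvp : v = p <;> by_cases hvq : v = q <;> grind

/-- A join of the contracted multigraph is a join up to the contracted edge. -/
theorem exists_join_of_contract {F₀ J : Finset E} {w : E → ℝ} {e₀ : E} (he₀ : ends e₀ = s(p, q))
    (hpq : p ≠ q) (hzero : w e₀ = 0)
    (hJ : IsJoin (Sym2.map (Function.update id q p) ∘ ends)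
      (boundary (edgesOf (Sym2.map (Function.update id q p) ∘ ends) F₀)) J) :
    ∃ J', IsJoin ends (boundary (edgesOf ends F₀)) J' ∧ ∑ e ∈ J', w e = ∑ e ∈ J, w e := by
  have hdiff : boundary (edgesOf (Sym2.map (Function.update id q p) ∘ ends) (J ∆ F₀)) = 0 := by
    rw [boundary_symmDiff, hJ, add_self_eq_zero]
  obtain h | h := boundary_of_contract hpq hdiff <;> rw [boundary_symmDiff] at h
  · exact ⟨J, funext fun v => CharTwo.add_eq_zero.1 (congrFun h v), rfl⟩
  · refine ⟨J ∆ {e₀}, ?_, ?_⟩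
    · have hsingle : boundary (edgesOf ends {e₀}) = Pi.single p 1 + Pi.single q 1 := by
        simp [boundary_edgesOf, he₀, endVec_mk]
      rw [IsJoin, boundary_symmDiff, hsingle, ← h, ← add_assoc, add_self_eq_zero, zero_add]
    · refine Finset.sum_congr_of_eq_on_inter ?_ ?_ fun _ _ _ => rfl <;> intro e he he' <;>
        simp only [Finset.mem_symmDiff, Finset.mem_singleton] at he he' <;>
        obtain rfl : e = e₀ := by tauto
      all_goals exact hzero

theorem card_nonloops_contract_lt [Fintype E] {e₀ : E} (he₀ : ends e₀ = s(p, q)) (hpq : p ≠ q) :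
    ({e | ¬ ((Sym2.map (Function.update id q p) ∘ ends) e).IsDiag} : Finset E).card <
      ({e | ¬ (ends e).IsDiag} : Finset E).card := by
  refine Finset.card_lt_card (Finset.ssubset_iff_of_subset ?_ |>.2 ⟨e₀, ?_, ?_⟩)
  · refine Finset.monotone_filter_right _ fun e _ h hdiag => h ?_
    exact hdiag.map
  · simpa [he₀] using hpq
  · simp [he₀, Function.update_apply]

end Contraction

section TJoinTheorem

variable {V E : Type*} [Finite V] [Fintype E]

theorem three_mul_extremal_le_one {ends : E → Sym2 V} {T : V → ZMod 2} {J : Finset E} {w : E → ℝ}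
    (hstar : ∀ a, T a = 1 → 3 ≤ (star ends a).card) (hw : 0 ≤ w) (htotal : ∑ e, w e = 1)
    (hpos : ∀ e, ¬ (ends e).IsDiag → 0 < w e) (hJ : IsJoin ends T J)
    (hmin : ∀ J', IsJoin ends T J' → ∑ e ∈ J, w e ≤ ∑ e ∈ J', w e)
    (hext : ∀ w' : E → ℝ, 0 ≤ w' →
      ∃ J', IsJoin ends T J' ∧ ∑ e ∈ J', w' e ≤ (∑ e ∈ J, w e) * ∑ e, w' e) :
    3 * ∑ e ∈ J, w e ≤ 1 := by
  by_cases hT : T = 0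
  · have := hmin ∅ (by simp [IsJoin, boundary_edgesOf, hT])
    rw [Finset.sum_empty] at this
    linarith
  · obtain ⟨a, hTa, hone⟩ := exists_star_inter_card_eq_one hpos hT hJ
    have hcard : (star ends a).card * ∑ e ∈ J, w e ≤ 1 := by
      refine card_mul_le_one_of_extremal (𝒥 := {J' | IsJoin ends T J'}) hw htotal
        (fun e he => hpos e (mem_star.1 he).2) (by simpa using hmin) ?_ (by simpa using hext)
      intro J' hJ' heq
      exact hone J' (by simpa using hJ') fun J'' hJ'' => heq.trans_le (hmin J'' hJ'')
    have hthree : (3 : ℝ) ≤ (star ends a).card := mod_cast hstar a hTa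
    exact (mul_le_mul_of_nonneg_right hthree (Finset.sum_nonneg fun e _ => hw e)).trans hcard

/-- The hypothesis on cuts says that `1/3` of the all-one vector dominates a point of the `T`-join
polyhedron, where `T` is the boundary of `F₀`. -/
theorem exists_join_three_mul_le (ends : E → Sym2 V) (F₀ : Finset E)
    (hcut : ∀ X : Set V, Odd (cutSize (edgesOf ends F₀) X) →
      3 ≤ cutSize (edgesOf ends Finset.univ) X)
    {w : E → ℝ} (hw : 0 ≤ w) :
    ∃ J, IsJoin ends (boundary (edgesOf ends F₀)) J ∧ 3 * ∑ e ∈ J, w e ≤ ∑ e, w e := by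
  induction hn : ({e | ¬ (ends e).IsDiag} : Finset E).card using Nat.strong_induction_on
    generalizing ends w with
  | _ n ih =>
  obtain _ | _ := isEmpty_or_nonempty E
  · exact ⟨F₀, rfl, by simp [Finset.eq_empty_of_isEmpty F₀]⟩
  obtain ⟨w₀, hw₀, htotal, J, hJ, hmin, hext⟩ := exists_extremal_weight (E := E)
    (𝒥 := {J | IsJoin ends (boundary (edgesOf ends F₀)) J})
    ⟨F₀, Finset.mem_filter.2 ⟨Finset.mem_univ _, rfl⟩⟩
  simp only [Finset.mem_filter, Finset.mem_univ, true_and] at hJ hmin hext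
  have hthird : 3 * ∑ e ∈ J, w₀ e ≤ 1 := by
    by_cases hpos : ∀ e, ¬ (ends e).IsDiag → 0 < w₀ e
    · refine three_mul_extremal_le_one (fun a ha => ?_) hw₀ htotal hpos hJ hmin hext
      rw [card_star_eq_cutSize]
      refine hcut _ (ZMod.natCast_eq_one_iff_odd.1 ?_)
      rw [← ha, ← Finset.coe_singleton, ← sum_boundary, Finset.sum_singleton]
    · push Not at hpos
      obtain ⟨e₀, hloop, hle⟩ := hpos
      have hzero : w₀ e₀ = 0 := le_antisymm hle (hw₀ e₀)
      obtain ⟨p, q, he₀⟩ : ∃ p q, ends e₀ = s(p, q) := Sym2.exists.1 ⟨_, rfl⟩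
      have hpq : p ≠ q := by simpa [he₀] using hloop
      obtain ⟨J₁, hJ₁, hle₁⟩ := ih _ (hn ▸ card_nonloops_contract_lt he₀ hpq)
        (Sym2.map (Function.update id q p) ∘ ends)
        (fun X hX => by rw [cutSize_edgesOf_map] at hX ⊢; exact hcut _ hX) hw₀ rfl
      obtain ⟨J₂, hJ₂, hsum⟩ := exists_join_of_contract he₀ hpq hzero hJ₁
      linarith [hmin J₂ hJ₂]
  obtain ⟨J', hJ', hle⟩ := hext w hw
  refine ⟨J', hJ', ?_⟩
  nlinarith [Finset.sum_nonneg fun e (_ : e ∈ Finset.univ) => hw e]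

end TJoinTheorem

section EdgeConn

variable {V : Type*} {M N : Multiset (Sym2 V)} {W W' : Set V} {k : ℕ}

theorem EdgeConn.mono (h : EdgeConn k W M) (hMN : M ≤ N) : EdgeConn k W N :=
  fun Z h₁ h₂ => (h Z h₁ h₂).trans (cutSize_mono hMN)

theorem edgeConn_one_iff : EdgeConn 1 W M ↔
    ∀ Z : Set V, (W ∩ Z).Nonempty → (W \ Z).Nonempty → ∃ e ∈ M, Crosses Z e := by
  simp only [EdgeConn, Nat.one_le_iff_ne_zero, ← Nat.pos_iff_ne_zero, cutSize_pos]

theorem EdgeConn.union_of_mem {x y : V} (hW : EdgeConn 1 W M) (hW' : EdgeConn 1 W' M)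
    (hxy : s(x, y) ∈ M) (hx : x ∈ W) (hy : y ∈ W') : EdgeConn 1 (W ∪ W') M := by
  rw [edgeConn_one_iff] at *
  intro Z hin hout
  by_cases hcross : Crosses Z s(x, y)
  · exact ⟨_, hxy, hcross⟩
  rw [crosses_mk] at hcross
  rw [Set.union_inter_distrib_right, Set.union_nonempty] at hin
  rw [Set.union_sdiff_distrib, Set.union_nonempty] at hout
  by_cases hxZ : x ∈ Z
  · have hyZ : y ∈ Z := by tauto
    exact hout.elim (hW Z ⟨x, hx, hxZ⟩) (hW' Z ⟨y, hy, hyZ⟩)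
  · have hyZ : y ∉ Z := by tauto
    exact hin.elim (hW Z · ⟨x, hx, hxZ⟩) (hW' Z · ⟨y, hy, hyZ⟩)

end EdgeConn

/-! ### Removable edges and tours -/

section Removable

variable {V E : Type*} {ends : E → Sym2 V} {F F' : Finset E}

theorem edgesOf_mono (h : F ⊆ F') : edgesOf ends F ≤ edgesOf ends F' :=
  Multiset.map_le_map (Finset.val_le_iff.2 h)

theorem edgesOf_union (h : Disjoint F F') :
    edgesOf ends (F ∪ F') = edgesOf ends F + edgesOf ends F' := by
  rw [← Finset.disjUnion_eq_union _ _ h, edgesOf, Finset.disjUnion_val, Multiset.map_add]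
  rfl

variable [Fintype E] {S C : Finset V} {R : Finset E} {r : V}

/-- The edges with both ends in `S`. -/
def inside (ends : E → Sym2 V) (S : Finset V) : Finset E :=
  {e | ∀ v ∈ ends e, v ∈ S}

/-- The edges inside `S` that leave `C`. -/
def link (ends : E → Sym2 V) (S C : Finset V) : Finset E :=
  {e ∈ inside ends S | Crosses C (ends e)}

/-- `C` is a part of `S` that is attached to the rest of `S` at the vertex `r ∉ C` only, such that
both `C` and `S \ C` span connected subgraphs. -/
structure IsPiece (ends : E → Sym2 V) (S : Finset V) (r : V) (C : Finset V) : Prop where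
  subset : C ⊆ S
  root_mem : r ∈ S \ C
  root_mem_of_mem_link : ∀ e ∈ link ends S C, r ∈ ends e
  edgeConn : EdgeConn 1 C (edgesOf ends (inside ends C))
  edgeConn_compl : EdgeConn 1 (S \ C : Finset V) (edgesOf ends (inside ends (S \ C)))
  link_nonempty : (link ends S C).Nonempty

theorem mem_inside {e : E} : e ∈ inside ends S ↔ ∀ v ∈ ends e, v ∈ S := by
  simp [inside]

theorem mem_link {e : E} : e ∈ link ends S C ↔ e ∈ inside ends S ∧ Crosses C (ends e) := by
  simp [link]

theorem EdgeConn.exists_mem_inside {Z : Set V} (hS : EdgeConn 1 S (edgesOf ends (inside ends S)))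
    {x y : V} (hx : x ∈ S) (hxZ : x ∈ Z) (hy : y ∈ S) (hyZ : y ∉ Z) :
    ∃ e a b, ends e = s(a, b) ∧ a ∈ S ∧ b ∈ S ∧ a ∈ Z ∧ b ∉ Z := by
  have hcut := hS Z ⟨x, hx, hxZ⟩ ⟨y, hy, hyZ⟩
  rw [cutSize_edgesOf, Nat.one_le_iff_ne_zero, ← Nat.pos_iff_ne_zero, Finset.card_pos] at hcut
  obtain ⟨e, he⟩ := hcut
  obtain ⟨heS, ⟨a, ha, haZ⟩, b, hb, hbZ⟩ := Finset.mem_filter.1 he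
  rw [mem_inside] at heS
  exact ⟨e, a, b, (Sym2.mem_and_mem_iff (by rintro rfl; exact hbZ haZ)).1 ⟨ha, hb⟩,
    heS a ha, heS b hb, haZ, hbZ⟩

theorem edgeConn_inside (h : ∀ Z : Set V, ∀ x ∈ S, x ∈ Z → ∀ y ∈ S, y ∉ Z →
    ∃ e ∈ inside ends S, Crosses Z (ends e)) : EdgeConn 1 S (edgesOf ends (inside ends S)) := by
  rintro Z ⟨x, hx, hxZ⟩ ⟨y, hy, hyZ⟩
  obtain ⟨e, he, hcross⟩ := h Z x hx hxZ y hy hyZ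
  rw [cutSize_edgesOf]
  exact Finset.card_pos.2 ⟨e, Finset.mem_filter.2 ⟨he, hcross⟩⟩

theorem edgeConn_sdiff_of_link (hS : EdgeConn 1 S (edgesOf ends (inside ends S))) (hr : r ∈ S)
    (hrC : r ∉ C) (hlink : ∀ e ∈ link ends S C, r ∈ ends e) :
    EdgeConn 1 (S \ C : Finset V) (edgesOf ends (inside ends (S \ C))) := by
  have hside : ∀ Z : Set V, r ∉ Z → ∀ x ∈ S \ C, x ∈ Z →
      ∃ e ∈ inside ends (S \ C), Crosses Z (ends e) := by
    intro Z hrZ x hx hxZ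
    obtain ⟨hxS, hxC⟩ := Finset.mem_sdiff.1 hx
    obtain ⟨e, a, b, he, ha, hb, haZ, hbZ⟩ := hS.exists_mem_inside (Z := Z \ C) hxS ⟨hxZ, hxC⟩ hr
      (fun h => hrZ h.1)
    have hbC : b ∉ C := fun hbC => by
      have := hlink e (mem_link.2 ⟨mem_inside.2 (by simp [he, ha, hb]), by
        rw [he, crosses_mk]; exact Or.inr ⟨haZ.2, hbC⟩⟩)
      rw [he, Sym2.mem_iff] at this
      obtain rfl | rfl := this
      · exact hrZ haZ.1
      · exact hrC hbC
    exact ⟨e, mem_inside.2 (by simp [he, ha, hb, hbC, show a ∉ C from haZ.2]), by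
      rw [he, crosses_mk]; exact Or.inl ⟨haZ.1, fun h => hbZ ⟨h, hbC⟩⟩⟩
  refine edgeConn_inside fun Z x hx hxZ y hy hyZ => ?_
  by_cases hrZ : r ∈ Z
  · simpa only [crosses_compl] using hside Zᶜ (not_not_intro hrZ) y hy hyZ
  · exact hside Z hrZ x hx hxZ

theorem exists_isPiece (hS : EdgeConn 1 S (edgesOf ends (inside ends S))) (hr : r ∈ S)
    (hne : S ≠ {r}) : ∃ C, IsPiece ends S r C := by
  let Closed : Finset V → Prop := fun C =>
    C.Nonempty ∧ C ⊆ S.erase r ∧ ∀ e ∈ link ends S C, r ∈ ends e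
  have hclosed : Closed (S.erase r) := by
    refine ⟨?_, subset_rfl, fun e he => ?_⟩
    · rw [Finset.nonempty_iff_ne_empty, Ne, Finset.erase_eq_empty_iff]
      rintro (rfl | h)
      · simp at hr
      · exact hne h
    · obtain ⟨heS, -, b, hb, hbS⟩ := mem_link.1 he
      have hbr : b = r := by
        by_contra h
        exact hbS (Finset.mem_erase.2 ⟨h, mem_inside.1 heS b hb⟩)
      rwa [← hbr]
  obtain ⟨C, -, ⟨⟨c, hc⟩, hCS, hlink⟩, hmin⟩ := exists_minimal_le_of_wellFoundedLT Closed _ hclosed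
  have hrC : r ∉ C := fun h => by simpa using hCS h
  have hCS' : C ⊆ S := hCS.trans (Finset.erase_subset _ _)
  refine ⟨C, hCS', Finset.mem_sdiff.2 ⟨hr, hrC⟩, hlink, ?_,
    edgeConn_sdiff_of_link hS hr hrC hlink, ?_⟩
  · refine edgeConn_inside fun Z x hx hxZ y hy hyZ => ?_
    by_contra! hcut
    refine hyZ (Finset.mem_filter.1 (hmin (y := C.filter (· ∈ Z)) ⟨⟨x, by simp [hx, hxZ]⟩,
      (Finset.filter_subset _ _).trans hCS, fun e he => ?_⟩ (Finset.filter_subset _ _) hy)).2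
    obtain ⟨heS, ⟨a, ha, haC⟩, b, hb, hbC⟩ := mem_link.1 he
    simp only [Finset.coe_filter, Set.mem_ofPred_eq] at haC hbC
    by_contra hre
    have hinC : ∀ v ∈ ends e, v ∈ C := fun v hv => by
      by_contra hvC
      exact hre (hlink e (mem_link.2 ⟨heS, ⟨a, ha, haC.1⟩, v, hv, hvC⟩))
    exact hcut e (mem_inside.2 hinC) ⟨⟨a, ha, haC.2⟩, b, hb, fun h => hbC ⟨hinC b hb, h⟩⟩
  · obtain ⟨e, a, b, he, ha, hb, haC, hbC⟩ := hS.exists_mem_inside (Z := C) (hCS' hc) hc hr hrC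
    exact ⟨e, mem_link.2 ⟨mem_inside.2 (by simp [he, ha, hb]), by
      rw [he, crosses_mk]; exact Or.inl ⟨haC, hbC⟩⟩⟩

theorem disjoint_inside_inside_sdiff : Disjoint (inside ends C) (inside ends (S \ C)) := by
  rw [Finset.disjoint_left]
  intro e he he'
  have hout := Sym2.out_fst_mem (ends e)
  exact (Finset.mem_sdiff.1 (mem_inside.1 he' _ hout)).2 (mem_inside.1 he _ hout)

theorem disjoint_inside_union_link :
    Disjoint (inside ends C ∪ inside ends (S \ C)) (link ends S C) := by
  rw [Finset.disjoint_right]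
  intro e he he'
  obtain ⟨-, ⟨a, ha, haC⟩, b, hb, hbC⟩ := mem_link.1 he
  obtain h | h := Finset.mem_union.1 he'
  · exact hbC (mem_inside.1 h b hb)
  · exact (Finset.mem_sdiff.1 (mem_inside.1 h a ha)).2 haC

theorem inside_eq_union (h : C ⊆ S) :
    inside ends S = inside ends C ∪ inside ends (S \ C) ∪ link ends S C := by
  ext e
  induction he : ends e with | _ a b =>
  simp only [Finset.mem_union, mem_inside, mem_link, he, crosses_mk, Sym2.mem_iff,
    forall_eq_or_imp, forall_eq, Finset.mem_sdiff, Finset.mem_coe]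
  grind

theorem edgesOf_inside_eq_add (h : C ⊆ S) :
    edgesOf ends (inside ends S) = edgesOf ends (inside ends C) +
      edgesOf ends (inside ends (S \ C)) + edgesOf ends (link ends S C) := by
  rw [inside_eq_union h, edgesOf_union disjoint_inside_union_link,
    edgesOf_union disjoint_inside_inside_sdiff]

theorem IsPiece.exists_eq_of_mem_link (h : IsPiece ends S r C) {e : E} (he : e ∈ link ends S C) :
    ∃ c ∈ C, ends e = s(c, r) := by
  obtain ⟨-, ⟨c, hc, hcC⟩, -⟩ := mem_link.1 he
  have hne : c ≠ r := fun hcr => (Finset.mem_sdiff.1 h.root_mem).2 (hcr ▸ hcC)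
  exact ⟨c, hcC, (Sym2.mem_and_mem_iff hne).1 ⟨hc, h.root_mem_of_mem_link e he⟩⟩

/-- `J` contains at most one edge at each vertex of degree `3`. -/
def SparseAtCubic (ends : E → Sym2 V) (J : Finset E) : Prop :=
  ∀ v, degree (edgesOf ends Finset.univ) v = 3 → degree (edgesOf ends J) v ≤ 1

/-- The edges of `R` have an end of degree `3`, and deleting edges of `R` does not disconnect the
subgraph spanned by `S` as long as at most one edge is deleted at each vertex of degree `3`. -/
structure IsRemovable (ends : E → Sym2 V) (S : Finset V) (R : Finset E) : Prop where
  subset : R ⊆ inside ends S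
  exists_cubic : ∀ e ∈ R, ∃ v ∈ ends e, degree (edgesOf ends Finset.univ) v = 3
  edgeConn : ∀ J ⊆ R, SparseAtCubic ends J → EdgeConn 1 S (edgesOf ends (inside ends S \ J))

theorem SparseAtCubic.mono {J J' : Finset E} (h : SparseAtCubic ends J) (hJ : J' ⊆ J) :
    SparseAtCubic ends J' :=
  fun v hv => (degree_mono (edgesOf_mono hJ)).trans (h v hv)

theorem IsPiece.isRemovable_union (h : IsPiece ends S r C) {R₁ R₂ N : Finset E}
    (h₁ : IsRemovable ends C R₁) (h₂ : IsRemovable ends (S \ C) R₂) (hN : N ⊆ link ends S C)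
    (hcubic : ∀ e ∈ N, degree (edgesOf ends Finset.univ) r = 3)
    (hsurvive : ∀ J ⊆ N, SparseAtCubic ends J → (link ends S C \ J).Nonempty) :
    IsRemovable ends S (R₁ ∪ R₂ ∪ N) := by
  have hd₁ := disjoint_inside_inside_sdiff (ends := ends) (S := S) (C := C)
  have hd₂ := disjoint_inside_union_link (ends := ends) (S := S) (C := C)
  rw [Finset.disjoint_left] at hd₁ hd₂
  have hsub₁ := h₁.subset
  have hsub₂ := h₂.subset
  have hS := inside_eq_union (ends := ends) h.subset
  refine ⟨?_, ?_, fun J hJ hsparse => ?_⟩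
  · rw [hS]
    exact Finset.union_subset_union (Finset.union_subset_union hsub₁ hsub₂) hN
  · intro e he
    obtain he | he := Finset.mem_union.1 he
    · exact (Finset.mem_union.1 he).elim (h₁.exists_cubic e) (h₂.exists_cubic e)
    · exact ⟨r, h.root_mem_of_mem_link e (hN he), hcubic e he⟩
  · have hmono : ∀ J' ⊆ J, SparseAtCubic ends J' := fun J' hJ' => hsparse.mono hJ'
    have hconn₁ := (h₁.edgeConn (J ∩ R₁) Finset.inter_subset_right
      (hmono _ Finset.inter_subset_left)).mono (N := edgesOf ends (inside ends S \ J))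
      (edgesOf_mono (by rw [hS]; grind))
    have hconn₂ := (h₂.edgeConn (J ∩ R₂) Finset.inter_subset_right
      (hmono _ Finset.inter_subset_left)).mono (N := edgesOf ends (inside ends S \ J))
      (edgesOf_mono (by rw [hS]; grind))
    obtain ⟨e, he⟩ := hsurvive (J ∩ N) Finset.inter_subset_right (hmono _ Finset.inter_subset_left)
    obtain ⟨helink, heJ⟩ := Finset.mem_sdiff.1 he
    obtain ⟨c, hc, hce⟩ := h.exists_eq_of_mem_link helink
    have hmem : s(c, r) ∈ edgesOf ends (inside ends S \ J) :=
      Multiset.mem_map.2 ⟨e, Finset.mem_sdiff.2 ⟨(mem_link.1 helink).1, by grind⟩, hce⟩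
    have := hconn₁.union_of_mem hconn₂ hmem hc h.root_mem
    rwa [← Finset.coe_union, Finset.union_sdiff_of_subset h.subset] at this

theorem IsPiece.degree_root (h : IsPiece ends S r C) :
    degree (edgesOf ends (inside ends S)) r =
      degree (edgesOf ends (inside ends (S \ C))) r + (link ends S C).card := by
  have hzero : degree (edgesOf ends (inside ends C)) r = 0 := by
    rw [degree_edgesOf, Finset.card_eq_zero, Finset.filter_eq_empty_iff]
    exact fun e he hre => (Finset.mem_sdiff.1 h.root_mem).2 (mem_inside.1 he r hre)
  have hlink : degree (edgesOf ends (link ends S C)) r = (link ends S C).card := by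
    rw [degree_edgesOf, Finset.filter_true_of_mem h.root_mem_of_mem_link]
  rw [edgesOf_inside_eq_add h.subset, degree_add, degree_add, hzero, hlink, zero_add]

theorem IsPiece.degree_inside_lt (h : IsPiece ends S r C) {e : E} {c : V} (he : e ∈ link ends S C)
    (hc : c ∈ ends e) :
    degree (edgesOf ends (inside ends C)) c < degree (edgesOf ends Finset.univ) c := by
  rw [degree_edgesOf, degree_edgesOf]
  refine Finset.card_lt_card (Finset.ssubset_iff_of_subset
    (Finset.filter_subset_filter _ (Finset.subset_univ _)) |>.2 ⟨e, by simp [hc], fun he' => ?_⟩)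
  exact (Finset.mem_sdiff.1 h.root_mem).2
    (mem_inside.1 (Finset.mem_filter.1 he').1 r (h.root_mem_of_mem_link e he))

theorem isRemovable_singleton (r : V) : IsRemovable ends {r} ∅ := by
  refine ⟨Finset.empty_subset _, by simp, fun J _ _ Z hin hout => ?_⟩
  rw [Finset.coe_singleton, Set.singleton_inter_nonempty] at hin
  obtain ⟨x, hx, hxZ⟩ := hout
  rw [Finset.coe_singleton, Set.mem_singleton_iff] at hx
  exact absurd hin (hx ▸ hxZ)

theorem IsPiece.exists_isRemovable (h : IsPiece ends S r C) {R₁ R₂ : Finset E}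
    (h₁ : IsRemovable ends C R₁) (h₂ : IsRemovable ends (S \ C) R₂)
    (hcubic : 2 ≤ (link ends S C).card → degree (edgesOf ends Finset.univ) r = 3) :
    ∃ R, IsRemovable ends S R ∧ R₁.card + R₂.card + 2 * (link ends S C).card ≤
      R.card + ((link ends S C).card - 2) + 2 := by
  have hdisj : Disjoint R₁ R₂ := disjoint_inside_inside_sdiff.mono h₁.subset h₂.subset
  have hdisj' : Disjoint (R₁ ∪ R₂) (link ends S C) :=
    disjoint_inside_union_link.mono_left (Finset.union_subset_union h₁.subset h₂.subset)
  obtain hone | htwo : (link ends S C).card ≤ 1 ∨ 2 ≤ (link ends S C).card := by omega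
  · refine ⟨_, h.isRemovable_union h₁ h₂ (Finset.empty_subset _) (by simp) fun J hJ _ => ?_, ?_⟩
    · rw [Finset.subset_empty.1 hJ, Finset.sdiff_empty]
      exact h.link_nonempty
    · rw [Finset.union_empty, Finset.card_union_of_disjoint hdisj]
      omega
  · refine ⟨_, h.isRemovable_union h₁ h₂ subset_rfl (fun _ _ => hcubic htwo)
      fun J hJ hsparse => ?_, ?_⟩
    · have hJr := hsparse r (hcubic htwo)
      rw [degree_edgesOf,
        Finset.filter_true_of_mem fun e he => h.root_mem_of_mem_link e (hJ he)] at hJr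
      rw [← Finset.card_pos, Finset.card_sdiff_of_subset hJ]
      omega
    · rw [Finset.card_union_of_disjoint hdisj', Finset.card_union_of_disjoint hdisj]
      omega

/-- At the root `r` all but two edges inside `S` are counted as removable for free. -/
theorem exists_isRemovable (hloop : ∀ e, ¬ (ends e).IsDiag)
    (hdeg : ∀ v, degree (edgesOf ends Finset.univ) v ≤ 3)
    (hS : EdgeConn 1 S (edgesOf ends (inside ends S))) (hr : r ∈ S)
    (hroot : 2 ≤ degree (edgesOf ends (inside ends S)) r →
      degree (edgesOf ends Finset.univ) r = 3) :
    ∃ R, IsRemovable ends S R ∧ 2 * (inside ends S).card + 2 ≤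
      R.card + (degree (edgesOf ends (inside ends S)) r - 2) + 2 * S.card := by
  induction S using Finset.strongInduction generalizing r with
  | H S ih =>
  by_cases hne : S = {r}
  · subst hne
    have hempty : inside ends {r} = ∅ := by
      refine Finset.eq_empty_of_forall_notMem fun e he => hloop e ?_
      induction hab : ends e with | _ a b =>
      simp only [mem_inside, hab, Sym2.mem_iff, forall_eq_or_imp, forall_eq,
        Finset.mem_singleton] at he
      rw [he.1, he.2]
      exact Sym2.diag_isDiag r
    exact ⟨∅, isRemovable_singleton r, by simp [hempty]⟩
  obtain ⟨C, hC⟩ := exists_isPiece hS hr hne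
  obtain ⟨e₀, he₀⟩ := hC.link_nonempty
  obtain ⟨c, hcC, hce⟩ := hC.exists_eq_of_mem_link he₀
  have hlt := hC.degree_inside_lt he₀ (c := c) (by simp [hce])
  have hrC := (Finset.mem_sdiff.1 hC.root_mem).2
  have hdegr := hC.degree_root
  have hlink : 1 ≤ (link ends S C).card := hC.link_nonempty.card_pos
  obtain ⟨R₁, hR₁, hcard₁⟩ := ih C ⟨hC.subset, fun h => hrC (h hr)⟩ hC.edgeConn hcC
    (fun h => by linarith [hdeg c])
  obtain ⟨R₂, hR₂, hcard₂⟩ := ih (S \ C) (Finset.sdiff_ssubset hC.subset ⟨c, hcC⟩)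
    hC.edgeConn_compl hC.root_mem (fun h => hroot (by omega))
  obtain ⟨R, hR, hcard⟩ := hC.exists_isRemovable hR₁ hR₂ (fun h => hroot (by omega))
  have hinside := congrArg Multiset.card (edgesOf_inside_eq_add (ends := ends) hC.subset)
  simp only [edgesOf, Multiset.card_add, Multiset.card_map, Finset.card_val] at hinside
  have hsize := Finset.card_sdiff_add_card_eq_card hC.subset
  have := hdeg c
  exact ⟨R, hR, by omega⟩

end Removable

section EulerTour

variable {V : Type*} {G : SimpleGraph V} {M : Multiset (Sym2 V)} {v x y : V}

theorem exists_return_walk [Finite V] (hG : ∀ e ∈ M, e ∈ G.edgeSet) (hM : boundary M = 0)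
    (hxy : s(x, y) ∈ M) : ∃ p : G.Walk y x, s(x, y) ::ₘ (p.edges : Multiset (Sym2 V)) ≤ M := by
  have herase : boundary (M.erase s(x, y)) = Pi.single y 1 + Pi.single x 1 := by
    rw [← Multiset.cons_erase hxy, boundary_cons, endVec_mk] at hM
    rw [← zero_add (boundary _), ← add_self_eq_zero (Pi.single y 1 + Pi.single x 1 : V → ZMod 2),
      add_assoc, add_comm (Pi.single y 1) (Pi.single x 1), hM, add_zero]
  obtain ⟨p, hp⟩ := (reachable_of_boundary_eq herase).exists_isPath
  have hmem : ∀ e ∈ p.edges, e ∈ M.erase s(x, y) := fun e he =>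
    (edgeSet_fromEdgeSet _ ▸ p.edges_subset_edgeSet he).1
  have hle : fromEdgeSet {e | e ∈ M.erase s(x, y)} ≤ G := fun a b hab =>
    hG _ (Multiset.mem_of_mem_erase ((fromEdgeSet_adj _).1 hab).1)
  refine ⟨p.mapLe hle, ?_⟩
  rw [Walk.edges_mapLe_eq_edges]
  calc s(x, y) ::ₘ (p.edges : Multiset (Sym2 V)) ≤ s(x, y) ::ₘ M.erase s(x, y) :=
        Multiset.cons_le_cons _
          ((Multiset.le_iff_subset (Multiset.coe_nodup.2 hp.isTrail.edges_nodup)).2 hmem)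
    _ = M := Multiset.cons_erase hxy

theorem exists_longer_closed_walk [Finite V] (hG : ∀ e ∈ M, e ∈ G.edgeSet) (hM : boundary M = 0)
    (hconn : EdgeConn 1 Set.univ M) (w : G.Walk v v) (hw : (w.edges : Multiset (Sym2 V)) ≤ M)
    (hspan : ∃ u, u ∉ w.support) :
    ∃ (u : V) (w' : G.Walk u u), (w'.edges : Multiset (Sym2 V)) ≤ M ∧ w.length < w'.length := by
  obtain ⟨z, hz⟩ := hspan
  obtain ⟨e, he, ⟨x, hxe, hx⟩, y, hye, hy⟩ := cutSize_pos.1 <|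
    hconn {x | x ∈ w.support} ⟨v, trivial, w.start_mem_support⟩ ⟨z, trivial, hz⟩
  rw [Set.mem_ofPred_eq] at hx hy
  obtain rfl : e = s(x, y) := (Sym2.mem_and_mem_iff (by rintro rfl; exact hy hx)).1 ⟨hxe, hye⟩
  have hrest : boundary (M - (w.edges : Multiset (Sym2 V))) = 0 := by
    rw [← tsub_add_cancel_of_le hw, boundary_add, boundary_walk_edges, add_self_eq_zero,
      add_zero] at hM
    exact hM
  have hnew : s(x, y) ∈ M - (w.edges : Multiset (Sym2 V)) := by
    rw [Multiset.mem_sub, Multiset.count_eq_zero_of_notMem]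
    · exact Multiset.count_pos.2 he
    · exact fun h => hy (w.snd_mem_support_of_mem_edges h)
  obtain ⟨p, hp⟩ := exists_return_walk (fun e he => hG e (Multiset.mem_of_le tsub_le_self he))
    hrest hnew
  have hadj : G.Adj x y := hG _ he
  refine ⟨x, (w.rotate x hx).append (.cons hadj p), ?_, ?_⟩
  · rw [Walk.edges_append, ← Multiset.coe_add, Walk.edges_cons,
      Multiset.coe_eq_coe.2 (w.rotate_edges x hx).perm]
    exact (add_le_add_right hp _).trans_eq (add_tsub_cancel_of_le hw)
  · rw [Walk.length_append, Walk.length_cons, Walk.length_rotate]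
    lia

theorem exists_euler_tour [Finite V] [Nonempty V] (hG : ∀ e ∈ M, e ∈ G.edgeSet)
    (hM : boundary M = 0) (hconn : EdgeConn 1 Set.univ M) :
    ∃ (v : V) (w : G.Walk v v), (∀ u, u ∈ w.support) ∧ w.length ≤ M.card := by
  have hlen {v : V} (w : G.Walk v v) (hw : (w.edges : Multiset (Sym2 V)) ≤ M) :
      w.length ≤ M.card := by
    simpa using Multiset.card_le_card hw
  by_contra! hnone
  have hlong (n : ℕ) :
      ∃ (v : V) (w : G.Walk v v), (w.edges : Multiset (Sym2 V)) ≤ M ∧ n ≤ w.length := by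
    induction n with
    | zero => exact ⟨Classical.arbitrary V, .nil, by simp, le_rfl⟩
    | succ n ih =>
      obtain ⟨v, w, hw, hn⟩ := ih
      obtain ⟨u, w', hw', hlt⟩ := exists_longer_closed_walk hG hM hconn w hw <| by
        by_contra! hspan
        exact (hnone v w hspan).not_ge (hlen w hw)
      exact ⟨u, w', hw', by lia⟩
  obtain ⟨v, w, hw, hn⟩ := hlong (M.card + 1)
  exact absurd (hlen w hw) (by lia)

end EulerTour

section Subcubic

variable {V E : Type*} {G : SimpleGraph V} {ends : E → Sym2 V} {F J R : Finset E}
  {v : V} {M : Multiset (Sym2 V)}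

theorem sum_degree_edgesOf (X : Finset V) :
    ∑ v ∈ X, degree (edgesOf ends F) v = ∑ e ∈ F, (X.filter (· ∈ ends e)).card := by
  simp only [degree_edgesOf]
  exact Finset.sum_card_bipartiteAbove_eq_sum_card_bipartiteBelow fun v e => v ∈ ends e

theorem not_isDiag_of_mem_edgesOf (hloop : ∀ e, ¬ (ends e).IsDiag) :
    ∀ e ∈ edgesOf ends F, ¬ e.IsDiag := by
  simpa [edgesOf] using fun e _ => hloop e

theorem EdgeConn.three_le_of_odd (hconn : EdgeConn 2 Set.univ M) (X : Set V)
    (hodd : Odd (cutSize M X)) : 3 ≤ cutSize M X := by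
  obtain ⟨e, -, ⟨a, -, ha⟩, b, -, hb⟩ := cutSize_pos.1 hodd.pos
  obtain ⟨k, hk⟩ := hodd
  have := hconn X ⟨a, trivial, ha⟩ ⟨b, trivial, hb⟩
  lia

/-- The edges in `R` have sign `-1`, since using them in a join shortens the tour. -/
def sign (R : Finset E) (e : E) : ℝ :=
  if e ∈ R then -1 else 1

theorem sum_sign (R F : Finset E) :
    ∑ e ∈ F, sign R e = (F \ R).card - (F ∩ R).card := by
  simp only [sign, Finset.sum_ite, Finset.filter_mem_eq_inter, Finset.filter_notMem_eq_sdiff,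
    Finset.sum_const, nsmul_eq_mul]
  ring

variable [Fintype V]

theorem sum_degree_edgesOf_univ (hloop : ∀ e, ¬ (ends e).IsDiag) :
    ∑ v, degree (edgesOf ends F) v = 2 * F.card := by
  have hends (e : E) : (Finset.univ.filter (· ∈ ends e)).card = 2 := by
    rw [← Sym2.card_toFinset_of_not_isDiag _ (hloop e)]
    congr 1
    ext v
    simp
  rw [sum_degree_edgesOf, Finset.sum_congr rfl fun e _ => hends e, Finset.sum_const, smul_eq_mul,
    mul_comm]

variable [Fintype E]

/-- The vertices of degree `3`. -/
def cubic (ends : E → Sym2 V) : Finset V :=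
  {v | degree (edgesOf ends Finset.univ) v = 3}

theorem mem_cubic : v ∈ cubic ends ↔ degree (edgesOf ends Finset.univ) v = 3 := by
  simp [cubic]

theorem sum_cubic_degree : ∑ v ∈ cubic ends, degree (edgesOf ends Finset.univ) v =
    3 * (cubic ends).card := by
  rw [Finset.sum_congr rfl fun v => mem_cubic.1, Finset.sum_const, smul_eq_mul, mul_comm]

theorem IsJoin.one_le_degree (hJ : IsJoin ends (boundary (edgesOf ends Finset.univ)) J)
    (hloop : ∀ e, ¬ (ends e).IsDiag) (hv : v ∈ cubic ends) : 1 ≤ degree (edgesOf ends J) v := by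
  have h := congrFun hJ v
  rw [boundary_apply (not_isDiag_of_mem_edgesOf hloop),
    boundary_apply (not_isDiag_of_mem_edgesOf hloop), mem_cubic.1 hv] at h
  by_contra hzero
  rw [Nat.lt_one_iff.1 (not_le.1 hzero)] at h
  exact absurd h (by decide)

theorem SparseAtCubic.of_sum_le (hone : ∀ v ∈ cubic ends, 1 ≤ degree (edgesOf ends J) v)
    (hsum : ∑ v ∈ cubic ends, degree (edgesOf ends J) v ≤ (cubic ends).card) :
    SparseAtCubic ends J := by
  intro v hv
  rw [Finset.card_eq_sum_ones] at hsum
  exact (((Finset.sum_eq_sum_iff_of_le hone).1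
    (le_antisymm (Finset.sum_le_sum hone) hsum)) v (mem_cubic.2 hv)).ge

/-- In the weight of an edge, each end of degree `3` counts `K`. -/
theorem exists_join_weight_le {K : ℝ} (hK : 1 ≤ K)
    (hcut : ∀ X : Set V, Odd (cutSize (edgesOf ends Finset.univ) X) →
      3 ≤ cutSize (edgesOf ends Finset.univ) X)
    (hR : ∀ e ∈ R, ∃ v ∈ ends e, v ∈ cubic ends) :
    ∃ J, IsJoin ends (boundary (edgesOf ends Finset.univ)) J ∧
      3 * (K * (∑ v ∈ cubic ends, degree (edgesOf ends J) v : ℕ) +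
          ((J \ R).card - (J ∩ R).card)) ≤
        K * (3 * (cubic ends).card) + ((Finset.univ \ R).card - R.card) := by
  let c (e : E) : ℕ := ((cubic ends).filter (· ∈ ends e)).card
  have hw : 0 ≤ fun e => K * c e + sign R e := by
    intro e
    by_cases he : e ∈ R
    · have hc : (1 : ℝ) ≤ c e := by
        obtain ⟨v, hv, hcubic⟩ := hR e he
        exact_mod_cast Finset.card_pos.2 ⟨v, Finset.mem_filter.2 ⟨hcubic, hv⟩⟩
      simp only [sign, if_pos he, Pi.zero_apply]
      nlinarith
    · simp only [sign, if_neg he, Pi.zero_apply]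
      positivity
  obtain ⟨J, hJ, hle⟩ := exists_join_three_mul_le ends Finset.univ hcut hw
  refine ⟨J, hJ, ?_⟩
  rwa [Finset.sum_add_distrib, Finset.sum_add_distrib, ← Finset.mul_sum, ← Finset.mul_sum,
    sum_sign, sum_sign, ← Nat.cast_sum, ← Nat.cast_sum, ← sum_degree_edgesOf, ← sum_degree_edgesOf,
    sum_cubic_degree, Finset.univ_inter, Nat.cast_mul, Nat.cast_ofNat] at hle

/-- A large weight `K = 4 * |E| + 1` of the ends of degree `3` forces a light join to use every
cubic vertex only once. -/
theorem exists_sparse_join (hloop : ∀ e, ¬ (ends e).IsDiag)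
    (hcut : ∀ X : Set V, Odd (cutSize (edgesOf ends Finset.univ) X) →
      3 ≤ cutSize (edgesOf ends Finset.univ) X)
    (hR : ∀ e ∈ R, ∃ v ∈ ends e, v ∈ cubic ends) :
    ∃ J, IsJoin ends (boundary (edgesOf ends Finset.univ)) J ∧ SparseAtCubic ends J ∧
      3 * (J \ R).card + 2 * R.card ≤ Fintype.card E + 3 * (J ∩ R).card := by
  let K : ℝ := 4 * Fintype.card E + 1
  obtain ⟨J, hJ, hle⟩ := exists_join_weight_le (K := K) (by simp [K]) hcut hR
  have hone (v) (hv : v ∈ cubic ends) := hJ.one_le_degree hloop hv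
  have hcardJ : ((J \ R).card : ℝ) + (J ∩ R).card ≤ Fintype.card E := by
    exact_mod_cast (Finset.card_sdiff_add_card_inter J R).trans_le (Finset.card_le_univ J)
  have hcardR : ((Finset.univ \ R).card : ℝ) + R.card = Fintype.card E := by
    exact_mod_cast Finset.card_sdiff_add_card_eq_card (Finset.subset_univ R)
  have hsum : ∑ v ∈ cubic ends, degree (edgesOf ends J) v ≤ (cubic ends).card := by
    by_contra! hlt
    have hlt' : ((cubic ends).card + 1 : ℝ) ≤ (∑ v ∈ cubic ends, degree (edgesOf ends J) v : ℕ) :=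
      by exact_mod_cast hlt
    have hK : K * ((cubic ends).card + 1) ≤ K * _ := mul_le_mul_of_nonneg_left hlt' (by positivity)
    simp only [K] at hK hle
    linarith [(J \ R).card.cast_nonneg (α := ℝ), R.card.cast_nonneg (α := ℝ)]
  refine ⟨J, hJ, .of_sum_le hone hsum, ?_⟩
  have hge : ((cubic ends).card : ℝ) ≤ (∑ v ∈ cubic ends, degree (edgesOf ends J) v : ℕ) := by
    exact_mod_cast (Finset.card_eq_sum_ones _).trans_le (Finset.sum_le_sum hone)
  have hK : K * (cubic ends).card ≤ K * _ := mul_le_mul_of_nonneg_left hge (by positivity)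
  have hfinal : 3 * ((J \ R).card : ℝ) + 2 * R.card ≤ Fintype.card E + 3 * (J ∩ R).card := by
    linarith
  exact_mod_cast hfinal

/-- Deleting the removable edges of the join and doubling its other edges makes the multigraph
Eulerian. -/
theorem exists_tour_of_isRemovable [Nonempty V] (hG : ∀ e, ends e ∈ G.edgeSet)
    (hR : IsRemovable ends Finset.univ R)
    (hJ : IsJoin ends (boundary (edgesOf ends Finset.univ)) J) (hsparse : SparseAtCubic ends J) :
    ∃ (v : V) (w : G.Walk v v), (∀ u, u ∈ w.support) ∧
      w.length + (J ∩ R).card ≤ Fintype.card E + (J \ R).card := by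
  have heven : boundary (edgesOf ends (Finset.univ \ (J ∩ R)) + edgesOf ends (J \ R)) = 0 := by
    rw [boundary_add, boundary_sdiff (Finset.subset_univ _), ← Finset.sdiff_inter_self_left,
      boundary_sdiff Finset.inter_subset_left, hJ, add_self_eq_zero]
  have hconn := hR.edgeConn (J ∩ R) Finset.inter_subset_right
    (hsparse.mono Finset.inter_subset_left)
  have hinside : inside ends Finset.univ = Finset.univ := by simp [inside]
  rw [hinside, Finset.coe_univ] at hconn
  obtain ⟨v, w, hspan, hlen⟩ := exists_euler_tour (G := G)
    (by simp only [edgesOf, Multiset.mem_add, Multiset.mem_map]; grind) heven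
    (hconn.mono (Multiset.le_add_right _ _))
  refine ⟨v, w, hspan, ?_⟩
  have hcard := Finset.card_sdiff_add_card_eq_card (Finset.subset_univ (J ∩ R))
  simp only [edgesOf, Multiset.card_add, Multiset.card_map, Finset.card_val] at hlen
  rw [Finset.card_univ] at hcard
  lia

theorem two_le_degree (hn : 2 ≤ Fintype.card V) (hloop : ∀ e ∈ M, ¬ e.IsDiag)
    (hconn : EdgeConn 2 Set.univ M) (v : V) : 2 ≤ degree M v := by
  have : Nontrivial V := Fintype.one_lt_card_iff_nontrivial.1 hn
  obtain ⟨u, hu⟩ := exists_ne v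
  rw [← cutSize_singleton hloop]
  exact hconn _ ⟨v, trivial, rfl⟩ ⟨u, trivial, hu⟩

theorem exists_tour_of_indexed (hn : 2 ≤ Fintype.card V) (hG : ∀ e, ends e ∈ G.edgeSet)
    (hconn : EdgeConn 2 Set.univ (edgesOf ends Finset.univ))
    (hdeg : ∀ v, degree (edgesOf ends Finset.univ) v ≤ 3) :
    ∃ (v : V) (w : G.Walk v v), (∀ u, u ∈ w.support) ∧ 3 * w.length ≤ 4 * Fintype.card V := by
  have : Nonempty V := Fintype.card_pos_iff.1 (by lia)
  have hloop (e : E) : ¬ (ends e).IsDiag := G.not_isDiag_of_mem_edgeSet (hG e)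
  have hloop' : ∀ e ∈ edgesOf ends Finset.univ, ¬ e.IsDiag := not_isDiag_of_mem_edgesOf hloop
  have hconn₁ : EdgeConn 1 Set.univ (edgesOf ends Finset.univ) := fun Z h h' =>
    one_le_two.trans (hconn Z h h')
  by_cases hcubic : ∃ r, degree (edgesOf ends Finset.univ) r = 3
  · obtain ⟨r, hr⟩ := hcubic
    have hinside : inside ends Finset.univ = Finset.univ := by simp [inside]
    obtain ⟨R, hR, hcard⟩ := exists_isRemovable (S := Finset.univ) (r := r) hloop hdeg
      (by rwa [hinside, Finset.coe_univ]) (Finset.mem_univ r) (fun _ => hr)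
    obtain ⟨J, hJ, hsparse, hle⟩ := exists_sparse_join hloop hconn.three_le_of_odd
      (R := R) fun e he => by simpa only [mem_cubic] using hR.exists_cubic e he
    obtain ⟨v, w, hspan, hlen⟩ := exists_tour_of_isRemovable hG hR hJ hsparse
    refine ⟨v, w, hspan, ?_⟩
    rw [hinside, hr, Finset.card_univ, Finset.card_univ] at hcard
    lia
  · have htwo (v : V) : degree (edgesOf ends Finset.univ) v = 2 := by
      have h₂ := two_le_degree hn hloop' hconn v
      have h₃ := hdeg v
      have : degree (edgesOf ends Finset.univ) v ≠ 3 := fun h => hcubic ⟨v, h⟩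
      lia
    obtain ⟨v, w, hspan, hlen⟩ := exists_euler_tour (G := G) (by simpa [edgesOf] using hG)
      (funext fun v => by rw [boundary_apply hloop', htwo]; rfl) hconn₁
    refine ⟨v, w, hspan, ?_⟩
    have hsum := sum_degree_edgesOf_univ (F := Finset.univ) hloop
    simp only [htwo, Finset.sum_const, smul_eq_mul, Finset.card_univ] at hsum
    rw [edgesOf, Multiset.card_map, Finset.card_val, Finset.card_univ] at hlen
    lia

theorem exists_tour_of_degree_le_three (hn : 2 ≤ Fintype.card V) (hG : ∀ e ∈ M, e ∈ G.edgeSet)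
    (hconn : EdgeConn 2 Set.univ M) (hdeg : ∀ v, degree M v ≤ 3) :
    ∃ (v : V) (w : G.Walk v v), (∀ u, u ∈ w.support) ∧ 3 * w.length ≤ 4 * Fintype.card V := by
  have hM : edgesOf (fun e : M.ToType => e.1) Finset.univ = M := M.map_univ_coe
  exact exists_tour_of_indexed hn (ends := fun e : M.ToType => e.1)
    (fun e => hG _ (Multiset.coe_mem)) (by rwa [hM]) (by rwa [hM])

end Subcubic

/-! ### Splitting off and ears -/

section SplittingOff

variable {V : Type*} {M : Multiset (Sym2 V)} {W X Y : Set V} {a b c p u : V}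

theorem cutSize_inter_add_cutSize_union_le (M : Multiset (Sym2 V)) (X Y : Set V) :
    cutSize M (X ∩ Y) + cutSize M (X ∪ Y) ≤ cutSize M X + cutSize M Y := by
  induction M using Multiset.induction with
  | empty => simp
  | cons e M ih =>
    induction e with | _ y z =>
    simp only [cutSize_cons, crosses_mk, Set.mem_inter_iff, Set.mem_union]
    grind

theorem cutSize_sdiff_add_cutSize_sdiff_le (M : Multiset (Sym2 V)) (X Y : Set V) :
    cutSize M (X \ Y) + cutSize M (Y \ X) ≤ cutSize M X + cutSize M Y := by
  have h := cutSize_inter_add_cutSize_union_le M X Yᶜ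
  rwa [← Set.sdiff_eq, ← compl_compl (X ∪ Yᶜ), Set.compl_union, compl_compl, Set.inter_comm,
    ← Set.sdiff_eq, cutSize_compl, cutSize_compl] at h

theorem even_cutSize_inter_add_cutSize_sdiff (M : Multiset (Sym2 V)) (X Y : Set V) :
    Even (cutSize M (X ∩ Y) + cutSize M (X \ Y) + cutSize M X) := by
  induction M using Multiset.induction with
  | empty => simp
  | cons e M ih =>
    induction e with | _ y z =>
    simp only [cutSize_cons, crosses_mk, Set.mem_inter_iff, Set.mem_sdiff]
    grind

theorem cutSize_insert (hu : ∀ e ∈ M, u ∉ e) (X : Set V) :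
    cutSize M (insert u X) = cutSize M X :=
  Multiset.countP_congr rfl fun e he => by
    have := hu e he
    induction e with | _ y z =>
    simp only [Sym2.mem_iff, crosses_mk, Set.mem_insert_iff, eq_iff_iff] at this ⊢
    grind

theorem EdgeConn.exists_cut_of_split_fails
    (hconn : EdgeConn 2 W (s(u, a) ::ₘ s(u, b) ::ₘ s(u, c) ::ₘ s(u, p) ::ₘ M))
    (hM : ∀ e ∈ M, u ∉ e) (hu : u ∈ W) (hc : c ∈ W) (hp : p ∈ W)
    (hua : u ≠ a) (hub : u ≠ b) (huc : u ≠ c) (hup : u ≠ p)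
    (hfail : ¬ EdgeConn 2 W (s(a, b) ::ₘ s(u, c) ::ₘ s(u, p) ::ₘ M)) :
    ∃ X : Set V, u ∉ X ∧ a ∈ X ∧ b ∈ X ∧ c ∉ X ∧ p ∉ X ∧ cutSize M X ≤ 1 := by
  obtain ⟨X, huX, hX, hlt⟩ : ∃ X : Set V, u ∉ X ∧ (W ∩ X).Nonempty ∧
      cutSize (s(a, b) ::ₘ s(u, c) ::ₘ s(u, p) ::ₘ M) X < 2 := by
    simp only [EdgeConn, not_forall, not_le] at hfail
    obtain ⟨Z, hin, hout, hlt⟩ := hfail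
    by_cases huZ : u ∈ Z
    · exact ⟨Zᶜ, by simpa using huZ, hout, by rwa [cutSize_compl]⟩
    · exact ⟨Z, huZ, hin, hlt⟩
  have hcut := hconn X hX ⟨u, hu, huX⟩
  have hcut' (h : (W \ insert u X).Nonempty) := hconn (insert u X) ⟨u, hu, .inl rfl⟩ h
  have hcX (h : c ∉ X) := hcut' ⟨c, hc, by simp [huc.symm, h]⟩
  have hpX (h : p ∉ X) := hcut' ⟨p, hp, by simp [hup.symm, h]⟩
  simp only [cutSize_cons, crosses_mk, cutSize_insert hM, Set.mem_insert_iff, huX, hua.symm,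
    hub.symm, huc.symm, hup.symm] at hlt hcut hcX hpX
  exact ⟨X, huX, by grind⟩

/-- If both splittings failed, the two violated cuts `X` and `Y` would cross. By submodularity all
four regions would then have exactly one edge of `M` in their cut, so `X` and `Y` would have
none by parity. -/
theorem EdgeConn.split_off
    (hconn : EdgeConn 2 W (s(u, a) ::ₘ s(u, b) ::ₘ s(u, c) ::ₘ s(u, p) ::ₘ M))
    (hM : ∀ e ∈ M, u ∉ e) (hu : u ∈ W) (ha : a ∈ W) (hb : b ∈ W) (hc : c ∈ W) (hp : p ∈ W)
    (hua : u ≠ a) (hub : u ≠ b) (huc : u ≠ c) (hup : u ≠ p) :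
    EdgeConn 2 W (s(a, b) ::ₘ s(u, c) ::ₘ s(u, p) ::ₘ M) ∨
      EdgeConn 2 W (s(a, c) ::ₘ s(u, b) ::ₘ s(u, p) ::ₘ M) := by
  by_contra! hfail
  obtain ⟨X, huX, haX, hbX, hcX, hpX, hX⟩ :=
    hconn.exists_cut_of_split_fails hM hu hc hp hua hub huc hup hfail.1
  obtain ⟨Y, huY, haY, hcY, hbY, hpY, hY⟩ :=
    EdgeConn.exists_cut_of_split_fails (by rwa [Multiset.cons_swap s(u, c)])
      hM hu hb hp hua huc hub hup hfail.2
  have hinter := hconn (X ∩ Y) ⟨a, ha, haX, haY⟩ ⟨u, hu, fun h => huX h.1⟩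
  have hXY := hconn (X \ Y) ⟨b, hb, hbX, hbY⟩ ⟨u, hu, fun h => huX h.1⟩
  have hYX := hconn (Y \ X) ⟨c, hc, hcY, hcX⟩ ⟨u, hu, fun h => huY h.1⟩
  have hunion := hconn (insert u (X ∪ Y)) ⟨u, hu, .inl rfl⟩
    ⟨p, hp, by simp [hup.symm, hpX, hpY]⟩
  have hsub := cutSize_inter_add_cutSize_union_le M X Y
  have hsub' := cutSize_sdiff_add_cutSize_sdiff_le M X Y
  have heven := even_cutSize_inter_add_cutSize_sdiff M X Y
  have heven' := even_cutSize_inter_add_cutSize_sdiff M Y X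
  rw [Set.inter_comm] at heven'
  simp only [cutSize_cons, crosses_mk, Set.mem_inter_iff, Set.mem_sdiff, Set.mem_insert_iff,
    Set.mem_union, cutSize_insert hM, huX, huY, haX, haY, hbX, hbY, hcX, hcY, hpX, hpY,
    hua.symm, hub.symm, huc.symm, hup.symm, and_self, and_true, and_false, or_self, or_true,
    or_false, not_true_eq_false, not_false_eq_true, ↓reduceIte, add_zero, Nat.reduceLeDiff]
    at hinter hXY hYX hunion
  grind

end SplittingOff

section Ears

variable {V : Type*} {G : SimpleGraph V} {M N : Multiset (Sym2 V)} {W W' Z : Set V} {u v x : V}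

theorem one_le_cutSize_edges (w : G.Walk u v) (h : ¬ (u ∈ Z ↔ v ∈ Z)) : 1 ≤ cutSize w.edges Z := by
  induction w with
  | nil => exact absurd Iff.rfl h
  | cons _ _ ih =>
    rw [Walk.edges_cons, ← Multiset.cons_coe, cutSize_cons, crosses_mk]
    grind

theorem edgeConn_cycle (w : G.Walk u v) :
    EdgeConn 2 {x | x ∈ w.support} (s(u, v) ::ₘ (w.edges : Multiset (Sym2 V))) := by
  rintro Z ⟨x, hx, hxZ⟩ ⟨y, hy, hyZ⟩
  rw [cutSize_cons, crosses_mk]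
  by_cases huv : u ∈ Z ↔ v ∈ Z
  · obtain ⟨z, hz, huz⟩ : ∃ z ∈ w.support, ¬ (u ∈ Z ↔ z ∈ Z) := by
      by_cases hu : u ∈ Z
      · exact ⟨y, hy, by tauto⟩
      · exact ⟨x, hx, by tauto⟩
    have hsplit : (w.edges : Multiset (Sym2 V)) =
        ↑(w.takeUntil z hz).edges + ↑(w.dropUntil z hz).edges := by
      rw [Multiset.coe_add, ← Walk.edges_append, Walk.take_spec]
    have htake := one_le_cutSize_edges (w.takeUntil z hz) huz
    have hdrop := one_le_cutSize_edges (w.dropUntil z hz) (by tauto : ¬ (z ∈ Z ↔ v ∈ Z))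
    rw [hsplit, cutSize_add]
    omega
  · have := one_le_cutSize_edges w huv
    rw [if_pos (by tauto)]
    omega

theorem EdgeConn.replace_edge (hM : EdgeConn 2 W (s(u, v) ::ₘ M))
    (hN : EdgeConn 2 W' (s(u, v) ::ₘ N)) (hu : u ∈ W ∩ W') (hv : v ∈ W ∩ W') :
    EdgeConn 2 (W ∪ W') (M + N) := by
  rintro Z ⟨x, hx, hxZ⟩ ⟨y, hy, hyZ⟩
  have hMZ := hM Z
  have hNZ := hN Z
  simp only [cutSize_cons, crosses_mk] at hMZ hNZ
  rw [cutSize_add]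
  by_cases huv : u ∈ Z ↔ v ∈ Z
  · rw [if_neg (by tauto)] at hMZ hNZ
    by_cases hsep : (W ∩ Z).Nonempty ∧ (W \ Z).Nonempty
    · have := hMZ hsep.1 hsep.2
      omega
    · suffices 2 ≤ cutSize N Z by omega
      by_cases huZ : u ∈ Z
      · exact hNZ ⟨u, hu.2, huZ⟩
          ⟨y, hy.resolve_left fun h => hsep ⟨⟨u, hu.1, huZ⟩, y, h, hyZ⟩, hyZ⟩
      · exact hNZ ⟨x, hx.resolve_left fun h => hsep ⟨⟨x, h, hxZ⟩, u, hu.1, huZ⟩, hxZ⟩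
          ⟨u, hu.2, huZ⟩
  · rw [if_pos (by tauto)] at hMZ hNZ
    by_cases huZ : u ∈ Z
    · have hvZ : v ∉ Z := by tauto
      have := hMZ ⟨u, hu.1, huZ⟩ ⟨v, hv.1, hvZ⟩
      have := hNZ ⟨u, hu.2, huZ⟩ ⟨v, hv.2, hvZ⟩
      omega
    · have hvZ : v ∈ Z := by tauto
      have := hMZ ⟨v, hv.1, hvZ⟩ ⟨u, hu.1, huZ⟩
      have := hNZ ⟨v, hv.2, hvZ⟩ ⟨u, hu.2, huZ⟩
      omega

theorem degree_eq_zero (hM : ∀ e ∈ M, x ∉ e) : degree M x = 0 :=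
  Multiset.countP_eq_zero.2 hM

theorem degree_edges_of_notMem (w : G.Walk u v) (hx : x ∉ w.support) : degree w.edges x = 0 :=
  degree_eq_zero fun _ he hxe => hx (w.mem_support_of_mem_edges he hxe)

theorem degree_edges_start_le {w : G.Walk u v} (hw : w.IsPath) : degree w.edges u ≤ 1 := by
  cases w with
  | nil => exact zero_le_one
  | cons h w =>
    rw [Walk.edges_cons, ← Multiset.cons_coe, degree_cons,
      degree_edges_of_notMem w ((Walk.cons_isPath_iff h w).1 hw).2]
    split_ifs <;> omega

theorem degree_edges_end_le {w : G.Walk u v} (hw : w.IsPath) : degree w.edges v ≤ 1 := by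
  simpa [Walk.edges_reverse] using degree_edges_start_le hw.reverse

theorem degree_edges_le {w : G.Walk u v} (hw : w.IsPath) (x : V) : degree w.edges x ≤ 2 := by
  by_cases hx : x ∈ w.support
  · rw [← w.take_spec hx, Walk.edges_append, ← Multiset.coe_add, degree_add]
    exact add_le_add (degree_edges_end_le (hw.takeUntil hx))
      (degree_edges_start_le (hw.dropUntil hx))
  · simp [degree_edges_of_notMem w hx]

/-- `M` is a 2-edge-connected multigraph with vertex set `W`, each of whose edges is an edge of
`G`, possibly repeated. -/
structure IsFrame (G : SimpleGraph V) (W : Set V) (M : Multiset (Sym2 V)) : Prop where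
  adj : ∀ e ∈ M, e ∈ G.edgeSet
  subset : ∀ e ∈ M, ∀ x ∈ e, x ∈ W
  edgeConn : EdgeConn 2 W M

/-- `W` carries a 2-edge-connected multigraph supported by `G` of maximum degree at most three. -/
def HasSubcubicFrame (G : SimpleGraph V) (W : Set V) : Prop :=
  ∃ M, IsFrame G W M ∧ ∀ v, degree M v ≤ 3

theorem hasSubcubicFrame_pair (huv : G.Adj u v) : HasSubcubicFrame G {u, v} := by
  refine ⟨s(u, v) ::ₘ s(u, v) ::ₘ 0, ⟨?_, ?_, ?_⟩, fun x => ?_⟩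
  · simpa using huv
  · simp
  · rintro Z ⟨x, hx, hxZ⟩ ⟨y, hy, hyZ⟩
    simp only [cutSize_cons, crosses_mk, cutSize_zero]
    grind
  · simp only [degree_cons, degree_zero]
    split_ifs <;> omega

theorem IsFrame.adj_of_mem (hM : IsFrame G W M) (h : s(u, v) ∈ M) : G.Adj u v :=
  hM.adj _ h

theorem IsFrame.degree_of_notMem (hM : IsFrame G W M) (hx : x ∉ W) : degree M x = 0 :=
  degree_eq_zero fun e he hxe => hx (hM.subset e he x hxe)

/-- An ear of `W`: a path of `G` leaving `W`, of which only the ends lie in `W`. -/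
structure IsEar (W : Set V) (w : G.Walk u v) : Prop where
  isPath : w.IsPath
  start_mem : u ∈ W
  end_mem : v ∈ W
  inner : ∀ x ∈ w.support, x ∈ W → x = u ∨ x = v
  exists_new : ∃ x ∈ w.support, x ∉ W

theorem IsEar.reverse {w : G.Walk u v} (hw : IsEar W w) : IsEar W w.reverse where
  isPath := hw.isPath.reverse
  start_mem := hw.end_mem
  end_mem := hw.start_mem
  inner x hx hxW := (hw.inner x (by simpa using hx) hxW).symm
  exists_new := by simpa using hw.exists_new

theorem IsEar.lt_union {w : G.Walk u v} (hw : IsEar W w) : W < W ∪ {x | x ∈ w.support} :=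
  have ⟨_, hx, hxW⟩ := hw.exists_new
  ⟨Set.subset_union_left, fun h => hxW (h (.inr hx))⟩

theorem IsEar.exists_first {w : G.Walk u v} (hw : IsEar W w) (huv : u ≠ v) :
    ∃ p ∉ W, G.Adj u p ∧
      (w.edges : Multiset (Sym2 V)).filter (u ∈ ·) = {s(u, p)} := by
  cases w with
  | nil => exact absurd rfl huv
  | @cons _ p _ hup w =>
    have hu := ((Walk.cons_isPath_iff hup w).1 hw.isPath).2
    refine ⟨p, fun hp => ?_, hup, ?_⟩
    · obtain rfl : p = v := (hw.inner p (by simp) hp).resolve_left hup.ne'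
      obtain rfl : w = .nil :=
        (Walk.isPath_iff_nil.1 ((Walk.cons_isPath_iff hup w).1 hw.isPath).1).eq_nil
      obtain ⟨x, hx, hxW⟩ := hw.exists_new
      simp only [Walk.support_cons, Walk.support_nil, List.mem_cons, List.not_mem_nil,
        or_false] at hx
      rcases hx with rfl | rfl
      · exact hxW hw.start_mem
      · exact hxW hw.end_mem
    · rw [Walk.edges_cons, ← Multiset.cons_coe, Multiset.filter_cons_of_pos _ (by simp),
        Multiset.filter_eq_nil.2 fun e he hue => hu (w.mem_support_of_mem_edges he hue)]
      rfl

theorem isFrame_add_edges (hadj : ∀ e ∈ M, e ∈ G.edgeSet) (hsub : ∀ e ∈ M, ∀ x ∈ e, x ∈ W)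
    (hconn : EdgeConn 2 W (s(u, v) ::ₘ M)) (hu : u ∈ W) (hv : v ∈ W) (w : G.Walk u v) :
    IsFrame G (W ∪ {x | x ∈ w.support}) (M + ↑w.edges) where
  adj e he := (Multiset.mem_add.1 he).elim (hadj e) fun h => w.edges_subset_edgeSet h
  subset e he x hx := (Multiset.mem_add.1 he).imp (fun h => hsub e h x hx)
    fun h => w.mem_support_of_mem_edges h hx
  edgeConn := hconn.replace_edge (edgeConn_cycle w) ⟨hu, w.start_mem_support⟩
    ⟨hv, w.end_mem_support⟩

theorem IsFrame.add_ear (hM : IsFrame G W M) {w : G.Walk u v} (hw : IsEar W w) :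
    IsFrame G (W ∪ {x | x ∈ w.support}) (M + ↑w.edges) :=
  isFrame_add_edges hM.adj hM.subset (hM.edgeConn.mono (Multiset.le_cons_self _ _)) hw.start_mem
    hw.end_mem w

theorem IsFrame.degree_add_ear_le (hM : IsFrame G W M) (hdeg : ∀ x, degree M x ≤ 3)
    {w : G.Walk u v} (hw : IsEar W w) (hxu : x ≠ u) (hxv : x ≠ v) :
    degree (M + (w.edges : Multiset (Sym2 V))) x ≤ 3 := by
  rw [degree_add]
  by_cases hx : x ∈ W
  · rw [degree_edges_of_notMem w fun h => (hw.inner x h hx).elim hxu hxv]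
    exact hdeg x
  · rw [hM.degree_of_notMem hx]
    have := degree_edges_le hw.isPath x
    omega

theorem HasSubcubicFrame.replace_edge (hM : IsFrame G W (s(u, v) ::ₘ M))
    (hdeg : ∀ x, degree (s(u, v) ::ₘ M) x ≤ 3) {w : G.Walk u v} (hw : IsEar W w) :
    HasSubcubicFrame G (W ∪ {x | x ∈ w.support}) := by
  refine ⟨M + ↑w.edges, isFrame_add_edges (fun e he => hM.adj e (Multiset.mem_cons_of_mem he))
    (fun e he => hM.subset e (Multiset.mem_cons_of_mem he)) hM.edgeConn hw.start_mem hw.end_mem w,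
    fun x => ?_⟩
  have hx := hdeg x
  rw [degree_cons] at hx
  by_cases hxu : x = u
  · have := degree_edges_start_le hw.isPath
    simp only [hxu, degree_add, Sym2.mem_mk_left, if_true] at hx ⊢
    omega
  by_cases hxv : x = v
  · have := degree_edges_end_le hw.isPath
    simp only [hxv, degree_add, Sym2.mem_mk_right, if_true] at hx ⊢
    omega
  · refine le_trans ?_ (hM.degree_add_ear_le hdeg hw hxu hxv)
    exact degree_mono (add_le_add_left (Multiset.le_cons_self _ _) _)

end Ears

section Reductions

variable {V : Type*} {G : SimpleGraph V} {M F : Multiset (Sym2 V)} {W : Set V} {a b c p u : V}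

/-- `M'` is obtained from `M` by deleting or splitting off edges at `u`: its degree at `u` is at
most three, no other degree increases, and the edges at vertices not adjacent to `u` are
unchanged. -/
structure IsReduction (G : SimpleGraph V) (W : Set V) (u : V) (M M' : Multiset (Sym2 V)) :
    Prop where
  isFrame : IsFrame G W M'
  degree_self : degree M' u ≤ 3
  degree_le : ∀ x ≠ u, degree M' x ≤ degree M x
  filter_eq : ∀ x ≠ u, s(u, x) ∉ M → M'.filter (x ∈ ·) = M.filter (x ∈ ·)

theorem IsFrame.isReduction_delete
    (hM : IsFrame G W (s(u, a) ::ₘ s(u, a) ::ₘ s(u, a) ::ₘ s(u, p) ::ₘ M))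
    (hu : ∀ e ∈ M, u ∉ e) :
    IsReduction G W u (s(u, a) ::ₘ s(u, a) ::ₘ s(u, a) ::ₘ s(u, p) ::ₘ M)
      (s(u, a) ::ₘ s(u, a) ::ₘ s(u, p) ::ₘ M) where
  isFrame :=
    { adj := fun e he => hM.adj e (Multiset.mem_cons_of_mem he)
      subset := fun e he => hM.subset e (Multiset.mem_cons_of_mem he)
      edgeConn := fun Z hin hout => by
        have := hM.edgeConn Z hin hout
        simp only [cutSize_cons] at this ⊢
        grind }
  degree_self := by simp [degree_eq_zero hu]
  degree_le x _ := degree_mono (Multiset.le_cons_self _ _)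
  filter_eq x hxu hx := by
    simp only [Multiset.mem_cons, not_or, Sym2.congr_right] at hx
    exact (Multiset.filter_cons_of_neg _ (by simp [hxu, hx.1])).symm

theorem IsFrame.isReduction_split
    (hM : IsFrame G W (s(u, a) ::ₘ s(u, b) ::ₘ s(u, c) ::ₘ s(u, p) ::ₘ M))
    (hu : ∀ e ∈ M, u ∉ e) (hab : G.Adj a b)
    (hconn : EdgeConn 2 W (s(a, b) ::ₘ s(u, c) ::ₘ s(u, p) ::ₘ M)) :
    IsReduction G W u (s(u, a) ::ₘ s(u, b) ::ₘ s(u, c) ::ₘ s(u, p) ::ₘ M)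
      (s(a, b) ::ₘ s(u, c) ::ₘ s(u, p) ::ₘ M) := by
  obtain ⟨⟨hua, hub, hrest⟩, hsub⟩ : (G.Adj u a ∧ G.Adj u b ∧
      ∀ e ∈ s(u, c) ::ₘ s(u, p) ::ₘ M, e ∈ G.edgeSet) ∧ _ :=
    ⟨by simpa only [Multiset.forall_mem_cons, mem_edgeSet] using hM.adj, hM.subset⟩
  simp only [Multiset.forall_mem_cons, Sym2.mem_iff, forall_eq_or_imp, forall_eq] at hsub
  refine ⟨⟨?_, ?_, hconn⟩, ?_, fun x hxu => ?_, fun x hxu hx => ?_⟩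
  · exact Multiset.forall_mem_cons.2 ⟨hab, hrest⟩
  · simpa only [Multiset.forall_mem_cons, Sym2.mem_iff, forall_eq_or_imp, forall_eq]
      using ⟨⟨hsub.1.2, hsub.2.1.2⟩, hsub.2.2⟩
  · simp [degree_eq_zero hu, hua.ne, hub.ne]
  · simp only [degree_cons, Sym2.mem_iff, hxu, false_or]
    grind
  · simp only [Multiset.mem_cons, Sym2.congr_right, not_or] at hx
    simp [Multiset.filter_cons_of_neg, hxu, hx]

theorem IsFrame.exists_reduction_of_adj
    (hM : IsFrame G W (s(u, a) ::ₘ s(u, b) ::ₘ s(u, c) ::ₘ s(u, p) ::ₘ M))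
    (hu : ∀ e ∈ M, u ∉ e) (hab : G.Adj a b) (hac : G.Adj a c) :
    ∃ M', IsReduction G W u (s(u, a) ::ₘ s(u, b) ::ₘ s(u, c) ::ₘ s(u, p) ::ₘ M) M' := by
  have hmem {x : V} (hx : s(u, x) ∈ s(u, a) ::ₘ s(u, b) ::ₘ s(u, c) ::ₘ s(u, p) ::ₘ M) :
      x ∈ W ∧ u ≠ x :=
    ⟨hM.subset _ hx x (Sym2.mem_mk_right u x), (hM.adj_of_mem hx).ne⟩
  obtain ⟨ha, hua⟩ := hmem (x := a) (by simp)
  obtain ⟨hb, hub⟩ := hmem (x := b) (by simp)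
  obtain ⟨hc, huc⟩ := hmem (x := c) (by simp)
  obtain ⟨hp, hup⟩ := hmem (x := p) (by simp)
  have huW : u ∈ W := hM.subset s(u, a) (by simp) u (by simp)
  rcases hM.edgeConn.split_off hu huW ha hb hc hp hua hub huc hup with h | h
  · exact ⟨_, hM.isReduction_split hu hab h⟩
  · rw [Multiset.cons_swap s(u, b)] at hM ⊢
    exact ⟨_, hM.isReduction_split hu hac h⟩

theorem IsFrame.exists_reduction_of_pairwise
    (hM : IsFrame G W (s(u, a) ::ₘ s(u, b) ::ₘ s(u, c) ::ₘ s(u, p) ::ₘ M))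
    (hu : ∀ e ∈ M, u ∉ e) (hab : a ≠ b → G.Adj a b) (hac : a ≠ c → G.Adj a c)
    (hbc : b ≠ c → G.Adj b c) :
    ∃ M', IsReduction G W u (s(u, a) ::ₘ s(u, b) ::ₘ s(u, c) ::ₘ s(u, p) ::ₘ M) M' := by
  by_cases h : a = b
  · subst h
    by_cases h' : a = c
    · subst h'
      exact ⟨_, hM.isReduction_delete hu⟩
    · rw [Multiset.cons_swap s(u, a) s(u, c), Multiset.cons_swap s(u, a) s(u, c)] at hM ⊢
      exact hM.exists_reduction_of_adj hu (hac h').symm (hac h').symm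
  · by_cases h' : a = c
    · subst h'
      rw [Multiset.cons_swap s(u, a)] at hM ⊢
      exact hM.exists_reduction_of_adj hu (hab h).symm (hab h).symm
    · exact hM.exists_reduction_of_adj hu (hab h) (hac h')

theorem IsFrame.exists_reduction (hM : IsFrame G W M)
    (hF : M.filter (u ∈ ·) = F + {s(u, p)}) (hcard : F.card ≤ 3)
    (hadj : ∀ a b, s(u, a) ∈ F → s(u, b) ∈ F → a ≠ b → G.Adj a b) :
    ∃ M', IsReduction G W u M M' := by
  have hdeg : degree M u = F.card + 1 := by
    rw [degree, Multiset.countP_eq_card_filter, hF, Multiset.card_add, Multiset.card_singleton]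
  rcases hcard.lt_or_eq with hlt | h3
  · exact ⟨M, hM, by omega, fun _ _ => le_rfl, fun _ _ _ => rfl⟩
  have hFu {e} (he : e ∈ F) : u ∈ e :=
    (Multiset.mem_filter.1 (hF.symm ▸ Multiset.mem_add.2 (.inl he) : e ∈ M.filter (u ∈ ·))).2
  obtain ⟨e₁, e₂, e₃, rfl⟩ := Multiset.card_eq_three.1 h3
  obtain ⟨a, rfl⟩ := hFu (e := e₁) (by simp)
  obtain ⟨b, rfl⟩ := hFu (e := e₂) (by simp)
  obtain ⟨c, rfl⟩ := hFu (e := e₃) (by simp)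
  have hM_eq : M = s(u, a) ::ₘ s(u, b) ::ₘ s(u, c) ::ₘ s(u, p) ::ₘ M.filter (u ∉ ·) := by
    conv_lhs => rw [← Multiset.filter_add_not (u ∈ ·) M, hF]
    simp only [Multiset.insert_eq_cons, Multiset.cons_add, Multiset.singleton_add]
  rw [hM_eq] at hM ⊢
  exact hM.exists_reduction_of_pairwise (fun e he => (Multiset.mem_filter.1 he).2)
    (hadj a b (by simp) (by simp)) (hadj a c (by simp) (by simp)) (hadj b c (by simp) (by simp))

end Reductions

section ClawFree

variable {V : Type*} {G : SimpleGraph V} {M : Multiset (Sym2 V)} {W : Set V} {p u v : V}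

/-- Among any three neighbours of a vertex two are adjacent. -/
def ClawFree (G : SimpleGraph V) : Prop :=
  ∀ ⦃u a b c⦄, G.Adj u a → G.Adj u b → G.Adj u c → a ≠ b → a ≠ c → b ≠ c →
    G.Adj a b ∨ G.Adj a c ∨ G.Adj b c

/-- `A` induces a connected subgraph of `G` (or is empty), expressed through cuts. -/
def CutConnected (G : SimpleGraph V) (A : Set V) : Prop :=
  ∀ Z : Set V, (A ∩ Z).Nonempty → (A \ Z).Nonempty → ∃ a ∈ A ∩ Z, ∃ b ∈ A \ Z, G.Adj a b

/-- `A` induces a connected subgraph of `G` without a cut vertex. -/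
structure IsNonseparable (G : SimpleGraph V) (A : Set V) : Prop where
  cutConnected : CutConnected G A
  cutConnected_sdiff : ∀ v ∈ A, CutConnected G (A \ {v})

theorem IsNonseparable.exists_ear (hG : IsNonseparable G Set.univ) (hW : W.Nontrivial)
    (hWne : W ≠ Set.univ) : ∃ (u v : V) (w : G.Walk u v), u ≠ v ∧ IsEar W w := by
  obtain ⟨x, hx⟩ := (Set.ne_univ_iff_exists_notMem W).1 hWne
  obtain ⟨u, ⟨-, hu⟩, p, ⟨-, hp⟩, hup⟩ :=
    hG.cutConnected W (by simpa using hW.nonempty) ⟨x, trivial, hx⟩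
  obtain ⟨y, hy, hyu⟩ := hW.exists_ne u
  let D : Set V := {z | ∃ w : G.Walk p z, ∀ x ∈ w.support, x ∉ W}
  obtain ⟨q, ⟨-, w, hw⟩, v, ⟨⟨-, hvu⟩, hvD⟩, hqv⟩ :=
    hG.cutConnected_sdiff u trivial D
      ⟨p, ⟨trivial, hup.ne'⟩, .nil, by simpa using hp⟩
      ⟨y, ⟨trivial, hyu⟩, fun ⟨w, hw⟩ => hw y w.end_mem_support hy⟩
  have hv : v ∈ W := by
    refine not_not.1 fun hv => hvD ⟨w.concat hqv, fun x hx => ?_⟩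
    rw [Walk.support_concat, List.mem_append, List.mem_singleton] at hx
    exact hx.elim (hw x) fun h => h ▸ hv
  have hbypass (x) (hx : x ∈ w.bypass.support) : x ∉ W := hw x (w.support_bypass_subset_support hx)
  have hsupp (x) : x ∈ (Walk.cons hup (w.bypass.concat hqv)).support ↔
      x = u ∨ x ∈ w.bypass.support ∨ x = v := by
    simp [Walk.support_concat]
  refine ⟨u, v, .cons hup (w.bypass.concat hqv), Ne.symm hvu, ?_, hu, hv, fun x hx hxW => ?_,
    p, by simp, hp⟩
  · refine (Walk.cons_isPath_iff _ _).2
      ⟨w.bypass_isPath.concat (fun h => hbypass v h hv) hqv, fun h => ?_⟩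
    rw [Walk.support_concat, List.mem_append, List.mem_singleton] at h
    exact h.elim (fun h => hbypass u h hu) (Ne.symm hvu)
  · have := (hsupp x).1 hx
    have := hbypass x
    tauto

theorem notMem_of_isEar_of_maximal (hmax : Maximal (HasSubcubicFrame G) W) (hM : IsFrame G W M)
    (hdeg : ∀ x, degree M x ≤ 3) {w : G.Walk u v} (hw : IsEar W w) : s(u, v) ∉ M := by
  intro huv
  obtain ⟨M', rfl⟩ := Multiset.exists_cons_of_mem huv
  exact hmax.not_gt (HasSubcubicFrame.replace_edge hM hdeg hw) hw.lt_union

theorem ClawFree.adj_of_maximal (hclaw : ClawFree G) (hmax : Maximal (HasSubcubicFrame G) W)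
    (hM : IsFrame G W M) (hdeg : ∀ x, degree M x ≤ 3) (hp : p ∉ W) (hup : G.Adj u p) {a b : V}
    (ha : s(u, a) ∈ M) (hb : s(u, b) ∈ M) (hab : a ≠ b) : G.Adj a b := by
  have hmem {x} (hx : s(u, x) ∈ M) : x ∈ W := hM.subset _ hx x (Sym2.mem_mk_right u x)
  have hnotAdj {x} (hx : s(u, x) ∈ M) : ¬ G.Adj x p := by
    intro hxp
    have hpx : p ≠ x := fun h => hp (h ▸ hmem hx)
    have hear : IsEar W (.cons hup (.cons hxp.symm .nil) : G.Walk u x) :=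
      ⟨by simp [Walk.cons_isPath_iff, hup.ne, (hM.adj_of_mem hx).ne, hpx],
        hM.subset _ hx u (Sym2.mem_mk_left u x), hmem hx, by simp [hp], p, by simp, hp⟩
    exact notMem_of_isEar_of_maximal hmax hM hdeg hear hx
  rcases hclaw (hM.adj_of_mem ha) (hM.adj_of_mem hb) hup hab (fun h => hp (h ▸ hmem ha))
    (fun h => hp (h ▸ hmem hb)) with h | h | h
  · exact h
  · exact absurd h (hnotAdj ha)
  · exact absurd h (hnotAdj hb)

/-- Adding an ear to a maximal frame raises only the degrees of its two ends to four. By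
claw-freeness the old neighbours of each end are pairwise adjacent, so the two ends can be
reduced independently. -/
theorem ClawFree.not_isEar_of_maximal (hclaw : ClawFree G)
    (hmax : Maximal (HasSubcubicFrame G) W) (huv : u ≠ v) (w : G.Walk u v) : ¬ IsEar W w := by
  intro hw
  obtain ⟨M, hM, hdeg⟩ := hmax.prop
  have huvM := notMem_of_isEar_of_maximal hmax hM hdeg hw
  obtain ⟨p, hp, hup, hpw⟩ := hw.exists_first huv
  obtain ⟨q, hq, hvq, hqw⟩ := hw.reverse.exists_first huv.symm
  rw [Walk.edges_reverse, Multiset.coe_reverse] at hqw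
  have hmem {x : V} {e : Sym2 V} (he : e ∈ M.filter (x ∈ ·)) : e ∈ M := (Multiset.mem_filter.1 he).1
  have hcard (x : V) : (M.filter (x ∈ ·)).card ≤ 3 := by
    rw [← Multiset.countP_eq_card_filter]
    exact hdeg x
  have hnew : s(u, v) ∉ M + (w.edges : Multiset (Sym2 V)) := by
    refine fun h => (Multiset.mem_add.1 h).elim huvM fun h => ?_
    have : s(u, v) ∈ (w.edges : Multiset (Sym2 V)).filter (u ∈ ·) :=
      Multiset.mem_filter.2 ⟨h, Sym2.mem_mk_left u v⟩
    rw [hpw, Multiset.mem_singleton, Sym2.congr_right] at this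
    exact hp (this ▸ hw.end_mem)
  obtain ⟨M₁, hM₁⟩ := (hM.add_ear hw).exists_reduction
    (by rw [Multiset.filter_add, hpw]) (hcard u)
    fun a b ha hb => hclaw.adj_of_maximal hmax hM hdeg hp hup (hmem ha) (hmem hb)
  obtain ⟨M₂, hM₂⟩ := hM₁.isFrame.exists_reduction
    (by rw [hM₁.filter_eq v huv.symm hnew, Multiset.filter_add, hqw]) (hcard v)
    fun a b ha hb => hclaw.adj_of_maximal hmax hM hdeg hq hvq (hmem ha) (hmem hb)
  refine hmax.not_gt ⟨M₂, hM₂.isFrame, fun x => ?_⟩ hw.lt_union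
  by_cases hxv : x = v
  · exact hxv ▸ hM₂.degree_self
  refine (hM₂.degree_le x hxv).trans ?_
  by_cases hxu : x = u
  · exact hxu ▸ hM₁.degree_self
  exact (hM₁.degree_le x hxu).trans (hM.degree_add_ear_le hdeg hw hxu hxv)

theorem ClawFree.hasSubcubicFrame_univ [Finite V] (hclaw : ClawFree G)
    (hG : IsNonseparable G Set.univ) (huv : G.Adj u v) : HasSubcubicFrame G Set.univ := by
  obtain ⟨W, hle, hmax⟩ := Finite.exists_le_maximal (hasSubcubicFrame_pair huv)
  have hW : W.Nontrivial :=
    ⟨u, hle (Set.mem_insert u {v}), v, hle (Set.mem_insert_of_mem u rfl), huv.ne⟩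
  obtain rfl : W = Set.univ := by
    by_contra hne
    obtain ⟨x, y, w, hxy, hw⟩ := hG.exists_ear hW hne
    exact hclaw.not_isEar_of_maximal hmax hxy w hw
  exact hmax.prop

end ClawFree

section Nonseparable

variable {V : Type*} {G : SimpleGraph V} {Z : Set V} {u v z : V}

theorem IsNonseparable.exists_two_crossing (hG : IsNonseparable G Set.univ) (hin : Z.Nonempty)
    (hout : Zᶜ.Nonempty) (hthird : ∀ a b : V, ∃ z, z ≠ a ∧ z ≠ b) :
    ∃ e ∈ G.edgeSet, ∃ f ∈ G.edgeSet, e ≠ f ∧ Crosses Z e ∧ Crosses Z f := by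
  obtain ⟨a, ⟨-, ha⟩, b, ⟨-, hb⟩, hab⟩ := hG.cutConnected Z (by simpa using hin)
    (by simpa [Set.compl_eq_univ_sdiff] using hout)
  obtain ⟨z, hza, hzb⟩ := hthird a b
  have hba : b ≠ a := hab.ne'
  obtain ⟨x, hx, c, ⟨⟨-, hcx⟩, hc⟩, d, ⟨⟨-, hdx⟩, hd⟩, hcd⟩ : ∃ x ∈ s(a, b),
      ∃ c ∈ (Set.univ \ {x}) ∩ Z, ∃ d ∈ (Set.univ \ {x}) \ Z, G.Adj c d := by
    by_cases hz : z ∈ Z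
    · exact ⟨a, Sym2.mem_mk_left a b, hG.cutConnected_sdiff a trivial Z
        ⟨z, ⟨trivial, hza⟩, hz⟩ ⟨b, ⟨trivial, hba⟩, hb⟩⟩
    · exact ⟨b, Sym2.mem_mk_right a b, hG.cutConnected_sdiff b trivial Z
        ⟨a, ⟨trivial, hba.symm⟩, ha⟩ ⟨z, ⟨trivial, hzb⟩, hz⟩⟩
  refine ⟨s(a, b), hab, s(c, d), hcd, fun h => ?_, crosses_mk.2 (.inl ⟨ha, hb⟩),
    crosses_mk.2 (.inl ⟨hc, hd⟩)⟩
  rw [h, Sym2.mem_iff] at hx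
  exact hx.elim (Ne.symm hcx) (Ne.symm hdx)

theorem degree_edgeFinset [Fintype V] (v : V) :
    degree G.edgeFinset.val v = {u | G.Adj v u}.ncard := by
  rw [degree, Multiset.countP_eq_card_filter, ← Finset.filter_val, Finset.card_val,
    ← incidenceFinset_eq_filter, card_incidenceFinset_eq_degree, ← card_neighborSet_eq_degree,
    ← Nat.card_eq_fintype_card, Nat.card_coe_set_eq]
  rfl

theorem IsNonseparable.hasSubcubicFrame_univ [Finite V] (hG : IsNonseparable G Set.univ)
    (hdeg : ∀ v, {u | G.Adj v u}.ncard ≤ 3) (huv : G.Adj u v) :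
    HasSubcubicFrame G Set.univ := by
  have := Fintype.ofFinite V
  by_cases h : ∃ z, z ≠ u ∧ z ≠ v
  · obtain ⟨z, hzu, hzv⟩ := h
    have hthird (a b : V) : ∃ z, z ≠ a ∧ z ≠ b := by
      have hcard := Finset.card_le_two (a := a) (b := b) |>.trans_lt <|
        Fintype.two_lt_card_iff.2 ⟨u, v, z, huv.ne, hzu.symm, hzv.symm⟩
      obtain ⟨z, -, hz⟩ := Finset.exists_mem_notMem_of_card_lt_card hcard
      exact ⟨z, by simpa using hz⟩
    refine ⟨G.edgeFinset.val, ⟨fun e he => by simpa using he, fun _ _ _ _ => trivial, ?_⟩,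
      fun x => (degree_edgeFinset x).trans_le (hdeg x)⟩
    intro Z hin hout
    obtain ⟨e, he, f, hf, hne, heZ, hfZ⟩ := hG.exists_two_crossing (by simpa using hin)
      (by rwa [Set.compl_eq_univ_sdiff]) hthird
    rw [cutSize, Multiset.countP_eq_card_filter, ← Finset.filter_val, Finset.card_val]
    exact Finset.one_lt_card.2 ⟨e, by simp [heZ, he], f, by simp [hfZ, hf], hne⟩
  · have hpair : {u, v} = Set.univ :=
      Set.eq_univ_iff_forall.2 fun z => by
        by_contra hz
        exact h ⟨z, not_or.1 hz⟩
    exact hpair ▸ hasSubcubicFrame_pair huv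

theorem IsNonseparable.exists_tour [Fintype V] (hG : IsNonseparable G Set.univ)
    (hn : 2 ≤ Fintype.card V)
    (hclass : (∀ v, {u | G.Adj v u}.ncard ≤ 3) ∨ ClawFree G) :
    ∃ (v : V) (w : G.Walk v v), (∀ u, u ∈ w.support) ∧ 3 * w.length ≤ 4 * Fintype.card V := by
  obtain ⟨x, y, hxy⟩ := Fintype.one_lt_card_iff.1 hn
  obtain ⟨u, -, v, -, huv⟩ := hG.cutConnected {x} ⟨x, trivial, rfl⟩ ⟨y, trivial, hxy.symm⟩
  obtain ⟨M, hM, hdeg⟩ : HasSubcubicFrame G Set.univ :=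
    hclass.elim (fun h => hG.hasSubcubicFrame_univ h huv) fun h => h.hasSubcubicFrame_univ hG huv
  exact exists_tour_of_degree_le_three hn hM.adj hM.edgeConn hdeg

end Nonseparable

/-! ### Gluing along cut vertices -/

section InducedConnectivity

variable {V : Type*} {G : SimpleGraph V} {A B : Set V}

theorem CutConnected.preimage_val (hB : CutConnected G B) (hBA : B ⊆ A) :
    CutConnected (G.induce A) (Subtype.val ⁻¹' B) := by
  rintro Z ⟨x, hx, hxZ⟩ ⟨y, hy, hyZ⟩
  obtain ⟨_, ⟨haB, a, ha, rfl⟩, b, ⟨hbB, hb⟩, hab⟩ := hB (Subtype.val '' Z)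
    ⟨x, hx, x, hxZ, rfl⟩ ⟨y, hy, fun ⟨z, hz, hzy⟩ => hyZ (Subtype.ext hzy ▸ hz)⟩
  exact ⟨a, ⟨haB, ha⟩, ⟨b, hBA hbB⟩, ⟨hbB, fun h => hb ⟨_, h, rfl⟩⟩, hab⟩

theorem preconnected_iff_cutConnected : G.Preconnected ↔ CutConnected G Set.univ := by
  refine ⟨?_, fun h x y => ?_⟩
  · rintro h Z ⟨x, -, hx⟩ ⟨y, -, hy⟩
    obtain ⟨w⟩ := h x y
    obtain ⟨d, -, hfst, hsnd⟩ := w.exists_boundary_dart Z hx hy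
    exact ⟨d.fst, ⟨trivial, hfst⟩, d.snd, ⟨trivial, hsnd⟩, d.adj⟩
  · by_contra hxy
    obtain ⟨a, ⟨-, ha⟩, b, ⟨-, hb⟩, hab⟩ :=
      h {z | G.Reachable x z} ⟨x, trivial, .refl x⟩ ⟨y, trivial, hxy⟩
    exact hb (ha.trans hab.reachable)

theorem CutConnected.preconnected_induce (hA : CutConnected G A) : (G.induce A).Preconnected :=
  preconnected_iff_cutConnected.2 (by simpa using hA.preimage_val subset_rfl)

theorem IsNonseparable.induce (hA : IsNonseparable G A) :
    IsNonseparable (G.induce A) Set.univ where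
  cutConnected := by simpa using hA.cutConnected.preimage_val subset_rfl
  cutConnected_sdiff v _ := by
    convert (hA.cutConnected_sdiff v v.2).preimage_val Set.sdiff_subset using 1
    ext u
    simp [Subtype.ext_iff]

theorem IsNonseparable.exists_isBlock [Finite V] (hA : IsNonseparable G A) (hne : A.Nonempty) :
    ∃ B, A ⊆ B ∧ IsBlock G B := by
  have := hne.to_subtype
  obtain ⟨B, hAB, hB⟩ := Finite.exists_le_maximal
    (p := fun B : Set V => (G.induce B).Connected ∧ ∀ v ∈ B, (G.induce (B \ {v})).Preconnected)
    ⟨⟨hA.cutConnected.preconnected_induce⟩, fun v hv =>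
      (hA.cutConnected_sdiff v hv).preconnected_induce⟩
  exact ⟨B, hAB, hB.prop.1, hB.prop.2, fun B' hBB' hconn hsdiff =>
    (hB.eq_of_subset ⟨hconn, hsdiff⟩ hBB').symm⟩

theorem ClawFree.of_embedding {V' : Type*} {H : SimpleGraph V'} (hG : ClawFree G) (f : H ↪g G) :
    ClawFree H := by
  intro u a b c hua hub huc hab hac hbc
  simpa only [f.map_adj_iff] using hG (f.map_adj_iff.2 hua) (f.map_adj_iff.2 hub)
    (f.map_adj_iff.2 huc) (f.injective.ne hab) (f.injective.ne hac) (f.injective.ne hbc)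

theorem clawFree_of_isEmpty (h : IsEmpty (completeBipartiteGraph (Fin 1) (Fin 3) ↪g G)) :
    ClawFree G := by
  intro u a b c hua hub huc hab hac hbc
  by_contra! hclaw
  obtain ⟨nab, nac, nbc⟩ := hclaw
  have hinj : (Sum.elim (fun _ => u) ![a, b, c] : Fin 1 ⊕ Fin 3 → V).Injective := by
    have := hua.ne
    have := hub.ne
    have := huc.ne
    rintro (i | i) (j | j) hij <;> fin_cases i <;> fin_cases j <;> simp_all
  refine h.false ⟨⟨_, hinj⟩, fun {i j} => ?_⟩
  change G.Adj (Sum.elim _ _ i) (Sum.elim _ _ j) ↔ _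
  have := mt G.adj_symm nab
  have := mt G.adj_symm nac
  have := mt G.adj_symm nbc
  rcases i with i | i <;> rcases j with j | j <;> fin_cases i <;> fin_cases j <;>
    simp [*, Adj.symm]

/-- The subgraph of `G` induced by `A` has maximum degree at most three or is claw-free. -/
def IsSubcubicOrClawFree (G : SimpleGraph V) (A : Set V) : Prop :=
  (∀ v ∈ A, {u | u ∈ A ∧ G.Adj v u}.ncard ≤ 3) ∨ ClawFree (G.induce A)

theorem IsSubcubicOrClawFree.mono [Finite V] (hB : IsSubcubicOrClawFree G B) (hAB : A ⊆ B) :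
    IsSubcubicOrClawFree G A :=
  hB.imp
    (fun h v hv => (Set.ncard_le_ncard (Set.inter_subset_inter_left _ hAB)).trans (h v (hAB hv)))
    fun h => h.of_embedding (G.induceHomOfLE hAB)

theorem IsNonseparable.exists_tour_of_nontrivial [Finite V] (hA : IsNonseparable G A)
    (hnt : A.Nontrivial) (hclass : IsSubcubicOrClawFree G A) :
    ∃ (v : V) (w : G.Walk v v), (∀ u, u ∈ w.support ↔ u ∈ A) ∧ 3 * w.length ≤ 4 * A.ncard := by
  have := Fintype.ofFinite V
  have hcard : Fintype.card A = A.ncard := by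
    rw [← Nat.card_eq_fintype_card, Nat.card_coe_set_eq]
  obtain ⟨v, w, hw, hlen⟩ := hA.induce.exists_tour
    (hcard ▸ (Set.one_lt_ncard_iff_nontrivial).2 hnt)
    (hclass.imp_left fun h v => by
      refine le_trans ?_ (h v v.2)
      exact Set.ncard_le_ncard_of_injOn Subtype.val (fun u hu => ⟨u.2, hu⟩)
        Subtype.val_injective.injOn)
  refine ⟨_, w.map (Embedding.induce A).toHom, fun u => ?_, by rwa [Walk.length_map, ← hcard]⟩
  rw [Walk.support_map, List.mem_map]
  exact ⟨fun ⟨x, _, hx⟩ => hx ▸ x.2, fun hu => ⟨⟨u, hu⟩, hw _, rfl⟩⟩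

end InducedConnectivity

section FractionalTours

variable {V : Type*} {G : SimpleGraph V} {A A₁ A₂ : Set V} {v : V}

/-- `A₁` and `A₂` form a separation of `G[A₁ ∪ A₂]` at the vertex `v`: they share only `v`, and
every edge between them is incident to `v`. -/
structure IsSeparation (G : SimpleGraph V) (v : V) (A₁ A₂ : Set V) : Prop where
  inter_eq : A₁ ∩ A₂ = {v}
  eq_or_eq : ∀ a ∈ A₁, ∀ b ∈ A₂, G.Adj a b → a = v ∨ b = v

theorem IsSeparation.symm (h : IsSeparation G v A₁ A₂) : IsSeparation G v A₂ A₁ :=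
  ⟨Set.inter_comm A₁ A₂ ▸ h.inter_eq, fun a ha b hb hab => (h.eq_or_eq b hb a ha hab.symm).symm⟩

theorem IsSeparation.mem_left (h : IsSeparation G v A₁ A₂) : v ∈ A₁ :=
  Set.inter_subset_left (h.inter_eq.ge rfl)

theorem IsSeparation.mem_right (h : IsSeparation G v A₁ A₂) : v ∈ A₂ :=
  h.symm.mem_left

theorem IsSeparation.eq_of_mem (h : IsSeparation G v A₁ A₂) {u : V} (h₁ : u ∈ A₁) (h₂ : u ∈ A₂) :
    u = v :=
  h.inter_eq.le ⟨h₁, h₂⟩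

theorem IsSeparation.ssubset_union_left (h : IsSeparation G v A₁ A₂) (h₂ : A₂.Nontrivial) :
    A₁ ⊂ A₁ ∪ A₂ := by
  obtain ⟨u, hu, huv⟩ := h₂.exists_ne v
  exact Set.ssubset_iff_exists.2
    ⟨Set.subset_union_left, u, .inr hu, fun h₁ => huv (h.eq_of_mem h₁ hu)⟩

theorem exists_isSeparation (hv : v ∈ A) (hA : ¬ CutConnected G (A \ {v})) :
    ∃ A₁ A₂, A₁ ∪ A₂ = A ∧ A₁.Nontrivial ∧ A₂.Nontrivial ∧ IsSeparation G v A₁ A₂ := by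
  simp only [CutConnected, not_forall] at hA
  obtain ⟨Z, ⟨p, ⟨hpA, hpv⟩, hpZ⟩, ⟨q, ⟨hqA, hqv⟩, hqZ⟩, hZ⟩ := hA
  refine ⟨insert v (A ∩ Z), insert v (A \ Z), ?_, ⟨p, by simp_all, v, by simp, hpv⟩,
    ⟨q, by simp_all, v, by simp, hqv⟩, ?_, ?_⟩
  · rw [← Set.insert_union_distrib, Set.inter_union_sdiff, Set.insert_eq_of_mem hv]
  · rw [← Set.insert_inter_distrib, Set.inter_sdiff_distrib_left]
    ext u
    simp only [Set.mem_insert_iff, Set.mem_inter_iff, Set.mem_sdiff, Set.mem_singleton_iff]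
    tauto
  · rintro a (rfl | ha) b (rfl | hb) hab
    · exact .inl rfl
    · exact .inl rfl
    · exact .inr rfl
    · by_contra! hne
      exact hZ ⟨a, ⟨⟨ha.1, hne.1⟩, ha.2⟩, b, ⟨⟨hb.1, hne.2⟩, hb.2⟩, hab⟩

variable [Fintype V] {x : Sym2 V → ℝ}

/-- The edges of the subgraph of `G` induced by `A`. -/
def edgesIn (G : SimpleGraph V) (A : Set V) : Finset (Sym2 V) :=
  {e ∈ G.edgeFinset | ∀ v ∈ e, v ∈ A}

@[simp] theorem mk_mem_edgesIn {a b : V} : s(a, b) ∈ edgesIn G A ↔ G.Adj a b ∧ a ∈ A ∧ b ∈ A := by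
  simp [edgesIn]

/-- Feasibility for the Held-Karp relaxation of the subgraph of `G` induced by `A`, with the
edge weights indexed by pairs of vertices of `G`. -/
structure IsFractionalTour (G : SimpleGraph V) (A : Set V) (x : Sym2 V → ℝ) : Prop where
  nonneg : ∀ e, 0 ≤ x e
  two_le_cut : ∀ Z : Set V, (A ∩ Z).Nonempty → (A \ Z).Nonempty →
    2 ≤ ∑ e ∈ edgesIn G A with Crosses Z e, x e

theorem CutConnected.isFractionalTour (hA : CutConnected G A) :
    IsFractionalTour G A fun _ => 2 where
  nonneg _ := zero_le_two
  two_le_cut Z hin hout := by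
    obtain ⟨a, ⟨haA, haZ⟩, b, ⟨hbA, hbZ⟩, hab⟩ := hA Z hin hout
    exact Finset.single_le_sum (f := fun _ : Sym2 V => (2 : ℝ)) (fun _ _ => zero_le_two)
      (Finset.mem_filter.2 ⟨mk_mem_edgesIn.2 ⟨hab, haA, hbA⟩, crosses_mk.2 (.inl ⟨haZ, hbZ⟩)⟩)

theorem IsFractionalTour.cutConnected (hx : IsFractionalTour G A x) : CutConnected G A := by
  intro Z hin hout
  obtain ⟨e, he, -⟩ := Finset.exists_ne_zero_of_sum_ne_zero
    (zero_lt_two.trans_le (hx.two_le_cut Z hin hout)).ne'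
  induction e with | _ a b =>
  obtain ⟨⟨hab, ha, hb⟩, ⟨haZ, hbZ⟩ | ⟨haZ, hbZ⟩⟩ := by
    simpa only [Finset.mem_filter, mk_mem_edgesIn, crosses_mk] using he
  · exact ⟨a, ⟨ha, haZ⟩, b, ⟨hb, hbZ⟩, hab⟩
  · exact ⟨b, ⟨hb, hbZ⟩, a, ⟨ha, haZ⟩, hab.symm⟩

theorem IsFractionalTour.ncard_le_sum (hx : IsFractionalTour G A x) (hA : A.Nontrivial) :
    (A.ncard : ℝ) ≤ ∑ e ∈ edgesIn G A, x e := by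
  have hdegree (v : V) (hv : v ∈ A) : 2 ≤ ∑ e ∈ edgesIn G A with Crosses {v} e, x e := by
    obtain ⟨u, hu, huv⟩ := hA.exists_ne v
    exact hx.two_le_cut {v} ⟨v, hv, rfl⟩ ⟨u, hu, huv⟩
  have hends (e : Sym2 V) : ({v ∈ A.toFinset | Crosses {v} e} : Finset V).card ≤ 2 := by
    induction e with | _ a b =>
    refine (Finset.card_le_card fun v hv => ?_).trans (Finset.card_le_two (a := a) (b := b))
    simpa using ((crosses_singleton _).1 (Finset.mem_filter.1 hv).2).1
  have : 2 * (A.ncard : ℝ) ≤ 2 * ∑ e ∈ edgesIn G A, x e :=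
    calc 2 * (A.ncard : ℝ) = ∑ _ ∈ A.toFinset, (2 : ℝ) := by
          rw [Finset.sum_const, nsmul_eq_mul, mul_comm, Set.ncard_eq_toFinset_card']
      _ ≤ ∑ v ∈ A.toFinset, ∑ e ∈ edgesIn G A with Crosses {v} e, x e :=
          Finset.sum_le_sum fun v hv => hdegree v (Set.mem_toFinset.1 hv)
      _ = ∑ e ∈ edgesIn G A, ∑ v ∈ A.toFinset with Crosses {v} e, x e := by
          simp only [Finset.sum_filter]
          exact Finset.sum_comm
      _ ≤ ∑ e ∈ edgesIn G A, 2 * x e := by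
          refine Finset.sum_le_sum fun e _ => ?_
          rw [Finset.sum_const, nsmul_eq_mul]
          exact mul_le_mul_of_nonneg_right (mod_cast hends e) (hx.nonneg e)
      _ = 2 * ∑ e ∈ edgesIn G A, x e := (Finset.mul_sum ..).symm
  linarith

theorem IsSeparation.sum_edgesIn_union (h : IsSeparation G v A₁ A₂) (x : Sym2 V → ℝ) :
    ∑ e ∈ edgesIn G (A₁ ∪ A₂), x e = ∑ e ∈ edgesIn G A₁, x e + ∑ e ∈ edgesIn G A₂, x e := by
  rw [← Finset.sum_union]
  · congr 1
    ext e
    induction e with | _ a b =>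
    have := h.eq_or_eq a
    have := h.eq_or_eq b
    have := h.mem_left
    have := h.mem_right
    simp only [Finset.mem_union, mk_mem_edgesIn, Set.mem_union]
    grind [SimpleGraph.adj_comm]
  · refine Finset.disjoint_left.2 fun e he₁ he₂ => ?_
    induction e with | _ a b =>
    obtain ⟨hab, ha₁, hb₁⟩ := mk_mem_edgesIn.1 he₁
    obtain ⟨-, ha₂, hb₂⟩ := mk_mem_edgesIn.1 he₂
    exact hab.ne ((h.eq_of_mem ha₁ ha₂).trans (h.eq_of_mem hb₁ hb₂).symm)

theorem IsFractionalTour.left (h : IsSeparation G v A₁ A₂)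
    (hx : IsFractionalTour G (A₁ ∪ A₂) x) : IsFractionalTour G A₁ x where
  nonneg := hx.nonneg
  two_le_cut := by
    have hcut (Z : Set V) (hv : v ∉ Z) (hin : (A₁ ∩ Z).Nonempty) (hout : (A₁ \ Z).Nonempty) :
        2 ≤ ∑ e ∈ edgesIn G A₁ with Crosses Z e, x e := by
      obtain ⟨p, hp, hpZ⟩ := hin
      obtain ⟨q, hq, hqZ⟩ := hout
      refine (hx.two_le_cut (Z \ A₂)
        ⟨p, .inl hp, hpZ, fun hp₂ => hv (h.eq_of_mem hp hp₂ ▸ hpZ)⟩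
        ⟨q, .inl hq, fun hq' => hqZ hq'.1⟩).trans
        (Finset.sum_le_sum_of_subset_of_nonneg (fun e he => ?_) fun e _ _ => hx.nonneg e)
      induction e with | _ a b =>
      have := h.eq_or_eq a
      have := h.eq_or_eq b
      have := h.mem_left
      have := @h.eq_of_mem
      simp only [Finset.mem_filter, mk_mem_edgesIn, crosses_mk, Set.mem_union,
        Set.mem_sdiff] at he ⊢
      grind [SimpleGraph.adj_comm]
    intro Z hin hout
    by_cases hv : v ∈ Z
    · simpa only [crosses_compl] using hcut Zᶜ (not_not.2 hv) hout (by rwa [Set.sdiff_compl])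
    · exact hcut Z hv hin hout

theorem IsFractionalTour.right (h : IsSeparation G v A₁ A₂)
    (hx : IsFractionalTour G (A₁ ∪ A₂) x) : IsFractionalTour G A₂ x :=
  .left h.symm (Set.union_comm A₁ A₂ ▸ hx)

/-- The integrality gap of the Held-Karp relaxation of the subgraph of `G` induced by `A` is at
most `4 / 3`, witnessed by one closed walk for all fractional tours. -/
def HasShortTour (G : SimpleGraph V) (A : Set V) : Prop :=
  ∃ (v : V) (w : G.Walk v v), (∀ u, u ∈ w.support ↔ u ∈ A) ∧
    ∀ x, IsFractionalTour G A x → 3 * (w.length : ℝ) ≤ 4 * ∑ e ∈ edgesIn G A, x e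

theorem IsNonseparable.hasShortTour (hA : IsNonseparable G A) (hnt : A.Nontrivial)
    (hclass : IsSubcubicOrClawFree G A) : HasShortTour G A := by
  obtain ⟨v, w, hw, hlen⟩ := hA.exists_tour_of_nontrivial hnt hclass
  refine ⟨v, w, hw, fun x hx => ?_⟩
  calc 3 * (w.length : ℝ) ≤ 4 * A.ncard := mod_cast hlen
    _ ≤ 4 * ∑ e ∈ edgesIn G A, x e := by linarith [hx.ncard_le_sum hnt]

theorem IsSeparation.hasShortTour_union (h : IsSeparation G v A₁ A₂) (h₁ : HasShortTour G A₁)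
    (h₂ : HasShortTour G A₂) : HasShortTour G (A₁ ∪ A₂) := by
  obtain ⟨v₁, w₁, hw₁, hlen₁⟩ := h₁
  obtain ⟨v₂, w₂, hw₂, hlen₂⟩ := h₂
  refine ⟨v, (w₁.rotate v ((hw₁ v).2 h.mem_left)).append (w₂.rotate v ((hw₂ v).2 h.mem_right)),
    fun u => ?_, fun x hx => ?_⟩
  · rw [Walk.mem_support_append_iff, Walk.mem_support_rotate_iff, Walk.mem_support_rotate_iff,
      hw₁, hw₂, Set.mem_union]
  · rw [Walk.length_append, Walk.length_rotate, Walk.length_rotate, h.sum_edgesIn_union]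
    push_cast
    linarith [hlen₁ x (hx.left h), hlen₂ x (hx.right h)]

theorem CutConnected.hasShortTour
    (hclass : ∀ B, B.Nontrivial → IsNonseparable G B → IsSubcubicOrClawFree G B)
    (hA : CutConnected G A) (hnt : A.Nontrivial) : HasShortTour G A := by
  induction hn : A.ncard using Nat.strong_induction_on generalizing A with | _ n ih =>
  subst hn
  by_cases hsdiff : ∀ v ∈ A, CutConnected G (A \ {v})
  · exact IsNonseparable.hasShortTour ⟨hA, hsdiff⟩ hnt (hclass A hnt ⟨hA, hsdiff⟩)
  · push Not at hsdiff
    obtain ⟨v, hv, hcut⟩ := hsdiff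
    obtain ⟨A₁, A₂, rfl, hnt₁, hnt₂, hsep⟩ := exists_isSeparation hv hcut
    have hlt₁ := Set.ncard_lt_ncard (hsep.ssubset_union_left hnt₂)
    have hlt₂ := Set.ncard_lt_ncard (Set.union_comm A₂ A₁ ▸ hsep.symm.ssubset_union_left hnt₁)
    exact hsep.hasShortTour_union
      (ih _ hlt₁ (hA.isFractionalTour.left hsep).cutConnected hnt₁ rfl)
      (ih _ hlt₂ (hA.isFractionalTour.right hsep).cutConnected hnt₂ rfl)

theorem hkValue_eq_sum (x : Sym2 V → ℝ) : hkValue G x = ∑ e ∈ edgesIn G Set.univ, x e := by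
  rw [hkValue, ← finsum_mem_coe_finset]
  exact finsum_mem_congr (by simp [edgesIn]) fun _ _ => rfl

theorem hkCut_eq_sum (x : Sym2 V → ℝ) (Z : Set V) :
    hkCut G x Z = ∑ e ∈ edgesIn G Set.univ with Crosses Z e, x e := by
  rw [hkCut, ← finsum_mem_coe_finset]
  refine finsum_mem_congr (Set.ext fun e => ?_) fun _ _ => rfl
  induction e with | _ a b =>
  simp only [Set.mem_ofPred_eq, mem_edgeSet, Finset.coe_filter, mk_mem_edgesIn, crosses_mk,
    Set.mem_univ, and_true, Sym2.eq_iff]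
  grind

theorem isFractionalTour_univ_iff : IsFractionalTour G Set.univ x ↔ HKFeasible G x := by
  simp only [HKFeasible, hkCut_eq_sum]
  refine ⟨fun hx => ⟨hx.nonneg, fun Z hin hout => hx.two_le_cut Z (by simpa using hin) ?_⟩,
    fun hx => ⟨hx.1, fun Z hin hout => hx.2 Z (by simpa using hin) ?_⟩⟩
  · rwa [← Set.compl_eq_univ_sdiff, Set.nonempty_compl]
  · rwa [← Set.compl_eq_univ_sdiff, Set.nonempty_compl] at hout

end FractionalTours

end

end GraphTSP

/-- Every connected simple graph on `n ≥ 2` vertices, each of whose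
blocks has maximum degree at most 3 or is claw-free, has a spanning closed walk
of length at most `(4/3)·OLP(G)`; in particular the integrality gap of the
Held-Karp relaxation on this class of graphs is at most `4/3`. -/
theorem spanning_closed_walk_le_heldKarp_blockwise
    {V : Type*} [Fintype V]
    (G : SimpleGraph V)
    (hn : 2 ≤ Fintype.card V)
    (hconn : G.Connected)
    (hblockprop : ∀ B : Set V, IsBlock G B →
      (∀ v ∈ B, {u | u ∈ B ∧ G.Adj v u}.ncard ≤ 3) ∨
      IsEmpty (completeBipartiteGraph (Fin 1) (Fin 3) ↪g (G.induce B))) :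
    ∃ (v : V) (w : G.Walk v v), (∀ u : V, u ∈ w.support) ∧
      (w.length : ℝ) ≤ 4 / 3 * OLP G := by
  open GraphTSP in
  have : Nontrivial V := Fintype.one_lt_card_iff_nontrivial.1 hn
  have hclass (A : Set V) (hnt : A.Nontrivial) (hA : IsNonseparable G A) :
      IsSubcubicOrClawFree G A := by
    obtain ⟨B, hAB, hB⟩ := hA.exists_isBlock hnt.nonempty
    exact IsSubcubicOrClawFree.mono ((hblockprop B hB).imp_right clawFree_of_isEmpty) hAB
  have huniv := preconnected_iff_cutConnected.1 hconn.preconnected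
  obtain ⟨v, w, hw, hlen⟩ := huniv.hasShortTour hclass Set.nontrivial_univ
  refine ⟨v, w, fun u => (hw u).2 trivial, ?_⟩
  have hOLP : 3 / 4 * (w.length : ℝ) ≤ OLP G := by
    refine le_csInf ⟨_, _, isFractionalTour_univ_iff.1 huniv.isFractionalTour, rfl⟩ ?_
    rintro _ ⟨x, hx, rfl⟩
    have := hlen x (isFractionalTour_univ_iff.2 hx)
    rw [hkValue_eq_sum]
    linarith
  linarith
end

section
/- Let G = (V,E) be a 2-vertex-connected simple graph on at least 3 vertices equipped with a removable pairing (R,P), and let s,t ∈ V. Then G has a walk from s to t that visits every vertex of G and has length at most (4/3)·|E| − (2/3)·|R| + dist_G(s,t)/3, where dist_G(s,t) denotes the graph distance between s and t in G. -/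
open SimpleGraph

open scoped Finset symmDiff

/-!
Add an edge joining `s` and `t`, of weight `dist s t`, to `G`, and give the edges of `R` weight `-1`
and all others weight `1`. By Seymour's theorem on sums of circuits, the vector that is `1` on an
even edge set `K` and `2` off it is a nonnegative combination of circuits; taking `K` of maximum
weight, this yields an even set with at most a third of the total weight outside `K`. The same
holds, by splitting off each pair of `P` into a new cubic vertex that `K` is forced to pass through,
for some `K` that misses at most one edge of each pair.

Adding or deleting the edge `st` turns `K` into an `{s, t}`-join of `G`. Delete the removable edges
outside `K` and traverse the other edges outside `K` twice: the result is connected, so it has an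
Eulerian walk, and its length is `|E|` plus the weight outside `K`.
-/

/-- A multigraph on the vertex type `V` whose edges are indexed by `ι`, given by the unordered pair
of endpoints of each edge; loops and parallel edges are allowed. -/
abbrev Multigraph (V ι : Type*) := ι → Sym2 V

namespace Multigraph

variable {V U ι : Type*}

/-! ### Cuts, even edge sets and joins -/

/-- The pair `z` lies in the edge boundary of the vertex set `W`: it has an end on either side. -/
def Crosses (W : Set V) (z : Sym2 V) : Prop := (∃ x ∈ z, x ∈ W) ∧ ∃ y ∈ z, y ∉ W

@[simp]
lemma crosses_mk {W : Set V} {x y : V} : Crosses W s(x, y) ↔ ¬(x ∈ W ↔ y ∈ W) := by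
  simp only [Crosses, Sym2.mem_iff, exists_eq_or_imp, exists_eq_left]
  tauto

lemma Crosses.exists_eq_mk {W : Set V} {z : Sym2 V} (h : Crosses W z) :
    ∃ x ∈ W, ∃ y ∉ W, z = s(x, y) := by
  obtain ⟨⟨x, hxz, hx⟩, y, hyz, hy⟩ := h
  exact ⟨x, hx, y, hy, (Sym2.mem_and_mem_iff (by rintro rfl; exact hy hx)).1 ⟨hxz, hyz⟩⟩

lemma Crosses.not_isDiag {W : Set V} {z : Sym2 V} (h : Crosses W z) : ¬z.IsDiag := by
  obtain ⟨x, hx, y, hy, rfl⟩ := h.exists_eq_mk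
  exact fun hxy => hy (Sym2.mk_isDiag_iff.1 hxy ▸ hx)

lemma crosses_singleton {v : V} {z : Sym2 V} : Crosses {v} z ↔ ∃ y ≠ v, z = s(v, y) := by
  refine ⟨fun h => ?_, ?_⟩
  · obtain ⟨x, rfl, y, hy, rfl⟩ := h.exists_eq_mk
    exact ⟨y, hy, rfl⟩
  · rintro ⟨y, hy, rfl⟩
    simpa using hy

lemma crosses_singleton_of_mem {v : V} {z : Sym2 V} (hv : v ∈ z) (hz : ¬z.IsDiag) :
    Crosses {v} z := by
  obtain ⟨y, rfl⟩ := Sym2.mem_iff_exists.1 hv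
  simpa [eq_comm] using hz

lemma crosses_map {f : V → U} {W : Set U} {z : Sym2 V} :
    Crosses W (z.map f) ↔ Crosses (f ⁻¹' W) z := by
  induction z with | _ x y => simp

lemma crosses_symmDiff {W W' : Set V} {z : Sym2 V} :
    Crosses (W ∆ W') z ↔ ¬(Crosses W z ↔ Crosses W' z) := by
  induction z with | _ x y => simp only [crosses_mk, Set.mem_symmDiff]; tauto

lemma crosses_compl {W : Set V} {z : Sym2 V} : Crosses Wᶜ z ↔ Crosses W z := by
  induction z with | _ x y => simp [not_iff_not]

lemma Crosses.of_union {A B : Set V} {z : Sym2 V} (h : Crosses (A ∪ B) z) :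
    Crosses A z ∨ Crosses B z := by
  induction z with | _ x y =>
  simp only [crosses_mk, Set.mem_union] at h ⊢
  tauto

open Classical in
/-- The edges of `F` in the edge boundary of `W`; the star of a vertex `v` is `M.cut F {v}`. -/
noncomputable def cut (M : Multigraph V ι) (F : Finset ι) (W : Set V) : Finset ι :=
  {i ∈ F | Crosses W (M i)}

/-- An even edge set (an element of the cycle space), characterised by meeting each cut in an even
number of edges rather than by its degrees. -/
def IsEvenSet (M : Multigraph V ι) (F : Finset ι) : Prop := ∀ W, Even #(M.cut F W)

/-- An `{x, y}`-join, that is, an edge set whose odd-degree vertices are `x` and `y` (none if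
`x = y`), characterised by the parity of its intersection with each cut. -/
def IsJoin (M : Multigraph V ι) (F : Finset ι) (x y : V) : Prop :=
  ∀ W, Even #(M.cut F W) ↔ (x ∈ W ↔ y ∈ W)

/-- The image of a multigraph under a map of vertices, with the same edges. -/
def map (f : V → U) (M : Multigraph V ι) : Multigraph U ι := fun i => (M i).map f

/-- The set of vertices joined to `x` within the edge set `F`. -/
def reach (M : Multigraph V ι) (F : Finset ι) (x : V) : Set V := {y | ∃ Q ⊆ F, M.IsJoin Q x y}

variable {M : Multigraph V ι} {F K : Finset ι} {W : Set V} {i : ι} {x y z : V}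

@[simp]
lemma mem_cut : i ∈ M.cut F W ↔ i ∈ F ∧ Crosses W (M i) := by
  simp [cut]

lemma cut_map {f : V → U} {W : Set U} : (M.map f).cut F W = M.cut F (f ⁻¹' W) := by
  ext
  simp [map, crosses_map]

lemma isJoin_self : M.IsJoin F x x ↔ M.IsEvenSet F := by
  simp [IsJoin, IsEvenSet]

lemma IsEvenSet.isJoin (hF : M.IsEvenSet F) (x : V) : M.IsJoin F x x := isJoin_self.2 hF

lemma isJoin_empty : M.IsJoin ∅ x x := by
  simp [IsJoin, cut]

lemma isJoin_singleton (hi : M i = s(x, y)) : M.IsJoin {i} x y := by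
  intro W
  by_cases h : x ∈ W ↔ y ∈ W <;> simp [cut, Finset.filter_singleton, hi, h]

lemma IsJoin.symm (hF : M.IsJoin F x y) : M.IsJoin F y x := fun W =>
  (hF W).trans iff_comm

section DecidableEq

variable [DecidableEq ι]

lemma cut_symmDiff : M.cut (F ∆ K) W = M.cut F W ∆ M.cut K W := by
  ext
  simp only [mem_cut, Finset.mem_symmDiff]
  tauto

lemma cut_symmDiff_right {W' : Set V} : M.cut F (W ∆ W') = M.cut F W ∆ M.cut F W' := by
  ext
  simp only [mem_cut, Finset.mem_symmDiff, crosses_symmDiff]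
  tauto

lemma even_card_symmDiff {s t : Finset ι} : Even #(s ∆ t) ↔ (Even #s ↔ Even #t) := by
  have hs := Finset.card_sdiff_add_card_inter s t
  have ht := Finset.card_sdiff_add_card_inter t s
  rw [Finset.inter_comm t s] at ht
  rw [symmDiff_def, Finset.sup_eq_union, Finset.card_union_of_disjoint disjoint_sdiff_sdiff,
    ← hs, ← ht]
  simp only [Nat.even_add]
  tauto

protected lemma IsJoin.symmDiff (hF : M.IsJoin F x y) (hK : M.IsJoin K y z) :
    M.IsJoin (F ∆ K) x z := by
  intro W
  rw [cut_symmDiff, even_card_symmDiff, hF W, hK W]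
  tauto

protected lemma IsJoin.union (hF : M.IsJoin F x y) (hK : M.IsJoin K y z)
    (hFK : Disjoint F K) : M.IsJoin (F ∪ K) x z := by
  simpa only [hFK.symmDiff_eq_sup, Finset.sup_eq_union] using hF.symmDiff hK

protected lemma IsJoin.sdiff (hF : M.IsJoin F x y) (hK : M.IsJoin K y z) (hKF : K ⊆ F) :
    M.IsJoin (F \ K) x z := by
  simpa only [symmDiff_of_ge hKF] using hF.symmDiff hK

protected lemma IsJoin.insert (hF : M.IsJoin F x y) (hi : i ∉ F) (hxy : M i = s(y, z)) :
    M.IsJoin (insert i F) x z := by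
  rw [Finset.insert_eq, Finset.union_comm]
  exact hF.union (isJoin_singleton hxy) (by simpa using hi)

protected lemma IsJoin.erase (hF : M.IsJoin F x y) (hi : i ∈ F) (hxy : M i = s(y, z)) :
    M.IsJoin (F.erase i) x z := by
  rw [Finset.erase_eq]
  exact hF.sdiff (isJoin_singleton hxy) (by simpa using hi)

protected lemma IsEvenSet.symmDiff (hF : M.IsEvenSet F) (hK : M.IsEvenSet K) :
    M.IsEvenSet (F ∆ K) := by
  intro W
  rw [cut_symmDiff, even_card_symmDiff]
  simp [hF W, hK W]

protected lemma IsEvenSet.sdiff (hF : M.IsEvenSet F) (hK : M.IsEvenSet K) (hKF : K ⊆ F) :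
    M.IsEvenSet (F \ K) := by
  simpa only [symmDiff_of_ge hKF] using hF.symmDiff hK

end DecidableEq

lemma IsJoin.exists_crosses (hF : M.IsJoin F x y) (hx : x ∈ W) (hy : y ∉ W) :
    ∃ i ∈ F, Crosses W (M i) := by
  have hodd : ¬Even #(M.cut F W) := by simp [hF W, hx, hy]
  obtain ⟨i, hi⟩ : (M.cut F W).Nonempty := by
    rw [← Finset.card_pos, Nat.pos_iff_ne_zero]
    rintro h
    simp [h] at hodd
  exact ⟨i, mem_cut.1 hi⟩

lemma IsJoin.eq_of_isEvenSet (hF : M.IsJoin F x y) (hF' : M.IsEvenSet F) : x = y := by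
  simpa [eq_comm] using (hF {x}).1 (hF' {x})

lemma mem_reach_self : x ∈ M.reach F x := ⟨∅, by simp, isJoin_empty⟩

lemma reach_mono {F' : Finset ι} (hFF' : F ⊆ F') : M.reach F x ⊆ M.reach F' x :=
  fun _ ⟨Q, hQ, hjoin⟩ => ⟨Q, hQ.trans hFF', hjoin⟩

lemma mem_reach_of_mem (hy : y ∈ M.reach F x) (hi : i ∈ F) (hyz : M i = s(y, z)) :
    z ∈ M.reach F x := by
  classical
  obtain ⟨Q, hQ, hjoin⟩ := hy
  by_cases hiQ : i ∈ Q
  · exact ⟨Q.erase i, (Q.erase_subset i).trans hQ, hjoin.erase hiQ hyz⟩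
  · exact ⟨insert i Q, Finset.insert_subset hi hQ, hjoin.insert hiQ hyz⟩

lemma not_crosses_reach (hi : i ∈ F) : ¬Crosses (M.reach F x) (M i) := fun h => by
  obtain ⟨y, hy, z, hz, hyz⟩ := h.exists_eq_mk
  exact hz (mem_reach_of_mem hy hi hyz)

lemma reach_subset (hx : x ∈ W) (hW : ∀ i ∈ F, ¬Crosses W (M i)) : M.reach F x ⊆ W := by
  rintro y ⟨Q, hQ, hjoin⟩
  by_contra hy
  obtain ⟨i, hi, hcross⟩ := hjoin.exists_crosses hx hy
  exact hW i (hQ hi) hcross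

open Classical in
lemma IsJoin.isEvenSet_filter (hF : M.IsJoin F x y) (hW : ∀ i ∈ F, ¬Crosses W (M i))
    (hx : x ∉ W) : M.IsEvenSet {i ∈ F | ∀ z ∈ M i, z ∈ W} := by
  have hy : y ∉ W := fun hy => by
    obtain ⟨i, hi, hcross⟩ := hF.symm.exists_crosses hy hx
    exact hW i hi hcross
  intro X
  have hcut : M.cut {i ∈ F | ∀ z ∈ M i, z ∈ W} X = M.cut F (X ∩ W) := by
    ext i
    simp only [mem_cut, Finset.mem_filter, and_assoc]
    refine and_congr_right fun hi => ?_
    have hiW := hW i hi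
    induction hMi : M i with | _ a b =>
    simp only [hMi, crosses_mk, Sym2.mem_iff, forall_eq_or_imp, forall_eq, Set.mem_inter_iff]
      at hiW ⊢
    tauto
  rw [hcut, hF]
  simp [hx, hy]

lemma IsJoin.exists_subset_card_cut_eq_one (hF : M.IsJoin F x y) (hxy : x ≠ y) :
    ∃ F' ⊆ F, M.IsJoin F' x y ∧ #(M.cut F' {y}) = 1 := by
  classical
  set S : Finset ι := {i ∈ F | y ∉ M i}
  have hdisj {Q : Finset ι} (hQ : Q ⊆ S) : ∀ i ∈ Q, y ∉ M i := fun i hi =>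
    (Finset.mem_filter.1 (hQ hi)).2
  have hcutQ {Q : Finset ι} (hQ : Q ⊆ S) : M.cut Q {y} = ∅ := by
    refine Finset.filter_false_of_mem fun i hi hcross => ?_
    obtain ⟨u, -, hu⟩ := crosses_singleton.1 hcross
    exact hdisj hQ i hi (hu ▸ Sym2.mem_mk_left y u)
  have hy : y ∉ M.reach S x := by
    rintro ⟨Q, hQ, hjoin⟩
    simpa [hcutQ hQ, hxy] using hjoin {y}
  obtain ⟨g, hgF, hcross⟩ := hF.exists_crosses mem_reach_self hy
  obtain ⟨w, hw, u, -, hwu⟩ := hcross.exists_eq_mk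
  have hyg : y ∈ M g := by
    by_contra hyg
    exact not_crosses_reach (Finset.mem_filter.2 ⟨hgF, hyg⟩) hcross
  have hwy : w ≠ y := by
    rintro rfl
    exact hy hw
  obtain rfl : y = u := by
    rw [hwu, Sym2.mem_iff] at hyg
    exact hyg.resolve_left hwy.symm
  obtain ⟨Q, hQ, hjoin⟩ := hw
  have hgQ : g ∉ Q := fun h => hdisj hQ g h hyg
  refine ⟨insert g Q, Finset.insert_subset hgF (hQ.trans (Finset.filter_subset _ _)),
    hjoin.insert hgQ hwu, ?_⟩
  have hcutg : M.cut (insert g Q) {y} = insert g (M.cut Q {y}) := by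
    rw [cut, Finset.filter_insert, if_pos (crosses_singleton.2 ⟨w, hwy, hwu.trans Sym2.eq_swap⟩)]
    rfl
  simp [hcutg, hcutQ hQ]

lemma IsEvenSet.exists_subset_card_cut_eq_two {C : Finset ι} (hC : M.IsEvenSet C) (hi : i ∈ C)
    (hv : Crosses {x} (M i)) :
    ∃ K ⊆ C, M.IsEvenSet K ∧ i ∈ K ∧ #(M.cut K {x}) = 2 := by
  classical
  obtain ⟨y, hyx, hMi⟩ := crosses_singleton.1 hv
  obtain ⟨Q, hQ, hjoin, hcard⟩ :=
    ((hC.isJoin x).erase hi hMi).symm.exists_subset_card_cut_eq_one hyx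
  have hiQ : i ∉ Q := fun h => (Finset.mem_erase.1 (hQ h)).1 rfl
  refine ⟨insert i Q, Finset.insert_subset hi (hQ.trans (C.erase_subset i)),
    isJoin_self.1 (hjoin.insert hiQ hMi), Finset.mem_insert_self i Q, ?_⟩
  rw [cut, Finset.filter_insert, if_pos hv, Finset.card_insert_of_notMem (by simp [hiQ])]
  exact congrArg (· + 1) hcard

lemma IsEvenSet.exists_circuit {C : Finset ι} (hC : M.IsEvenSet C) (hi : i ∈ C)
    (hv : Crosses {x} (M i)) :
    ∃ K ⊆ C, M.IsEvenSet K ∧ i ∈ K ∧ #(M.cut K {x}) = 2 ∧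
      ∀ j ∈ K, ∀ y ∈ M j, y ∈ M.reach K x := by
  classical
  obtain ⟨K, hKmem, hmin⟩ := Finset.exists_min_image
    {K ∈ C.powerset | M.IsEvenSet K ∧ i ∈ K} Finset.card ⟨C, by simp [hC, hi]⟩
  simp only [Finset.mem_filter, Finset.mem_powerset, and_imp] at hKmem hmin
  obtain ⟨hKC, hK, hiK⟩ := hKmem
  have heq {K' : Finset ι} (hK'K : K' ⊆ K) (hK' : M.IsEvenSet K') (hiK' : i ∈ K') : K' = K :=
    Finset.eq_of_subset_of_card_le hK'K (hmin K' (hK'K.trans hKC) hK' hiK')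
  have hcard : #(M.cut K {x}) = 2 := by
    obtain ⟨K', hK'K, hK', hiK', hcard⟩ := hK.exists_subset_card_cut_eq_two hiK hv
    exact heq hK'K hK' hiK' ▸ hcard
  refine ⟨K, hKC, hK, hiK, hcard, ?_⟩
  set A : Set V := M.reach K x with hA
  have hcross : ∀ j ∈ K, ¬Crosses Aᶜ (M j) := fun j hj =>
    crosses_compl.not.2 (not_crosses_reach hj)
  have hfar := (hK.isJoin x).isEvenSet_filter hcross (by simp [hA, mem_reach_self])
  have hnear := heq Finset.sdiff_subset (hK.sdiff hfar (Finset.filter_subset _ _)) (by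
    obtain ⟨y, -, hMi⟩ := crosses_singleton.1 hv
    simp [hiK, hMi, hA, mem_reach_self])
  intro j hj y hy
  rw [← hnear, Finset.mem_sdiff, Finset.mem_filter] at hj
  by_contra hyA
  refine hj.2 ⟨hj.1, fun z hz => ?_⟩
  by_contra hzA
  exact hcross j hj.1 ⟨⟨y, hy, hyA⟩, z, hz, hzA⟩

/-! ### Conservative weights -/

/-- Conservative edge weights: no even edge set has negative total weight. -/
def IsConservative (M : Multigraph V ι) (c : ι → ℤ) : Prop :=
  ∀ ⦃C : Finset ι⦄, M.IsEvenSet C → 0 ≤ ∑ i ∈ C, c i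

/-- Among the joins of all pairs of vertices, `J` has minimum weight and, subject to that, minimum
size. Varying the ends too is the heart of Sebő's proof of Seymour's theorem: it forces the negative
edges at the end `v` of `J` to lie in `J` and the positive ones to avoid it. -/
structure IsMinJoin (M : Multigraph V ι) (c : ι → ℤ) (J : Finset ι) (s v : V) : Prop where
  isJoin : M.IsJoin J s v
  toLex_le : ∀ {Q : Finset ι} {x y : V}, M.IsJoin Q x y →
    toLex (∑ i ∈ J, c i, #J) ≤ toLex (∑ i ∈ Q, c i, #Q)

/-- The weights obtained from `c` by moving every edge at `v` one step down, except for `f`, which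
moves one step up. -/
noncomputable def reduceStar (M : Multigraph V ι) (c : ι → ℤ) (v : V) (f : ι) : ι → ℤ :=
  open Classical in fun i => if i = f then c i + 1 else if Crosses {v} (M i) then c i - 1 else c i

variable {M : Multigraph V ι} {c : ι → ℤ} {C F J K Q : Finset ι} {e f i : ι} {s v x y : V}

lemma exists_isMinJoin [Finite ι] [Nonempty V] (M : Multigraph V ι) (c : ι → ℤ) :
    ∃ J s v, M.IsMinJoin c J s v := by
  classical
  have := Fintype.ofFinite ι
  obtain ⟨x⟩ := ‹Nonempty V›
  obtain ⟨J, hJ, hmin⟩ := Finset.exists_min_image {J : Finset ι | ∃ s v, M.IsJoin J s v}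
    (fun J => toLex (∑ i ∈ J, c i, #J)) ⟨∅, by simpa using ⟨x, x, isJoin_empty⟩⟩
  obtain ⟨s, v, hjoin⟩ := (Finset.mem_filter.1 hJ).2
  exact ⟨J, s, v, hjoin, fun hQ => hmin _ (by simpa using ⟨_, _, hQ⟩)⟩

lemma IsMinJoin.sum_le (hJ : M.IsMinJoin c J s v) (hQ : M.IsJoin Q x y) :
    ∑ i ∈ J, c i ≤ ∑ i ∈ Q, c i := by
  rcases Prod.Lex.toLex_le_toLex.1 (hJ.toLex_le hQ) with h | h
  exacts [h.le, h.1.le]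

lemma IsMinJoin.card_le (hJ : M.IsMinJoin c J s v) (hQ : M.IsJoin Q x y)
    (hsum : ∑ i ∈ Q, c i ≤ ∑ i ∈ J, c i) : #J ≤ #Q := by
  rcases Prod.Lex.toLex_le_toLex.1 (hJ.toLex_le hQ) with h | h
  exacts [absurd h hsum.not_gt, h.2]

lemma IsMinJoin.eq_of_subset (hc : M.IsConservative c) (hJ : M.IsMinJoin c J s v) (hQJ : Q ⊆ J)
    (hQ : M.IsJoin Q s v) : Q = J := by
  classical
  have hsdiff : M.IsEvenSet (J \ Q) := isJoin_self.1 (hJ.isJoin.sdiff hQ.symm hQJ)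
  refine Finset.eq_of_subset_of_card_le hQJ (hJ.card_le hQ ?_)
  rw [← Finset.sum_sdiff hQJ]
  linarith [hc hsdiff]

lemma IsMinJoin.mem_iff_neg (hJ : M.IsMinJoin c J s v) (hK : M.IsJoin K s v)
    (hsum : ∑ i ∈ K, c i = ∑ i ∈ J, c i) (he : Crosses {v} (M e)) (hce : c e ≠ 0) :
    e ∈ K ↔ c e < 0 := by
  classical
  obtain ⟨w, -, hMe⟩ := crosses_singleton.1 he
  constructor
  · intro heK
    have hle := hJ.sum_le (hK.erase heK hMe)
    rw [← hsum, ← Finset.add_sum_erase K c heK] at hle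
    exact lt_of_le_of_ne (by linarith) hce
  · intro hneg
    by_contra heK
    have hle := hJ.sum_le (hK.insert heK hMe)
    rw [Finset.sum_insert heK, hsum] at hle
    linarith

lemma IsMinJoin.exists_cut_eq_singleton (hc : M.IsConservative c) (hJ : M.IsMinJoin c J s v)
    (hsv : s ≠ v) : ∃ f, M.cut J {v} = {f} := by
  obtain ⟨J', hJ'J, hJ', hcard⟩ := hJ.isJoin.exists_subset_card_cut_eq_one hsv
  obtain rfl := hJ.eq_of_subset hc hJ'J hJ'
  exact Finset.card_eq_one.1 hcard

lemma IsMinJoin.sum_neg_of_subset (hJ : M.IsMinJoin c J s v) (hQJ : Q ⊆ J) (hQ : M.IsJoin Q v y)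
    (hvy : v ≠ y) : ∑ i ∈ Q, c i < 0 := by
  classical
  by_contra! hnonneg
  have hcard : #J ≤ #(J \ Q) := hJ.card_le (hJ.isJoin.sdiff hQ hQJ) (by
    rw [← Finset.sum_sdiff hQJ]
    linarith)
  have hempty : Q = ∅ := by
    rw [← Finset.card_eq_zero]
    have := Finset.card_sdiff_add_card_eq_card hQJ
    lia
  subst hempty
  exact hvy (hQ.eq_of_isEvenSet (isJoin_self.1 (isJoin_empty (x := v))))

lemma IsConservative.sum_nonneg_of_disjoint (hc : M.IsConservative c) (hC : M.IsEvenSet C)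
    (hsum : ∑ i ∈ C, c i = 0) (hQ : M.IsJoin Q v y) (hQC : Disjoint Q C)
    (hy : y ∈ M.reach C v) : 0 ≤ ∑ i ∈ Q, c i := by
  classical
  obtain ⟨C', hC'C, hC'⟩ := hy
  have hdisj : Disjoint Q C' := hQC.mono_right hC'C
  have hdisj' : Disjoint Q (C \ C') := hQC.mono_right Finset.sdiff_subset
  have hnonneg := hc (isJoin_self.1 (hQ.union hC'.symm hdisj))
  have hnonneg' := hc (isJoin_self.1 (hQ.union ((hC.isJoin y).sdiff hC'.symm hC'C) hdisj'))
  rw [Finset.sum_union hdisj] at hnonneg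
  rw [Finset.sum_union hdisj'] at hnonneg'
  have := Finset.sum_sdiff (f := c) hC'C
  linarith

/-- The exchange step: if `C` had weight zero, then `J`, or a part of `J` joining `v` to another
vertex of `C`, could be modified along `C` against the choice of `J`. -/
lemma IsMinJoin.sum_pos (hc : M.IsConservative c) (hJ : M.IsMinJoin c J s v)
    (hcut : M.cut J {v} = {f}) (hC : M.IsEvenSet C) (hfC : f ∉ C)
    (hreach : ∀ i ∈ C, ∀ y ∈ M i, y ∈ M.reach C v) (heC : e ∈ C) (he : Crosses {v} (M e))
    (hce : c e ≠ 0) : 0 < ∑ i ∈ C, c i := by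
  classical
  refine lt_of_le_of_ne (hc hC) fun hsum => ?_
  have hstar : ∀ i ∈ J, Crosses {v} (M i) → i ∉ C := by
    intro i hi hcross
    obtain rfl : i = f := Finset.mem_singleton.1 (hcut ▸ mem_cut.2 ⟨hi, hcross⟩)
    exact hfC
  by_cases hs : s ∈ M.reach (J \ C) v
  · obtain ⟨Q, hQ, hjoin⟩ := hs
    have hdisj : Disjoint J C := by
      rw [← hJ.eq_of_subset hc (hQ.trans Finset.sdiff_subset) hjoin.symm]
      exact Finset.sdiff_disjoint.mono_left hQ
    have hunion := hJ.mem_iff_neg (hJ.isJoin.union (hC.isJoin v) hdisj)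
      (by rw [Finset.sum_union hdisj, ← hsum, add_zero]) he hce
    have hself := hJ.mem_iff_neg hJ.isJoin rfl he hce
    exact hstar e (hself.2 (hunion.1 (Finset.mem_union_right J heC))) he heC
  · obtain ⟨g, hgJ, hg⟩ := hJ.isJoin.symm.exists_crosses mem_reach_self hs
    have hgC : g ∈ C := by
      by_contra hgC
      exact not_crosses_reach (Finset.mem_sdiff.2 ⟨hgJ, hgC⟩) hg
    obtain ⟨y, hy, z, hz, hMg⟩ := hg.exists_eq_mk
    have hvy : v ≠ y := by
      rintro rfl
      have hzv : z ≠ v := fun h => hz (h ▸ mem_reach_self)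
      exact hstar g hgJ (crosses_singleton.2 ⟨z, hzv, hMg⟩) hgC
    obtain ⟨Q, hQ, hjoin⟩ := hy
    have hnonneg := hc.sum_nonneg_of_disjoint hC hsum.symm hjoin
      (Finset.sdiff_disjoint.mono_left hQ) (hreach g hgC y (hMg ▸ Sym2.mem_mk_left y z))
    exact hnonneg.not_gt (hJ.sum_neg_of_subset (hQ.trans Finset.sdiff_subset) hjoin hvy)

lemma isConservative_of_forall_exists_subset
    (h : ∀ C, M.IsEvenSet C → C.Nonempty →
      ∃ K ⊆ C, K.Nonempty ∧ M.IsEvenSet K ∧ 0 ≤ ∑ i ∈ K, c i) : M.IsConservative c := by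
  classical
  intro C
  induction C using Finset.strongInduction with | H C ih =>
  intro hC
  obtain rfl | hne := C.eq_empty_or_nonempty
  · simp
  obtain ⟨K, hKC, hKne, hK, hsum⟩ := h C hC hne
  rw [← Finset.sum_sdiff hKC]
  exact add_nonneg (ih _ (Finset.sdiff_ssubset hKC hKne) (hC.sdiff hK hKC)) hsum

lemma sum_reduceStar_mul [DecidableEq ι] (hf : Crosses {v} (M f)) (x : ι → ℤ) :
    ∑ i ∈ C, M.reduceStar c v f i * x i =
      ∑ i ∈ C, c i * x i - ∑ i ∈ M.cut C {v}, x i + if f ∈ C then 2 * x f else 0 := by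
  classical
  have hi (i) : M.reduceStar c v f i * x i =
      c i * x i - (if Crosses {v} (M i) then x i else 0) + if i = f then 2 * x f else 0 := by
    by_cases hif : i = f
    · subst hif
      simp only [reduceStar, hf, if_true]
      ring
    · by_cases hcross : Crosses {v} (M i) <;> simp [reduceStar, hif, hcross, sub_mul]
  simp_rw [hi, Finset.sum_add_distrib, Finset.sum_sub_distrib, Finset.sum_ite_eq', cut,
    Finset.sum_filter]

lemma sum_reduceStar [DecidableEq ι] (hf : Crosses {v} (M f)) :
    ∑ i ∈ C, M.reduceStar c v f i = ∑ i ∈ C, c i - #(M.cut C {v}) + if f ∈ C then 2 else 0 := by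
  simpa using sum_reduceStar_mul (c := c) (C := C) hf 1

lemma IsMinJoin.isConservative_reduceStar (hc : M.IsConservative c)
    (hparity : ∀ C, M.IsEvenSet C → Even (∑ i ∈ C, c i))
    (hne : ∀ i, Crosses {v} (M i) → c i ≠ 0) (hJ : M.IsMinJoin c J s v)
    (hcut : M.cut J {v} = {f}) : M.IsConservative (M.reduceStar c v f) := by
  classical
  have hf : Crosses {v} (M f) := (mem_cut.1 (hcut ▸ Finset.mem_singleton_self f)).2
  refine isConservative_of_forall_exists_subset fun C hC hCne => ?_
  obtain hstar | ⟨e, he⟩ := (M.cut C {v}).eq_empty_or_nonempty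
  · have hfC : f ∉ C := fun hfC => by simpa [hstar] using mem_cut.2 ⟨hfC, hf⟩
    exact ⟨C, subset_rfl, hCne, hC, by simpa [sum_reduceStar hf, hstar, hfC] using hc hC⟩
  · obtain ⟨heC, he⟩ := mem_cut.1 he
    obtain ⟨K, hKC, hK, heK, hcard, hreach⟩ := hC.exists_circuit heC he
    refine ⟨K, hKC, ⟨e, heK⟩, hK, ?_⟩
    rw [sum_reduceStar hf, hcard]
    by_cases hfK : f ∈ K
    · simpa [hfK] using hc hK
    · have hpos := hJ.sum_pos hc hcut hK hfK hreach heK he (hne e he)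
      obtain ⟨k, hk⟩ := hparity K hK
      simp only [hfK, if_false, Nat.cast_ofNat]
      lia

theorem IsConservative.exists_reduceStar [Finite ι] (hc : M.IsConservative c)
    (hparity : ∀ C, M.IsEvenSet C → Even (∑ i ∈ C, c i))
    (hne : ∀ i, ¬(M i).IsDiag → c i ≠ 0) (he : c e < 0) :
    ∃ v f, Crosses {v} (M f) ∧ c f < 0 ∧ (∀ i ≠ f, Crosses {v} (M i) → 0 < c i) ∧
      M.IsConservative (M.reduceStar c v f) := by
  induction hMe : M e with | _ x y =>
  have : Nonempty V := ⟨x⟩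
  obtain ⟨J, s, v, hJ⟩ := exists_isMinJoin M c
  have hsum : ∑ i ∈ J, c i < 0 := (hJ.sum_le (isJoin_singleton hMe)).trans_lt (by simpa using he)
  have hsv : s ≠ v := by
    rintro rfl
    exact (hc (isJoin_self.1 hJ.isJoin)).not_gt hsum
  obtain ⟨f, hcut⟩ := hJ.exists_cut_eq_singleton hc hsv
  have hmem (i) (hi : Crosses {v} (M i)) : i = f ↔ c i < 0 := by
    rw [← hJ.mem_iff_neg hJ.isJoin rfl hi (hne i hi.not_isDiag), ← Finset.mem_singleton, ← hcut,
      mem_cut, and_iff_left hi]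
  have hf : Crosses {v} (M f) := (mem_cut.1 (hcut ▸ Finset.mem_singleton_self f)).2
  refine ⟨v, f, hf, (hmem f hf).1 rfl, fun i hif hi => ?_,
    hJ.isConservative_reduceStar hc hparity (fun i hi => hne i hi.not_isDiag) hcut⟩
  exact lt_of_le_of_ne (not_lt.1 (mt (hmem i hi).2 hif)) (hne i hi.not_isDiag).symm

/-! ### Weights nonnegative on the cone of even sets -/

section Cone

variable {M : Multigraph V ι} {c : ι → ℤ} {C K : Finset ι} {e f : ι} {v a b : V}

lemma IsEvenSet.of_map_update [DecidableEq V]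
    (hC : (M.map (Function.update id b a)).IsEvenSet C) : M.IsEvenSet C ∨ M.IsJoin C a b := by
  classical
  have heven (W : Set V) (hW : a ∈ W ↔ b ∈ W) : Even #(M.cut C W) := by
    have hpre : Function.update id b a ⁻¹' W = W := by
      ext u
      by_cases hu : u = b
      · simp [hu, hW]
      · simp [hu]
    simpa [cut_map, hpre] using hC W
  refine or_iff_not_imp_left.2 fun hodd W => ?_
  obtain ⟨W₀, hW₀⟩ := not_forall.1 hodd
  by_cases hW : a ∈ W ↔ b ∈ W
  · simp [hW, heven W hW]
  · have hsep : ¬(a ∈ W₀ ↔ b ∈ W₀) := mt (heven W₀) hW₀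
    have hdiff := heven (W ∆ W₀) (by simp only [Set.mem_symmDiff]; tauto)
    rw [cut_symmDiff_right, even_card_symmDiff] at hdiff
    tauto

lemma sum_natAbs_reduceStar_lt [Fintype ι] (hf : Crosses {v} (M f)) (hcf : c f < 0)
    (hpos : ∀ i ≠ f, Crosses {v} (M i) → 0 < c i) :
    ∑ i, (M.reduceStar c v f i).natAbs < ∑ i, (c i).natAbs := by
  refine Finset.sum_lt_sum (fun i _ => ?_) ⟨f, Finset.mem_univ f, ?_⟩
  · by_cases hif : i = f
    · subst hif
      simp only [reduceStar, if_true]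
      lia
    · by_cases hi : Crosses {v} (M i)
      · have := hpos i hif hi
        simp only [reduceStar, hif, hi, if_true, if_false]
        lia
      · simp [reduceStar, hif, hi]
  · simp only [reduceStar, if_true]
    lia

open Classical in
lemma card_not_isDiag_map_update_lt [Fintype ι] (he : M e = s(a, b)) (hab : a ≠ b) :
    #{i | ¬(M.map (Function.update id b a) i).IsDiag} < #{i | ¬(M i).IsDiag} := by
  refine Finset.card_lt_card (Finset.ssubset_iff_subset_ne.2 ⟨fun i => ?_, fun heq => ?_⟩)
  · simp only [Finset.mem_filter, Finset.mem_univ, true_and]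
    exact mt Sym2.IsDiag.map
  · have hmem := Finset.ext_iff.1 heq e
    simp only [Finset.mem_filter, Finset.mem_univ, true_and] at hmem
    simp [map, he, hab] at hmem

lemma IsEvenSet.exists_sum_eq_of_map_update [DecidableEq V]
    (hC : (M.map (Function.update id b a)).IsEvenSet C) (he : M e = s(a, b)) (hce : c e = 0) :
    ∃ C', M.IsEvenSet C' ∧ ∑ i ∈ C', c i = ∑ i ∈ C, c i := by
  classical
  obtain hC | hC := hC.of_map_update
  · exact ⟨C, hC, rfl⟩
  by_cases heC : e ∈ C
  · exact ⟨C.erase e, isJoin_self.1 (hC.erase heC (he.trans Sym2.eq_swap)), C.sum_erase hce⟩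
  · exact ⟨insert e C, isJoin_self.1 (hC.insert heC (he.trans Sym2.eq_swap)),
      Finset.sum_insert_zero hce⟩

/-- A form of Seymour's theorem on sums of circuits. One induction step contracts an edge of weight
zero; if there is none, it moves the weights at a vertex, which only lowers `∑ i, c i * x i` because
`x` satisfies the cut condition there. -/
theorem IsConservative.sum_mul_nonneg_of_even [Fintype ι] (hc : M.IsConservative c)
    (hparity : ∀ C, M.IsEvenSet C → Even (∑ i ∈ C, c i)) {x : ι → ℤ} (hx : 0 ≤ x)
    (hcut : ∀ W, ∀ i ∈ M.cut Finset.univ W, 2 * x i ≤ ∑ j ∈ M.cut Finset.univ W, x j) :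
    0 ≤ ∑ i, c i * x i := by
  classical
  induction hn : ∑ i, (c i).natAbs + #{i | ¬(M i).IsDiag} using Nat.strong_induction_on
    generalizing M c with | _ n ih =>
  by_cases hzero : ∃ e, ¬(M e).IsDiag ∧ c e = 0
  · obtain ⟨e, hdiag, hce⟩ := hzero
    induction he : M e with | _ a b =>
    have hab : a ≠ b := by simpa [he] using hdiag
    refine ih _ ?_ (M := M.map (Function.update id b a)) (fun C hC => ?_) (fun C hC => ?_)
      (fun W i hi => ?_) rfl
    · rw [← hn]
      exact Nat.add_lt_add_left (card_not_isDiag_map_update_lt he hab) _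
    · obtain ⟨C', hC', hsum⟩ := hC.exists_sum_eq_of_map_update he hce
      exact hsum ▸ hc hC'
    · obtain ⟨C', hC', hsum⟩ := hC.exists_sum_eq_of_map_update he hce
      exact hsum ▸ hparity C' hC'
    · rw [cut_map] at hi ⊢
      exact hcut _ i hi
  by_cases hneg : ∃ e, c e < 0
  · obtain ⟨e, he⟩ := hneg
    obtain ⟨v, f, hf, hcf, hpos, hcons⟩ :=
      hc.exists_reduceStar hparity (fun i hi hci => hzero ⟨i, hi, hci⟩) he
    have hnonneg := ih _ (by
      rw [← hn]
      exact Nat.add_lt_add_right (sum_natAbs_reduceStar_lt hf hcf hpos) _) hcons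
      (fun C hC => ?_) hcut rfl
    · have hstar := hcut {v} f (mem_cut.2 ⟨Finset.mem_univ f, hf⟩)
      rw [sum_reduceStar_mul hf, if_pos (Finset.mem_univ f)] at hnonneg
      linarith
    · rw [sum_reduceStar hf]
      have hcard : Even (#(M.cut C {v}) : ℤ) := by exact_mod_cast hC {v}
      refine ((hparity C hC).sub hcard).add ?_
      split_ifs <;> simp
  · push Not at hneg
    exact Finset.sum_nonneg fun i _ => mul_nonneg (hneg i) (hx i)

theorem IsConservative.sum_mul_nonneg [Fintype ι] (hc : M.IsConservative c) {x : ι → ℤ}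
    (hx : 0 ≤ x)
    (hcut : ∀ W, ∀ i ∈ M.cut Finset.univ W, 2 * x i ≤ ∑ j ∈ M.cut Finset.univ W, x j) :
    0 ≤ ∑ i, c i * x i := by
  have hdouble : M.IsConservative fun i => 2 * c i := fun C hC => by
    rw [← Finset.mul_sum]
    exact mul_nonneg zero_le_two (hc hC)
  have hsum := hdouble.sum_mul_nonneg_of_even
    (fun C _ => Finset.even_sum _ fun i _ => even_two_mul (c i)) hx hcut
  simp only [mul_assoc, ← Finset.mul_sum] at hsum
  linarith

end Cone

/-! ### Even sets in bridgeless multigraphs -/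

section Bridgeless

/-- A bridgeless multigraph, phrased through edge cuts. -/
def IsBridgeless [Fintype ι] (M : Multigraph V ι) : Prop := ∀ W, #(M.cut Finset.univ W) ≠ 1

variable {M : Multigraph V ι} {c : ι → ℤ} {K : Finset ι} {W : Set V}

lemma isConservative_of_forall_sum_le [DecidableEq ι] (hK : M.IsEvenSet K)
    (hmax : ∀ K', M.IsEvenSet K' → ∑ i ∈ K', c i ≤ ∑ i ∈ K, c i) :
    M.IsConservative fun i => if i ∈ K then c i else -c i := by
  intro C hC
  have hle := hmax _ (hK.symmDiff hC)
  rw [symmDiff_def, Finset.sup_eq_union, Finset.sum_union disjoint_sdiff_sdiff,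
    ← Finset.sum_inter_add_sum_sdiff K C] at hle
  rw [Finset.sum_ite, Finset.filter_mem_eq_inter, Finset.filter_notMem_eq_sdiff,
    Finset.sum_neg_distrib, Finset.inter_comm]
  linarith

lemma IsBridgeless.two_mul_le_sum_cut [Fintype ι] [DecidableEq ι] (hM : M.IsBridgeless)
    (hK : M.IsEvenSet K) {i : ι} (hi : i ∈ M.cut Finset.univ W) :
    2 * (if i ∈ K then 1 else 2 : ℤ) ≤ ∑ j ∈ M.cut Finset.univ W, if j ∈ K then 1 else 2 := by
  set B := M.cut Finset.univ W with hB
  have hKB : M.cut K W = {j ∈ B | j ∈ K} := by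
    ext j
    simp [hB, and_comm]
  have hcard := Finset.card_filter_add_card_filter_not (s := B) (· ∈ K)
  have hsum : (∑ j ∈ B, if j ∈ K then 1 else 2 : ℤ) =
      #{j ∈ B | j ∈ K} + 2 * #{j ∈ B | j ∉ K} := by
    simp [Finset.sum_ite, mul_comm]
  obtain ⟨m, hm⟩ := hKB ▸ hK W
  have hbridge : #B ≠ 1 := hM W
  rw [hsum]
  by_cases hiK : i ∈ K
  · have hpos : 0 < #{j ∈ B | j ∈ K} := Finset.card_pos.2 ⟨i, by simp [hi, hiK]⟩
    simp only [hiK, if_true]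
    lia
  · have hpos : 0 < #{j ∈ B | j ∉ K} := Finset.card_pos.2 ⟨i, by simp [hi, hiK]⟩
    simp only [hiK, if_false]
    lia

/-- The weight `1` on `K` and `2` off `K` satisfies the cut condition, since `K` is even and no cut
is a single edge; for `K` of maximum weight it is paired with a conservative weight. -/
theorem IsBridgeless.exists_isEvenSet_two_mul_sum_compl_le [Fintype ι] [DecidableEq ι]
    (hM : M.IsBridgeless) (c : ι → ℤ) :
    ∃ K, M.IsEvenSet K ∧ 2 * ∑ i ∈ Kᶜ, c i ≤ ∑ i ∈ K, c i := by
  obtain ⟨K, hK, hmax⟩ := Set.exists_max_image {K | M.IsEvenSet K} (fun K => ∑ i ∈ K, c i)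
    (Set.toFinite _) ⟨∅, fun W => by simp [cut]⟩
  have hnonneg := (isConservative_of_forall_sum_le hK hmax).sum_mul_nonneg
    (x := fun i => if i ∈ K then 1 else 2) (fun i => by positivity)
    (fun W i hi => hM.two_mul_le_sum_cut hK hi)
  have hi (i) : ((if i ∈ K then c i else -c i) * if i ∈ K then 1 else 2) =
      if i ∈ K then c i else -(2 * c i) := by
    split_ifs <;> ring
  simp_rw [hi, Finset.sum_ite, Finset.sum_neg_distrib, ← Finset.mul_sum,
    Finset.filter_mem_eq_inter, Finset.filter_notMem_eq_sdiff, Finset.univ_inter,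
    ← Finset.compl_eq_univ_sdiff] at hnonneg
  exact ⟨K, hK, by linarith⟩

lemma card_cut_add_card_cut_compl [Fintype ι] [DecidableEq ι] :
    #(M.cut K W) + #(M.cut Kᶜ W) = #(M.cut Finset.univ W) := by
  classical
  simp_rw [cut, Finset.card_filter]
  exact Finset.sum_add_sum_compl K _

lemma sum_sub_two_mul_sum_compl_le [Fintype ι] [DecidableEq ι] (c : ι → ℤ) (K : Finset ι) :
    ∑ i ∈ K, c i - 2 * ∑ i ∈ Kᶜ, c i ≤ 2 * ∑ i, |c i| := by
  have hK := Finset.abs_sum_le_sum_abs c K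
  have hKc := Finset.abs_sum_le_sum_abs c Kᶜ
  have hnonneg := Finset.sum_nonneg fun i (_ : i ∈ K) => abs_nonneg (c i)
  rw [← Finset.sum_add_sum_compl K fun i => |c i|]
  linarith [le_abs_self (∑ i ∈ K, c i), neg_abs_le (∑ i ∈ Kᶜ, c i)]

/-- Adding a large weight `N` on the edges of the given cuts forces `K` to use two edges of each:
missing a cut would cost `6 * N`. -/
theorem IsBridgeless.exists_isEvenSet_card_cut_compl_eq_one [Fintype ι] [DecidableEq ι]
    {π : Type*} [Finite π] (hM : M.IsBridgeless) (c : ι → ℤ) {W : π → Set V}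
    (hW : ∀ p, #(M.cut Finset.univ (W p)) = 3) :
    ∃ K, M.IsEvenSet K ∧ 2 * ∑ i ∈ Kᶜ, c i ≤ ∑ i ∈ K, c i ∧ ∀ p, #(M.cut Kᶜ (W p)) = 1 := by
  classical
  have := Fintype.ofFinite π
  obtain ⟨N, hN⟩ : ∃ N : ℤ, 2 * ∑ i, |c i| < N := ⟨_, lt_add_one _⟩
  obtain ⟨K, hK, hle⟩ := hM.exists_isEvenSet_two_mul_sum_compl_le
    fun i => c i + N * #{p | Crosses (W p) (M i)}
  have hsum (F : Finset ι) : ∑ i ∈ F, (c i + N * #{p | Crosses (W p) (M i)}) =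
      ∑ i ∈ F, c i + N * ∑ p, (#(M.cut F (W p)) : ℤ) := by
    rw [Finset.sum_add_distrib, ← Finset.mul_sum]
    simp_rw [Finset.natCast_card_filter, Finset.sum_comm (s := F), cut, Finset.natCast_card_filter]
  have hmissed (p) : ∃ m : ℕ, (#(M.cut K (W p)) : ℤ) = 2 - 2 * m ∧
      (#(M.cut Kᶜ (W p)) : ℤ) = 1 + 2 * m := by
    obtain ⟨k, hk⟩ := hK (W p)
    have := (card_cut_add_card_cut_compl (K := K)).trans (hW p)
    exact ⟨1 - k, by lia, by lia⟩
  choose m hm hm' using hmissed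
  rw [hsum, hsum] at hle
  simp_rw [hm, hm', Finset.sum_sub_distrib, Finset.sum_add_distrib, ← Finset.mul_sum,
    ← Nat.cast_sum, Finset.sum_const, nsmul_eq_mul] at hle
  have hNpos : 0 < N := lt_of_le_of_lt (by positivity) hN
  have hzero : ∑ p, m p = 0 := by
    by_contra hne
    have hone : (1 : ℤ) ≤ (∑ p, m p : ℕ) := by exact_mod_cast Nat.one_le_iff_ne_zero.2 hne
    linarith [sum_sub_two_mul_sum_compl_le c K, le_mul_of_one_le_right hNpos.le hone]
  refine ⟨K, hK, ?_, fun p => ?_⟩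
  · rw [hzero] at hle
    push_cast at hle
    linarith
  · have hmp : m p = 0 := Finset.sum_eq_zero_iff.1 hzero p (Finset.mem_univ p)
    exact_mod_cast (by simpa [hmp] using hm' p : (#(M.cut Kᶜ (W p)) : ℤ) = 1)

end Bridgeless

/-! ### Splitting off pairs of edges -/

section Split

variable {π : Type*}

open Classical in
/-- The end in `M.split pair apex` of the edge `i` at its former end `x`: the new vertex of the pair
containing `i` if that pair has apex `x`, and `x` itself otherwise. -/
noncomputable def port (pair : π → Finset ι) (apex : π → V) (i : ι) (x : V) : V ⊕ π :=
  if h : ∃ p, i ∈ pair p ∧ apex p = x then .inr h.choose else .inl x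

/-- The multigraph obtained from `M` by detaching the edges of each `pair p` from their common end
`apex p`, attaching them to a new vertex `p` instead, and joining `p` to `apex p` by a new edge. -/
noncomputable def split (M : Multigraph V ι) (pair : π → Finset ι) (apex : π → V) :
    Multigraph (V ⊕ π) (ι ⊕ π) :=
  Sum.elim (fun i => (M i).map (port pair apex i)) fun p => s(.inr p, .inl (apex p))

variable {M : Multigraph V ι} {pair : π → Finset ι} {apex : π → V} {p : π} {i : ι} {x : V}

lemma elim_port : Sum.elim id apex (port pair apex i x) = x := by
  unfold port
  split_ifs with h
  exacts [h.choose_spec.2, rfl]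

lemma port_eq_inr (hdisj : Pairwise (Function.onFun Disjoint pair)) :
    port pair apex i x = .inr p ↔ i ∈ pair p ∧ apex p = x := by
  unfold port
  split_ifs with h
  · rw [Sum.inr.injEq]
    refine ⟨fun hp => hp ▸ h.choose_spec, fun hp => ?_⟩
    exact hdisj.eq (Finset.not_disjoint_iff.2 ⟨i, h.choose_spec.1, hp.1⟩)
  · simpa using not_exists.1 h p

lemma cut_split_preimage {F : Finset (ι ⊕ π)} {W : Set V} :
    (M.split pair apex).cut F (Sum.elim id apex ⁻¹' W) = (M.cut F.toLeft W).map .inl := by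
  ext (i | p)
  · have hproj : port pair apex i ⁻¹' (Sum.elim id apex ⁻¹' W) = W := by
      ext
      simp [elim_port]
    simp [split, crosses_map, hproj]
  · simp [split]

lemma preimage_inl_preimage_elim {W : Set (V ⊕ π)}
    (hW : ∀ p, ¬Crosses W (M.split pair apex (.inr p))) :
    Sum.elim id apex ⁻¹' (Sum.inl ⁻¹' W) = W := by
  ext (x | p)
  · simp
  · simpa [split, iff_comm] using hW p

lemma IsEvenSet.toLeft {K : Finset (ι ⊕ π)} (hK : (M.split pair apex).IsEvenSet K) :
    M.IsEvenSet K.toLeft := by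
  intro W
  have heven := hK (Sum.elim id apex ⁻¹' W)
  rwa [cut_split_preimage, Finset.card_map] at heven

lemma crosses_inr_split_inl (hdisj : Pairwise (Function.onFun Disjoint pair))
    (hpair : ∀ p, ∀ i ∈ pair p, Crosses {apex p} (M i)) :
    Crosses {.inr p} (M.split pair apex (.inl i)) ↔ i ∈ pair p := by
  have hpre : port pair apex i ⁻¹' {.inr p} = {x | i ∈ pair p ∧ apex p = x} := by
    ext
    simp [port_eq_inr hdisj]
  rw [split, Sum.elim_inl, crosses_map, hpre]
  by_cases hi : i ∈ pair p
  · simpa [hi, eq_comm] using hpair p i hi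
  · simp [hi, Crosses]

lemma cut_split_inr [Fintype ι] [Fintype π] (hdisj : Pairwise (Function.onFun Disjoint pair))
    (hpair : ∀ p, ∀ i ∈ pair p, Crosses {apex p} (M i)) :
    (M.split pair apex).cut Finset.univ {.inr p} = (pair p).disjSum {p} := by
  ext (i | q)
  · simp [crosses_inr_split_inl hdisj hpair]
  · simp [split]

lemma IsBridgeless.split [Fintype ι] [Fintype π] (hM : M.IsBridgeless)
    (hdisj : Pairwise (Function.onFun Disjoint pair))
    (hpair : ∀ p, ∀ i ∈ pair p, Crosses {apex p} (M i))
    (hcut : ∀ p W, M.cut Finset.univ W ≠ pair p) : (M.split pair apex).IsBridgeless := by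
  classical
  intro W hcard
  by_cases hW : ∃ p, Crosses W (M.split pair apex (.inr p))
  · obtain ⟨p, hp⟩ := hW
    have hWp : (M.split pair apex).cut Finset.univ W = {.inr p} := by
      obtain ⟨j, hj⟩ := Finset.card_eq_one.1 hcard
      have hpj : .inr p = j := Finset.mem_singleton.1 (hj ▸ mem_cut.2 ⟨Finset.mem_univ _, hp⟩)
      rw [hj, hpj]
    have hmove : (M.split pair apex).cut Finset.univ (W ∆ {.inr p}) = (pair p).map .inl := by
      rw [cut_symmDiff_right, hWp, cut_split_inr hdisj hpair]
      ext (i | q) <;> simp [Finset.mem_symmDiff]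
    have hnot (q : π) : ¬Crosses (W ∆ {.inr p}) (M.split pair apex (.inr q)) := fun hq => by
      simpa [hmove] using mem_cut.2 ⟨Finset.mem_univ _, hq⟩
    rw [← preimage_inl_preimage_elim hnot, cut_split_preimage] at hmove
    refine hcut p (Sum.inl ⁻¹' (W ∆ {.inr p})) ?_
    simpa using Finset.map_injective _ hmove
  · rw [← preimage_inl_preimage_elim (not_exists.1 hW), cut_split_preimage,
      Finset.card_map] at hcard
    exact hM _ (by simpa using hcard)

theorem IsBridgeless.exists_isEvenSet_card_sdiff_le_one [Fintype ι] [DecidableEq ι] [Finite π]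
    (hM : M.IsBridgeless) (c : ι → ℤ) (hdisj : Pairwise (Function.onFun Disjoint pair))
    (hcard : ∀ p, #(pair p) = 2) (hpair : ∀ p, ∀ i ∈ pair p, Crosses {apex p} (M i))
    (hcut : ∀ p W, M.cut Finset.univ W ≠ pair p) :
    ∃ K, M.IsEvenSet K ∧ 2 * ∑ i ∈ Kᶜ, c i ≤ ∑ i ∈ K, c i ∧ ∀ p, #(pair p \ K) ≤ 1 := by
  classical
  have := Fintype.ofFinite π
  obtain ⟨K, hK, hle, hone⟩ := (hM.split hdisj hpair hcut).exists_isEvenSet_card_cut_compl_eq_one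
    (Sum.elim c 0) (W := fun p => {.inr p}) fun p => by simp [cut_split_inr hdisj hpair, hcard]
  have hsum (F : Finset (ι ⊕ π)) : ∑ j ∈ F, Sum.elim c 0 j = ∑ i ∈ F.toLeft, c i := by
    rw [← F.toLeft_disjSum_toRight, Finset.sum_disjSum]
    simp
  refine ⟨K.toLeft, hK.toLeft, ?_, fun p => ?_⟩
  · rw [hsum, hsum] at hle
    convert hle using 3
    ext
    simp
  · rw [← hone p, ← Finset.card_map .inl]
    refine Finset.card_le_card fun j hj => ?_
    obtain ⟨i, hi, rfl⟩ := Finset.mem_map.1 hj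
    obtain ⟨hip, hiK⟩ := Finset.mem_sdiff.1 hi
    simpa [crosses_inr_split_inl hdisj hpair, hip] using hiK

end Split

/-! ### Eulerian walks -/

section Euler

variable {G : SimpleGraph V} {M : Multigraph V ι} {ℓ : ι → ℕ} {F : Finset ι} {W : Set V}
  {i : ι} {s t x y : V}

lemma reach_subset_reach_erase_union [DecidableEq ι] (hi : M i = s(x, y)) :
    M.reach F x ⊆ M.reach (F.erase i) x ∪ M.reach (F.erase i) y := by
  refine reach_subset (.inl mem_reach_self) fun j hj hcross => ?_
  by_cases hji : j = i
  · subst hji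
    have hx : x ∈ M.reach (F.erase j) x := mem_reach_self
    have hy : y ∈ M.reach (F.erase j) y := mem_reach_self
    simp [hi, hx, hy] at hcross
  · have hj' := Finset.mem_erase.2 ⟨hji, hj⟩
    exact hcross.of_union.elim (not_crosses_reach hj') (not_crosses_reach hj')

open Classical in
lemma reach_subset_reach_filter (hW : ∀ i ∈ F, ¬Crosses W (M i)) (hx : x ∈ W) :
    M.reach F x ⊆ M.reach {i ∈ F | ∀ y ∈ M i, y ∈ W} x := by
  refine (reach_subset (W := W ∩ M.reach {i ∈ F | ∀ y ∈ M i, y ∈ W} x)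
    ⟨hx, mem_reach_self⟩ fun i hi => ?_).trans Set.inter_subset_right
  have hiW := hW i hi
  have hfilter (h : ∀ y ∈ M i, y ∈ W) :
      ¬Crosses (M.reach {i ∈ F | ∀ y ∈ M i, y ∈ W} x) (M i) :=
    not_crosses_reach (Finset.mem_filter.2 ⟨hi, h⟩)
  induction hMi : M i with | _ a b =>
  simp only [hMi, crosses_mk, Sym2.mem_iff, forall_eq_or_imp, forall_eq, Set.mem_inter_iff]
    at hiW hfilter ⊢
  tauto

lemma IsJoin.exists_isEvenSet_isJoin_disjoint (hF : M.IsJoin F x y) (s : V) :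
    ∃ K ⊆ F, M.IsEvenSet K ∧ ∃ J ⊆ F, M.IsJoin J x y ∧ Disjoint K J ∧
      M.reach F s ∪ M.reach F x ⊆ M.reach K s ∪ M.reach J x := by
  classical
  by_cases hs : s ∈ M.reach F x
  · refine ⟨∅, F.empty_subset, isJoin_self.1 (isJoin_empty (x := x)), F, subset_rfl, hF,
      Finset.disjoint_empty_left F, Set.union_subset ?_ Set.subset_union_right⟩
    exact (reach_subset hs fun _ => not_crosses_reach).trans Set.subset_union_right
  · set W : Set V := (M.reach F x)ᶜ with hWdef
    have hW : ∀ i ∈ F, ¬Crosses W (M i) := fun i hi =>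
      crosses_compl.not.2 (not_crosses_reach hi)
    set K : Finset ι := {i ∈ F | ∀ y ∈ M i, y ∈ W}
    have hKF : K ⊆ F := Finset.filter_subset _ _
    have hKeven : M.IsEvenSet K := hF.isEvenSet_filter hW (by simp [hWdef, mem_reach_self])
    refine ⟨K, hKF, hKeven, F \ K, Finset.sdiff_subset, hF.sdiff (hKeven.isJoin y) hKF,
      Finset.disjoint_sdiff, Set.union_subset_union (reach_subset_reach_filter hW hs)
      ((reach_subset_reach_filter (fun _ => not_crosses_reach) mem_reach_self).trans
        (reach_mono fun i hi => ?_))⟩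
    obtain ⟨hiF, hi⟩ := Finset.mem_filter.1 hi
    refine Finset.mem_sdiff.2 ⟨hiF, fun hiK => ?_⟩
    have hend := (M i).out_fst_mem
    exact (Finset.mem_filter.1 hiK).2 _ hend (hi _ hend)

/-- Fleury's argument: leave `s` along an edge, which may be a bridge only after the rest of the
component of `s` has been traversed. -/
theorem IsJoin.exists_walk (hℓ : ∀ i x y, M i = s(x, y) → ∃ q : G.Walk x y, q.length ≤ ℓ i)
    (hF : M.IsJoin F s t) :
    ∃ w : G.Walk s t, w.length ≤ ∑ i ∈ F, ℓ i ∧ ∀ y ∈ M.reach F s, y ∈ w.support := by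
  classical
  induction F using Finset.strongInduction generalizing s t with | H F ih =>
  by_cases hstar : ∃ g ∈ F, Crosses {s} (M g)
  · obtain ⟨g, hg, hcross⟩ := hstar
    obtain ⟨v, -, hMg⟩ := crosses_singleton.1 hcross
    obtain ⟨q, hq⟩ := hℓ g s v hMg
    have hlt : F.erase g ⊂ F := Finset.erase_ssubset hg
    obtain ⟨K, hKF, hK, J, hJF, hJ, hdisj, hreach⟩ :=
      (hF.symm.erase hg hMg).symm.exists_isEvenSet_isJoin_disjoint s
    obtain ⟨q₁, hq₁, hcover₁⟩ := ih K (hKF.trans_ssubset hlt) (hK.isJoin s)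
    obtain ⟨q₂, hq₂, hcover₂⟩ := ih J (hJF.trans_ssubset hlt) hJ
    refine ⟨q₁.append (q.append q₂), ?_, fun y hy => ?_⟩
    · have hle : ∑ i ∈ K, ℓ i + ∑ i ∈ J, ℓ i ≤ ∑ i ∈ F.erase g, ℓ i := by
        rw [← Finset.sum_union hdisj]
        exact Finset.sum_le_sum_of_subset (Finset.union_subset hKF hJF)
      rw [Walk.length_append, Walk.length_append, ← Finset.add_sum_erase F ℓ hg]
      lia
    · simp only [Walk.mem_support_append_iff]
      exact (hreach (reach_subset_reach_erase_union hMg hy)).imp (hcover₁ y)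
        fun hy₂ => .inr (hcover₂ y hy₂)
  · push Not at hstar
    obtain rfl : t = s := by
      by_contra hts
      obtain ⟨g, hg, hcross⟩ := hF.exists_crosses (W := {s}) rfl hts
      exact hstar g hg hcross
    refine ⟨.nil, by simp, fun y hy => ?_⟩
    exact List.mem_singleton.2 (reach_subset (W := {t}) rfl hstar hy)

/-- Doubling the edges of `D` does not change parities but makes them available to the walk. -/
theorem IsJoin.exists_walk_add_two_mul [DecidableEq ι]
    (hℓ : ∀ i x y, M i = s(x, y) → ∃ q : G.Walk x y, q.length ≤ ℓ i) (hF : M.IsJoin F s t)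
    (D : Finset ι) :
    ∃ w : G.Walk s t, w.length ≤ ∑ i ∈ F, ℓ i + 2 * ∑ i ∈ D, ℓ i ∧
      ∀ y ∈ M.reach (F ∪ D) s, y ∈ w.support := by
  let M' : Multigraph V (ι ⊕ ι × Bool) := Sum.elim M fun i => M i.1
  let F' : Finset (ι ⊕ ι × Bool) := F.disjSum (D ×ˢ Finset.univ)
  have hcut (W : Set V) : M'.cut F' W = (M.cut F W).disjSum (M.cut D W ×ˢ Finset.univ) := by
    ext (i | ⟨i, b⟩) <;> simp [M', F']
  have hF' : M'.IsJoin F' s t := fun W => by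
    rw [hcut, Finset.card_disjSum, Finset.card_product, Finset.card_univ, Fintype.card_bool,
      Nat.even_add, hF W]
    simp
  obtain ⟨w, hw, hcover⟩ := hF'.exists_walk (G := G) (ℓ := Sum.elim ℓ fun i => ℓ i.1)
    (Sum.rec hℓ fun i => hℓ i.1)
  refine ⟨w, ?_, fun y hy => hcover y (reach_subset mem_reach_self (fun i hi => ?_) hy)⟩
  · rw [Finset.sum_disjSum, Finset.sum_product] at hw
    simpa [← Finset.mul_sum] using hw
  · obtain hi | hi := Finset.mem_union.1 hi
    · exact not_crosses_reach (M := M') (i := .inl i) (by simp [F', hi])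
    · exact not_crosses_reach (M := M') (i := .inr (i, true)) (by simp [F', hi])

end Euler

/-! ### Simple graphs with an extra edge -/

section Augment

/-- The simple graph `G` as a multigraph, with an additional edge `none` joining `s` and `t`: an
even edge set of it becomes an `{s, t}`-join of `G` by deleting or adding the edge `none`. -/
def augment (G : SimpleGraph V) (s t : V) : Multigraph V (Option G.edgeSet) :=
  fun o => o.elim s(s, t) Subtype.val

/-- The edge weights `-1` on `R`, `1` on the other edges of `G`, and `dist s t` on the additional
edge, which a walk replaces by a shortest path. -/
noncomputable def augmentWeight [DecidableEq V] (G : SimpleGraph V) (s t : V)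
    (R : Finset (Sym2 V)) : Option G.edgeSet → ℤ :=
  fun o => o.elim (G.dist s t) fun e => if e.1 ∈ R then -1 else 1

variable {G : SimpleGraph V} {s t x y : V} {W : Set V} {D : Set (Sym2 V)} {o : Option G.edgeSet}

lemma exists_notMem_crosses (hD : (G.deleteEdges D).Preconnected) (hx : x ∈ W) (hy : y ∉ W) :
    ∃ e : G.edgeSet, e.1 ∉ D ∧ Crosses W e.1 := by
  obtain ⟨p⟩ := hD x y
  obtain ⟨d, -, hfst, hsnd⟩ := p.exists_boundary_dart W hx hy
  obtain ⟨hadj, hdD⟩ := deleteEdges_adj.1 d.adj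
  exact ⟨⟨s(d.fst, d.snd), hadj⟩, hdD, by simp [hfst, hsnd]⟩

lemma exists_some_mem_cut [Fintype G.edgeSet] (hD : (G.deleteEdges D).Preconnected)
    (ho : o ∈ (augment G s t).cut Finset.univ W) :
    ∃ e : G.edgeSet, e.1 ∉ D ∧ some e ∈ (augment G s t).cut Finset.univ W := by
  obtain ⟨x, hx, y, hy, -⟩ := (mem_cut.1 ho).2.exists_eq_mk
  obtain ⟨e, heD, he⟩ := exists_notMem_crosses hD hx hy
  exact ⟨e, heD, mem_cut.2 ⟨Finset.mem_univ _, he⟩⟩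

lemma isBridgeless_augment [Fintype G.edgeSet] (hG : G.IsEdgeConnected 2) :
    (augment G s t).IsBridgeless := by
  intro W hcard
  obtain ⟨o, ho⟩ := Finset.card_eq_one.1 hcard
  obtain ⟨e, he, hecut⟩ := exists_some_mem_cut (isEdgeConnected_two.1 hG (augment G s t o))
    (ho ▸ Finset.mem_singleton_self o)
  rw [ho, Finset.mem_singleton] at hecut
  exact he (hecut ▸ rfl)

lemma exists_walk_augment (hG : G.Connected) (o : Option G.edgeSet)
    (hxy : augment G s t o = s(x, y)) :
    ∃ q : G.Walk x y, q.length ≤ o.elim (G.dist s t) fun _ => 1 := by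
  obtain _ | ⟨e, he⟩ := o
  · obtain ⟨q, hq⟩ := hG.exists_walk_length_eq_dist s t
    obtain ⟨rfl, rfl⟩ | ⟨rfl, rfl⟩ := Sym2.eq_iff.1 hxy
    exacts [⟨q, hq.le⟩, ⟨q.reverse, by simp [hq]⟩]
  · obtain rfl : e = s(x, y) := hxy
    exact ⟨(G.mem_edgeSet.1 he).toWalk, le_rfl⟩

lemma sum_augmentWeight [DecidableEq V] [Fintype G.edgeSet] {R : Finset (Sym2 V)}
    (hR : R ⊆ G.edgeFinset) :
    ∑ o, augmentWeight G s t R o = G.dist s t + #G.edgeFinset - 2 * #R := by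
  have hedges : ∑ e : G.edgeSet, (if e.1 ∈ R then -1 else 1 : ℤ) =
      ∑ e ∈ G.edgeFinset, if e ∈ R then -1 else 1 :=
    Finset.sum_subtype _ (fun _ => mem_edgeFinset) (fun e => if e ∈ R then (-1 : ℤ) else 1) |>.symm
  rw [Fintype.sum_option]
  simp only [augmentWeight, Option.elim_none, Option.elim_some]
  rw [hedges, Finset.sum_ite, Finset.filter_mem_eq_inter, Finset.inter_eq_right.2 hR,
    Finset.filter_notMem_eq_sdiff]
  have hcard := Finset.card_sdiff_add_card_eq_card hR
  simp only [Finset.sum_const, nsmul_eq_mul]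
  lia

theorem exists_walk_length_le_add_sum_compl [DecidableEq V] [Fintype G.edgeSet] (hG : G.Connected)
    {K : Finset (Option G.edgeSet)} (hK : (augment G s t).IsEvenSet K) {R : Finset (Sym2 V)}
    (hR : (G.deleteEdges {e | e ∈ R ∧ ∀ he : e ∈ G.edgeSet, some ⟨e, he⟩ ∉ K}).Preconnected) :
    ∃ w : G.Walk s t, (∀ u, u ∈ w.support) ∧
      w.length ≤ #G.edgeFinset + ∑ o ∈ Kᶜ, augmentWeight G s t R o := by
  classical
  let ℓ : Option G.edgeSet → ℕ := fun o => o.elim (G.dist s t) fun _ => 1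
  let D : Finset (Option G.edgeSet) := {o | o ∉ K ∧ o.elim False fun e => e.1 ∉ R}
  have hF : (augment G s t).IsJoin (K ∆ {none}) s t :=
    (hK.isJoin s).symmDiff (isJoin_singleton rfl)
  obtain ⟨w, hlength, hcover⟩ :=
    hF.exists_walk_add_two_mul (ℓ := ℓ) (fun o _ _ => exists_walk_augment hG o) D
  refine ⟨w, fun u => hcover u ?_, ?_⟩
  · by_contra hu
    obtain ⟨e, he, hcross⟩ := exists_notMem_crosses hR mem_reach_self hu
    refine not_crosses_reach (M := augment G s t) (i := some e) ?_ hcross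
    have heK : e.1 ∈ R → some e ∈ K := by simpa using he
    simp only [D, Finset.mem_union, Finset.mem_symmDiff, Finset.mem_singleton, Finset.mem_filter,
      Finset.mem_univ, reduceCtorEq, Option.elim_some]
    tauto
  · have hpoint (o : Option G.edgeSet) :
        (if o ∈ K ∆ {none} then (ℓ o : ℤ) else 0) + 2 * (if o ∈ D then (ℓ o : ℤ) else 0) =
          o.elim 0 (fun _ => 1) + if o ∈ Kᶜ then augmentWeight G s t R o else 0 := by
      cases o <;> simp only [ℓ, D, augmentWeight, Finset.mem_symmDiff, Finset.mem_singleton,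
        Finset.mem_filter, Finset.mem_univ, Finset.mem_compl, Option.elim_none, Option.elim_some,
        reduceCtorEq] <;> split_ifs <;> grind
    have hsum := Fintype.sum_congr _ _ hpoint
    simp only [Finset.sum_add_distrib, ← Finset.mul_sum, Finset.sum_ite_mem, Finset.univ_inter,
      Fintype.sum_option, Option.elim_none, Option.elim_some, Finset.sum_const, Finset.card_univ,
      nsmul_eq_mul, mul_one, zero_add, ← edgeFinset_card] at hsum
    zify at hlength
    lia

/-- The edges of the simple graph `G` in `p`, as edges of `augment G s t`. -/
def liftEdges (G : SimpleGraph V) [DecidablePred (· ∈ G.edgeSet)] (p : Finset (Sym2 V)) :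
    Finset (Option G.edgeSet) :=
  (p.subtype (· ∈ G.edgeSet)).map Function.Embedding.some

section LiftEdges

variable [DecidablePred (· ∈ G.edgeSet)] {p q : Finset (Sym2 V)}

lemma mem_liftEdges : o ∈ liftEdges G p ↔ ∃ e : G.edgeSet, e.1 ∈ p ∧ some e = o := by
  simp only [liftEdges, Finset.mem_map, Finset.mem_subtype, Function.Embedding.some_apply]

lemma card_liftEdges (hp : ↑p ⊆ G.edgeSet) : #(liftEdges G p) = #p := by
  rw [liftEdges, Finset.card_map, Finset.card_subtype, Finset.filter_true_of_mem fun _ he => hp he]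

lemma disjoint_liftEdges (h : Disjoint p q) : Disjoint (liftEdges G p) (liftEdges G q) := by
  simp only [Finset.disjoint_left, mem_liftEdges]
  rintro _ ⟨e, hep, rfl⟩ ⟨e', heq, he'⟩
  exact Finset.disjoint_left.1 h hep (Option.some_injective _ he' ▸ heq)

lemma cut_augment_ne_liftEdges [Fintype G.edgeSet] (hp : p.Nonempty) (hpG : ↑p ⊆ G.edgeSet)
    (hconn : (G.deleteEdges (p : Set (Sym2 V))).Preconnected) :
    (augment G s t).cut Finset.univ W ≠ liftEdges G p := by
  intro hcut
  obtain ⟨e, he⟩ := hp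
  have hemem : some ⟨e, hpG he⟩ ∈ (augment G s t).cut Finset.univ W :=
    hcut ▸ mem_liftEdges.2 ⟨_, he, rfl⟩
  obtain ⟨e', he'p, he'⟩ := exists_some_mem_cut hconn hemem
  obtain ⟨e'', he''p, heq⟩ := mem_liftEdges.1 (hcut ▸ he')
  exact he'p (Option.some_injective _ heq ▸ he''p)

theorem exists_isEvenSet_augment [DecidableEq V] [Fintype G.edgeSet] (hG : G.IsEdgeConnected 2)
    {P : Finset (Finset (Sym2 V))} (hPG : ∀ p ∈ P, ↑p ⊆ G.edgeSet) (hPcard : ∀ p ∈ P, #p = 2)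
    (hPdisj : ∀ p ∈ P, ∀ q ∈ P, p ≠ q → Disjoint p q) (hPapex : ∀ p ∈ P, ∃ v, ∀ e ∈ p, v ∈ e)
    (hPconn : ∀ p ∈ P, (G.deleteEdges (p : Set (Sym2 V))).Preconnected)
    (c : Option G.edgeSet → ℤ) :
    ∃ K, (augment G s t).IsEvenSet K ∧ 2 * ∑ o ∈ Kᶜ, c o ≤ ∑ o ∈ K, c o ∧
      ∀ p ∈ P, #(liftEdges G p \ K) ≤ 1 := by
  choose apex hapex using fun p : P => hPapex p p.2
  obtain ⟨K, hK, hweight, hpair⟩ :=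
    (isBridgeless_augment hG (s := s) (t := t)).exists_isEvenSet_card_sdiff_le_one
      (pair := fun p : P => liftEdges G p.1) (apex := apex) c
      (fun p q hpq => disjoint_liftEdges (hPdisj p p.2 q q.2 (Subtype.coe_ne_coe.2 hpq)))
      (fun p => (card_liftEdges (hPG p p.2)).trans (hPcard p p.2))
      (fun p o ho => by
        obtain ⟨e, he, rfl⟩ := mem_liftEdges.1 ho
        exact crosses_singleton_of_mem (hapex p e he) (G.not_isDiag_of_mem_edgeSet e.2))
      (fun p _ => cut_augment_ne_liftEdges (Finset.card_pos.1 (by simp [hPcard p p.2]))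
        (hPG p p.2) (hPconn p p.2))
  exact ⟨K, hK, hweight, fun p hp => hpair ⟨p, hp⟩⟩

end LiftEdges

end Augment

end Multigraph

section VertexDeletion

variable {V : Type*} {G : SimpleGraph V} {v : V}

lemma preconnected_deleteEdges_of_induce {D : Set (Sym2 V)} {z : V}
    (hconn : (G.induce {u | u ≠ v}).Preconnected) (hD : ∀ e ∈ D, v ∈ e) (hz : G.Adj v z)
    (hzD : s(v, z) ∉ D) : (G.deleteEdges D).Preconnected := by
  let φ : G.induce {u | u ≠ v} →g G.deleteEdges D :=
    ⟨Subtype.val, fun {x y} hxy => deleteEdges_adj.2 ⟨hxy, fun he => by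
      obtain h | h := Sym2.mem_iff.1 (hD _ he)
      exacts [x.2 h.symm, y.2 h.symm]⟩⟩
  have hvz : (G.deleteEdges D).Adj v z := deleteEdges_adj.2 ⟨hz, hzD⟩
  have hreach (x : V) : (G.deleteEdges D).Reachable z x := by
    obtain rfl | hx := eq_or_ne x v
    · exact hvz.symm.reachable
    · exact (hconn ⟨z, hz.ne'⟩ ⟨x, hx⟩).map φ
  exact fun x y => (hreach x).symm.trans (hreach y)

lemma preconnected_deleteEdges_of_card_lt_degree [Fintype (G.neighborSet v)] {p : Finset (Sym2 V)}
    (hconn : (G.induce {u | u ≠ v}).Preconnected) (hp : ∀ e ∈ p, v ∈ e)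
    (hdeg : #p < G.degree v) : (G.deleteEdges (p : Set (Sym2 V))).Preconnected := by
  classical
  rw [← card_incidenceFinset_eq_degree] at hdeg
  obtain ⟨e, he, hep⟩ := Finset.exists_mem_notMem_of_card_lt_card hdeg
  obtain ⟨heG, hve⟩ := (G.mem_incidenceFinset v e).1 he
  obtain ⟨z, rfl⟩ := Sym2.mem_iff_exists.1 hve
  exact preconnected_deleteEdges_of_induce hconn hp heG hep

lemma exists_adj_ne_of_induce [Fintype V] {x y : V} (hcard : 3 ≤ Fintype.card V)
    (hconn : (G.induce {u | u ≠ x}).Preconnected) (hyx : y ≠ x) : ∃ z, G.Adj y z ∧ z ≠ x := by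
  classical
  obtain ⟨u, -, hu⟩ := Finset.exists_mem_notMem_of_card_lt_card
    (s := {x, y}) (t := Finset.univ) (Finset.card_le_two.trans_lt hcard)
  obtain ⟨hux, huy⟩ : u ≠ x ∧ u ≠ y := by simpa using hu
  have : Nontrivial {u | u ≠ x} := ⟨⟨y, hyx⟩, ⟨u, hux⟩, by simpa using huy.symm⟩
  obtain ⟨z, hz⟩ := hconn.exists_adj_of_nontrivial ⟨y, hyx⟩
  exact ⟨z, hz, z.2⟩

lemma isEdgeConnected_two_of_induce [Fintype V] (hcard : 3 ≤ Fintype.card V)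
    (h : ∀ v, (G.induce {u | u ≠ v}).Preconnected) : G.IsEdgeConnected 2 := by
  have : Nontrivial V := Fintype.one_lt_card_iff_nontrivial.1 (by lia)
  rw [isEdgeConnected_two]
  intro e
  induction e with | _ x y
  obtain ⟨z, hyz, hz⟩ : ∃ z, G.Adj y z ∧ s(y, z) ≠ s(x, y) := by
    obtain rfl | hyx := eq_or_ne y x
    · obtain ⟨x, hxy⟩ := exists_ne y
      obtain ⟨z, hyz, -⟩ := exists_adj_ne_of_induce hcard (h x) hxy.symm
      exact ⟨z, hyz, by simpa using hyz.ne'⟩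
    · obtain ⟨z, hyz, hzx⟩ := exists_adj_ne_of_induce hcard (h x) hyx
      exact ⟨z, hyz, by simp [hyx, hzx]⟩
  exact preconnected_deleteEdges_of_induce (h y) (by simp) hyz (by simpa using hz)

end VertexDeletion

theorem spanning_path_walk_of_removable_pairing_general {V : Type*} [DecidableEq V]
    (G : SimpleGraph V) [Fintype G.edgeSet] (hG : G.IsEdgeConnected 2)
    (R : Finset (Sym2 V)) (P : Finset (Finset (Sym2 V))) (hR : R ⊆ G.edgeFinset)
    (hPpair : ∀ p ∈ P, #p = 2) (hPsub : ∀ p ∈ P, p ⊆ R)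
    (hPdisj : ∀ p ∈ P, ∀ q ∈ P, p ≠ q → Disjoint p q)
    (hPapex : ∀ p ∈ P, ∃ v : V, ∀ e ∈ p, v ∈ e)
    (hPconn : ∀ p ∈ P, (G.deleteEdges (p : Set (Sym2 V))).Connected)
    (hPdel : ∀ D ⊆ R, (∀ p ∈ P, #(D ∩ p) ≤ 1) → (G.deleteEdges (D : Set (Sym2 V))).Connected)
    (s t : V) :
    ∃ w : G.Walk s t, (∀ u : V, u ∈ w.support) ∧
      (w.length : ℝ) ≤ 4 / 3 * #G.edgeFinset - 2 / 3 * #R + (G.dist s t : ℝ) / 3 := by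
  classical
  have hPG (p) (hp : p ∈ P) : ↑p ⊆ G.edgeSet := by
    simpa only [coe_edgeFinset] using Finset.coe_subset.2 ((hPsub p hp).trans hR)
  obtain ⟨K, hK, hweight, hpair⟩ := Multigraph.exists_isEvenSet_augment (s := s) (t := t) hG hPG
    hPpair hPdisj hPapex (fun p hp => (hPconn p hp).preconnected)
    (Multigraph.augmentWeight G s t R)
  have hGconn : G.Connected := by simpa using hPdel ∅ (by simp) (by simp)
  have hconn : (G.deleteEdges {e | e ∈ R ∧ ∀ he : e ∈ G.edgeSet, some ⟨e, he⟩ ∉ K}).Connected := by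
    have hD := hPdel {e ∈ R | ∀ he : e ∈ G.edgeSet, some ⟨e, he⟩ ∉ K} (Finset.filter_subset _ _)
      (fun p hp => (Finset.card_le_card fun e he => ?_).trans <|
        (Finset.card_image_le (f := Multigraph.augment G s t)).trans (hpair p hp))
    · simpa using hD
    · obtain ⟨he, hep⟩ := Finset.mem_inter.1 he
      exact Finset.mem_image.2 ⟨some ⟨e, hPG p hp hep⟩, Finset.mem_sdiff.2
        ⟨Multigraph.mem_liftEdges.2 ⟨_, hep, rfl⟩, (Finset.mem_filter.1 he).2 _⟩, rfl⟩
  obtain ⟨w, hcover, hlength⟩ :=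
    Multigraph.exists_walk_length_le_add_sum_compl hGconn hK hconn.preconnected
  have htotal := Multigraph.sum_augmentWeight (s := s) (t := t) hR
  rw [← Finset.sum_add_sum_compl K] at htotal
  have hbound : 3 * (w.length : ℤ) ≤ 4 * #G.edgeFinset - 2 * #R + G.dist s t := by linarith
  refine ⟨w, hcover, ?_⟩
  have hboundReal : 3 * (w.length : ℝ) ≤ 4 * #G.edgeFinset - 2 * #R + G.dist s t := by
    exact_mod_cast hbound
  linarith

/-- A 2-vertex-connected simple graph on at least 3 vertices with a
removable pairing `(R, P)` has, for any vertices `s, t`, a spanning walk from `s`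
to `t` of length at most `(4/3)·|E| − (2/3)·|R| + dist_G(s,t)/3`. -/
theorem spanning_path_walk_of_removable_pairing
    {V : Type*} [Fintype V] [DecidableEq V]
    (G : SimpleGraph V) [DecidableRel G.Adj]
    (hcard : 3 ≤ Fintype.card V)
    (hconn : G.Connected)
    (h2vc : ∀ v : V, (G.induce {u : V | u ≠ v}).Connected)
    (R : Finset (Sym2 V)) (P : Finset (Finset (Sym2 V)))
    (hR : R ⊆ G.edgeFinset)
    (hPpair : ∀ p ∈ P, p.card = 2)
    (hPsub : ∀ p ∈ P, p ⊆ R)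
    (hPdisj : ∀ p ∈ P, ∀ q ∈ P, p ≠ q → Disjoint p q)
    (hPdeg : ∀ p ∈ P, ∃ v : V, (∀ e ∈ p, v ∈ e) ∧ 3 ≤ G.degree v)
    (hPdel : ∀ D : Finset (Sym2 V), D ⊆ R → (∀ p ∈ P, (D ∩ p).card ≤ 1) →
      (G.deleteEdges (D : Set (Sym2 V))).Connected)
    (s t : V) :
    ∃ w : G.Walk s t, (∀ u : V, u ∈ w.support) ∧
      (w.length : ℝ) ≤ 4 / 3 * G.edgeFinset.card - 2 / 3 * R.card
        + (G.dist s t : ℝ) / 3 := by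
  have := hconn.nonempty
  have hedge := isEdgeConnected_two_of_induce hcard fun v => (h2vc v).preconnected
  have hPconn (p) (hp : p ∈ P) : (G.deleteEdges (p : Set (Sym2 V))).Connected := by
    obtain ⟨v, hv, hdeg⟩ := hPdeg p hp
    exact ⟨preconnected_deleteEdges_of_card_lt_degree (h2vc v).preconnected hv
      ((hPpair p hp).trans_lt hdeg)⟩
  have hPapex (p) (hp : p ∈ P) : ∃ v : V, ∀ e ∈ p, v ∈ e := (hPdeg p hp).imp fun _ => And.left
  exact spanning_path_walk_of_removable_pairing_general G hedge R P hR hPpair hPsub hPdisj hPapex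
    hPconn hPdel s t
end
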